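/- arXiv:2203.10915 — 4 statements merged into one kernel-verified Lean document; each statement's English description precedes it below -/
import Mathlib

section
/- Let u : (0, ∞) → ℝ be a differentiable convex function which is not identically zero, and assume that lim_{x→+∞} u(x) = 0, lim_{x→+∞} u′(x) = 0, and lim_{x→0⁺} x·u(x) = 0. Then for any ξ ∈ ℝ such that the two-sided improper Riemann integral ∫₀^∞ cos(xξ) u(x) dx converges (i.e. the limit of ∫_a^b cos(xξ)u(x)dx as a→0⁺ and b→∞ exists), this integral is strictly positive. -/
open Filter Set MeasureTheory

/-!
Since `cos` is even, a frequency `ξ ≠ 0` can be rescaled to `2π`. On each period `[n, n + 1)` let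
`ℓ` be the secant line of `u` through the two zeros `n + 1/4` and `n + 3/4` of `cos (2πx)`. By
convexity `u` lies below `ℓ` between these zeros and above it outside them, which is exactly where
the cosine is negative and positive, so `cos (2πx) (u x - ℓ x) ≥ 0`. An affine function integrates
to zero against the cosine over a full period. Hence the subtraction of `ℓ` does not change the
improper integral, and its value `L` is the integral of a nonnegative function.

If `L` were not positive, `u` would be equal to `ℓ`. Differentiability at the integers then makes
the affine pieces fit together to one affine function, and this function is zero because it tends
to zero at infinity.
-/

open scoped Real Topology

section SecantLine

variable {𝕜 : Type*} [Field 𝕜]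

/-- The secant line of `f` over `p` and `q`, as a function on the whole field. For `p = q` it is
the constant `f p`, since `slope f p p = 0`. -/
def secantLine (f : 𝕜 → 𝕜) (p q x : 𝕜) : 𝕜 :=
  f p + slope f p q * (x - p)

@[simp]
lemma secantLine_left (f : 𝕜 → 𝕜) (p q : 𝕜) : secantLine f p q p = f p := by
  simp [secantLine]

@[simp]
lemma secantLine_right (f : 𝕜 → 𝕜) (p q : 𝕜) : secantLine f p q q = f q := by
  rw [secantLine, mul_comm, ← smul_eq_mul, sub_smul_slope, vsub_eq_sub, add_sub_cancel]

lemma secantLine_eq_add_slope_mul (f : 𝕜 → 𝕜) (p q c x : 𝕜) :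
    secantLine f p q x = secantLine f p q c + slope f p q * (x - c) := by
  simp only [secantLine]
  ring

lemma sub_secantLine (f : 𝕜 → 𝕜) (p q x : 𝕜) :
    f x - secantLine f p q x = (slope f p x - slope f p q) * (x - p) := by
  have hx : f x = secantLine f p x x := (secantLine_right f p x).symm
  rw [hx, secantLine, secantLine]
  ring

variable [LinearOrder 𝕜] [IsStrictOrderedRing 𝕜] {s : Set 𝕜} {f : 𝕜 → 𝕜} {p q x : 𝕜}

lemma le_secantLine_of_mem_Icc (hf : ConvexOn 𝕜 s f) (hp : p ∈ s) (hq : q ∈ s)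
    (hx : x ∈ Icc p q) : f x ≤ secantLine f p q x := by
  obtain rfl | hpx := hx.1.eq_or_lt
  · simp
  have hxs : x ∈ s := hf.1.ordConnected.out hp hq hx
  have hslope : slope f p x ≤ slope f p q :=
    hf.slope_mono hp ⟨hxs, hpx.ne'⟩ ⟨hq, (hpx.trans_le hx.2).ne'⟩ hx.2
  rw [← sub_nonpos, sub_secantLine]
  exact mul_nonpos_of_nonpos_of_nonneg (sub_nonpos.2 hslope) (sub_nonneg.2 hx.1)

lemma secantLine_le_of_le_left (hf : ConvexOn 𝕜 s f) (hp : p ∈ s) (hq : q ∈ s) (hpq : p < q)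
    (hx : x ∈ s) (hxp : x ≤ p) : secantLine f p q x ≤ f x := by
  obtain rfl | hxp := hxp.eq_or_lt
  · simp
  have hslope : slope f p x ≤ slope f p q :=
    hf.slope_mono hp ⟨hx, hxp.ne⟩ ⟨hq, hpq.ne'⟩ (hxp.trans hpq).le
  rw [← sub_nonneg, sub_secantLine]
  exact mul_nonneg_of_nonpos_of_nonpos (sub_nonpos.2 hslope) (sub_nonpos.2 hxp.le)

lemma secantLine_le_of_right_le (hf : ConvexOn 𝕜 s f) (hp : p ∈ s) (hq : q ∈ s) (hpq : p < q)
    (hx : x ∈ s) (hqx : q ≤ x) : secantLine f p q x ≤ f x := by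
  have hpx : p < x := hpq.trans_le hqx
  have hslope : slope f p q ≤ slope f p x :=
    hf.slope_mono hp ⟨hq, hpq.ne'⟩ ⟨hx, hpx.ne'⟩ hqx
  rw [← sub_nonneg, sub_secantLine]
  exact mul_nonneg (sub_nonneg.2 hslope) (sub_nonneg.2 hpx.le)

end SecantLine

lemma hasDerivAt_secantLine {𝕜 : Type*} [NontriviallyNormedField 𝕜] (f : 𝕜 → 𝕜) (p q x : 𝕜) :
    HasDerivAt (secantLine f p q) (slope f p q) x := by
  unfold secantLine
  simpa using (((hasDerivAt_id x).sub_const p).const_mul (slope f p q)).const_add (f p)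

lemma continuous_secantLine {𝕜 : Type*} [NontriviallyNormedField 𝕜] (f : 𝕜 → 𝕜) (p q : 𝕜) :
    Continuous (secantLine f p q) :=
  continuous_iff_continuousAt.2 fun x ↦ (hasDerivAt_secantLine f p q x).continuousAt

lemma secantLine_eq_zero_of_tendsto {f : ℝ → ℝ} {p q : ℝ}
    (h : Tendsto (secantLine f p q) atTop (𝓝 0)) : secantLine f p q = 0 := by
  have hslope : slope f p q = 0 := by
    have hdiff : Tendsto (fun x ↦ secantLine f p q (x + 1) - secantLine f p q x) atTop (𝓝 0) := by
      simpa using (h.comp (tendsto_atTop_add_const_right atTop 1 tendsto_id)).sub h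
    have hconst : (fun x ↦ secantLine f p q (x + 1) - secantLine f p q x) =
        fun _ ↦ slope f p q := by
      ext x
      rw [secantLine_eq_add_slope_mul f p q x (x + 1)]
      ring
    rw [hconst] at hdiff
    exact tendsto_nhds_unique tendsto_const_nhds hdiff
  have hconst : secantLine f p q = fun _ ↦ f p := by
    ext x
    simp [secantLine, hslope]
  rw [hconst] at h
  rw [hconst, tendsto_nhds_unique tendsto_const_nhds h]
  rfl

lemma nonneg_of_convexOn_of_tendsto_zero {f : ℝ → ℝ} {a x : ℝ} (hf : ConvexOn ℝ (Ioi a) f)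
    (hlim : Tendsto f atTop (𝓝 0)) (hx : a < x) : 0 ≤ f x := by
  by_contra! hneg
  obtain ⟨y, hfy, hxy⟩ :=
    ((hlim.eventually (lt_mem_nhds hneg)).and (eventually_gt_atTop x)).exists
  have hslope : 0 < slope f x y := by
    rw [slope_def_field]
    exact div_pos (sub_pos.2 hfy) (sub_pos.2 hxy)
  have htop : Tendsto (secantLine f x y) atTop atTop :=
    tendsto_atTop_add_const_left _ _
      ((tendsto_atTop_add_const_right _ (-x) tendsto_id).const_mul_atTop hslope)
  refine not_tendsto_nhds_of_tendsto_atTop (tendsto_atTop_mono' _ ?_ htop) 0 hlim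
  filter_upwards [eventually_ge_atTop y] with z hyz
  exact secantLine_le_of_right_le hf hx (hx.trans hxy) hxy (hx.trans (hxy.trans_le hyz)) hyz

lemma eq_and_deriv_eq_of_eventuallyEq_nhdsWithin {𝕜 F : Type*} [NontriviallyNormedField 𝕜]
    [NormedAddCommGroup F] [NormedSpace 𝕜 F] {f g : 𝕜 → F} {s : Set 𝕜} {c : 𝕜}
    (hs : UniqueDiffWithinAt 𝕜 s c) (hf : DifferentiableAt 𝕜 f c) (hg : DifferentiableAt 𝕜 g c)
    (hfg : f =ᶠ[𝓝[s] c] g) : f c = g c ∧ deriv f c = deriv g c := by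
  have : (𝓝[s] c).NeBot := mem_closure_iff_nhdsWithin_neBot.1 hs.mem_closure
  have hval : f c = g c :=
    tendsto_nhds_unique_of_eventuallyEq (hf.continuousAt.mono_left nhdsWithin_le_nhds)
      (hg.continuousAt.mono_left nhdsWithin_le_nhds) hfg
  refine ⟨hval, ?_⟩
  rw [← hf.derivWithin hs, ← hg.derivWithin hs, hfg.derivWithin_eq hval]

lemma secantLine_eq_of_eventuallyEq {f : ℝ → ℝ} {p q p' q' c : ℝ} (hf : DifferentiableAt ℝ f c)
    (hleft : f =ᶠ[𝓝[<] c] secantLine f p q) (hright : f =ᶠ[𝓝[>] c] secantLine f p' q') :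
    secantLine f p q = secantLine f p' q' := by
  obtain ⟨hval, hder⟩ := eq_and_deriv_eq_of_eventuallyEq_nhdsWithin (uniqueDiffWithinAt_Iio c) hf
    (hasDerivAt_secantLine f p q c).differentiableAt hleft
  obtain ⟨hval', hder'⟩ := eq_and_deriv_eq_of_eventuallyEq_nhdsWithin (uniqueDiffWithinAt_Ioi c) hf
    (hasDerivAt_secantLine f p' q' c).differentiableAt hright
  rw [(hasDerivAt_secantLine f p q c).deriv] at hder
  rw [(hasDerivAt_secantLine f p' q' c).deriv] at hder'
  ext x
  rw [secantLine_eq_add_slope_mul f p q c, secantLine_eq_add_slope_mul f p' q' c, ← hval, ← hval',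
    ← hder, ← hder']

lemma intervalIntegrable_of_continuousOn_Ioi {E : Type*} [NormedAddCommGroup E] {f : ℝ → E}
    {a b c : ℝ} (hf : ContinuousOn f (Ioi c)) (ha : c < a) (hb : c < b) :
    IntervalIntegrable f volume a b :=
  (hf.mono (ordConnected_Ioi.uIcc_subset ha hb)).intervalIntegrable

lemma pos_of_tendsto_integral {ι : Type*} {l : Filter ι} [l.NeBot] {α β : ι → ℝ} {g : ℝ → ℝ}
    {a b c L : ℝ} (hα : Tendsto α l (𝓝[>] c)) (hβ : Tendsto β l atTop)
    (hL : Tendsto (fun i ↦ ∫ x in α i..β i, g x) l (𝓝 L)) (hg : ∀ x, c < x → 0 ≤ g x)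
    (hint : ∀ a b, c < a → c < b → IntervalIntegrable g volume a b)
    (ha : c < a) (hab : a < b) (hcont : ContinuousOn g (Icc a b)) (hga : 0 < g a) : 0 < L := by
  have hpos : 0 < ∫ x in a..b, g x :=
    intervalIntegral.integral_pos hab hcont (fun x hx ↦ hg x (ha.trans hx.1))
      ⟨a, left_mem_Icc.2 hab.le, hga⟩
  refine hpos.trans_le (ge_of_tendsto hL ?_)
  filter_upwards [hα.eventually (Ioo_mem_nhdsGT ha), hβ.eventually_ge_atTop b] with i hαi hβi
  refine intervalIntegral.integral_mono_interval hαi.2.le hab.le hβi ?_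
    (hint _ _ hαi.1 ((ha.trans hab).trans_le hβi))
  filter_upwards [ae_restrict_mem measurableSet_Ioc] with x hx
  exact hg x (hαi.1.trans hx.1)

lemma tendsto_integral_comp_const_mul {E : Type*} [NormedAddCommGroup E] [NormedSpace ℝ E]
    {f : ℝ → E} {I : E} {T : ℝ} (hT : 0 < T)
    (hI : Tendsto (fun p : ℝ × ℝ ↦ ∫ x in p.1..p.2, f x) (𝓝[>] 0 ×ˢ atTop) (𝓝 I)) :
    Tendsto (fun p : ℝ × ℝ ↦ ∫ x in p.1..p.2, f (T * x)) (𝓝[>] 0 ×ˢ atTop) (𝓝 (T⁻¹ • I)) := by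
  have hzero : Tendsto (T * ·) (𝓝[>] 0) (𝓝[>] 0) :=
    fun _ hs ↦ eventually_nhdsGT_zero_mul_left hT hs
  simpa [Function.comp_def, intervalIntegral.integral_comp_mul_left _ hT.ne'] using
    (hI.comp (hzero.prodMap (tendsto_id.const_mul_atTop hT))).const_smul T⁻¹

section CosInterpolant

/-- The secant line of `u` through the two zeros of `x ↦ cos (2πx)` in the period `[n, n + 1]`. -/
noncomputable def periodSecant (u : ℝ → ℝ) (n : ℕ) : ℝ → ℝ :=
  secantLine u (n + 1 / 4) (n + 3 / 4)

/-- The piecewise affine function which is `periodSecant u n` on each period `[n, n + 1)`. It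
interpolates `u` at the positive zeros of `x ↦ cos (2πx)`, and it may jump at the integers. For
`x < 0` the value is `periodSecant u 0 x`, since `⌊x⌋₊ = 0` there. -/
noncomputable def cosInterpolant (u : ℝ → ℝ) (x : ℝ) : ℝ :=
  periodSecant u ⌊x⌋₊ x

variable {u : ℝ → ℝ}

lemma continuous_periodSecant (u : ℝ → ℝ) (n : ℕ) : Continuous (periodSecant u n) :=
  continuous_secantLine u _ _

lemma eqOn_cosInterpolant_periodSecant (u : ℝ → ℝ) (n : ℕ) :
    EqOn (cosInterpolant u) (periodSecant u n) (Ico n (n + 1)) := fun x hx ↦ by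
  rw [cosInterpolant, Nat.floor_eq_on_Ico n x hx]

lemma cos_two_pi_mul_pos {n : ℕ} {x : ℝ} (hnx : n - 1 / 4 < x) (hxn : x < n + 1 / 4) :
    0 < Real.cos (2 * π * x) := by
  rw [← Real.cos_sub_nat_mul_two_pi _ n]
  exact Real.cos_pos_of_mem_Ioo ⟨by nlinarith [Real.pi_pos], by nlinarith [Real.pi_pos]⟩

lemma cos_two_pi_mul_neg {n : ℕ} {x : ℝ} (hnx : n + 1 / 4 < x) (hxn : x < n + 3 / 4) :
    Real.cos (2 * π * x) < 0 := by
  rw [← Real.cos_sub_nat_mul_two_pi _ n]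
  exact Real.cos_neg_of_pi_div_two_lt_of_lt (by nlinarith [Real.pi_pos])
    (by nlinarith [Real.pi_pos])

lemma cos_mul_sub_cosInterpolant_pos (hu : ConvexOn ℝ (Ioi 0) u) {x : ℝ} (hx : 0 < x)
    (hne : u x ≠ cosInterpolant u x) :
    0 < Real.cos (2 * π * x) * (u x - cosInterpolant u x) := by
  obtain ⟨n, hn⟩ : ∃ n : ℕ, ⌊x⌋₊ = n := ⟨_, rfl⟩
  have hnx : (n : ℝ) ≤ x := hn ▸ Nat.floor_le hx.le
  have hxn : x < n + 1 := hn ▸ Nat.lt_floor_add_one x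
  have hp : (n + 1 / 4 : ℝ) ∈ Ioi (0 : ℝ) := by rw [mem_Ioi]; positivity
  have hq : (n + 3 / 4 : ℝ) ∈ Ioi (0 : ℝ) := by rw [mem_Ioi]; positivity
  have hpq : (n + 1 / 4 : ℝ) < n + 3 / 4 := by linarith
  rw [cosInterpolant, hn, periodSecant] at hne ⊢
  obtain hxp | rfl | hpx := lt_trichotomy x (n + 1 / 4)
  · refine mul_pos (cos_two_pi_mul_pos (n := n) (by linarith) hxp) (sub_pos.2 ?_)
    exact (secantLine_le_of_le_left hu hp hq hpq hx hxp.le).lt_of_ne' hne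
  · simp at hne
  obtain hxq | rfl | hqx := lt_trichotomy x (n + 3 / 4)
  · refine mul_pos_of_neg_of_neg (cos_two_pi_mul_neg hpx hxq) (sub_neg.2 ?_)
    exact (le_secantLine_of_mem_Icc hu hp hq ⟨hpx.le, hxq.le⟩).lt_of_ne hne
  · simp at hne
  · refine mul_pos (cos_two_pi_mul_pos (n := n + 1) ?_ ?_) (sub_pos.2 ?_)
    · push_cast; linarith
    · push_cast; linarith
    · exact (secantLine_le_of_right_le hu hp hq hpq hx hqx.le).lt_of_ne' hne

lemma cos_mul_sub_cosInterpolant_nonneg (hu : ConvexOn ℝ (Ioi 0) u) {x : ℝ} (hx : 0 < x) :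
    0 ≤ Real.cos (2 * π * x) * (u x - cosInterpolant u x) := by
  by_cases h : u x = cosInterpolant u x
  · simp [h]
  · exact (cos_mul_sub_cosInterpolant_pos hu hx h).le

lemma integral_cos_mul_secantLine_period (f : ℝ → ℝ) (p q : ℝ) (n : ℕ) :
    ∫ x in (n : ℝ)..n + 1, Real.cos (2 * π * x) * secantLine f p q x = 0 := by
  have hderiv (x : ℝ) : HasDerivAt
      (fun x ↦ secantLine f p q x * Real.sin (2 * π * x) / (2 * π) +
        slope f p q * Real.cos (2 * π * x) / (2 * π) ^ 2)
      (Real.cos (2 * π * x) * secantLine f p q x) x := by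
    have hlin : HasDerivAt (fun x ↦ 2 * π * x) (2 * π) x := by
      simpa using (hasDerivAt_id x).const_mul (2 * π)
    refine ((((hasDerivAt_secantLine f p q x).mul hlin.sin).div_const (2 * π)).add
      ((hlin.cos.const_mul (slope f p q)).div_const ((2 * π) ^ 2))).congr_deriv ?_
    field_simp
    ring
  have hcont := continuous_secantLine f p q
  rw [intervalIntegral.integral_eq_sub_of_hasDerivAt (fun x _ ↦ hderiv x)
    (Continuous.intervalIntegrable (by fun_prop) _ _)]
  have hsin (k : ℕ) : Real.sin (2 * π * k) = 0 := by
    simpa [mul_comm] using Real.sin_add_nat_mul_two_pi 0 k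
  have hcos (k : ℕ) : Real.cos (2 * π * k) = 1 := by
    rw [mul_comm, Real.cos_nat_mul_two_pi]
  have hsin' := hsin (n + 1)
  have hcos' := hcos (n + 1)
  push_cast at hsin' hcos'
  simp [hsin, hcos, hsin', hcos']

lemma eqOn_cos_mul_periodSecant_cosInterpolant (u : ℝ → ℝ) (n : ℕ) :
    EqOn (fun x ↦ Real.cos (2 * π * x) * periodSecant u n x)
      (fun x ↦ Real.cos (2 * π * x) * cosInterpolant u x) (uIoo n (n + 1)) := fun x hx ↦ by
  rw [uIoo_of_le (by linarith)] at hx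
  simp only [eqOn_cosInterpolant_periodSecant u n (Ioo_subset_Ico_self hx)]

lemma intervalIntegrable_cos_mul_cosInterpolant_period (u : ℝ → ℝ) (n : ℕ) :
    IntervalIntegrable (fun x ↦ Real.cos (2 * π * x) * cosInterpolant u x) volume n
      (n + 1 : ℕ) := by
  have hcont := continuous_periodSecant u n
  rw [Nat.cast_succ]
  exact (Continuous.intervalIntegrable (by fun_prop) _ _).congr_uIoo
    (eqOn_cos_mul_periodSecant_cosInterpolant u n)

lemma intervalIntegrable_cos_mul_cosInterpolant (u : ℝ → ℝ) {a b : ℝ} (ha : 0 ≤ a) (hb : 0 ≤ b) :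
    IntervalIntegrable (fun x ↦ Real.cos (2 * π * x) * cosInterpolant u x) volume a b := by
  obtain ⟨N, hN⟩ := exists_nat_ge (max a b)
  have hN' := IntervalIntegrable.trans_iterate (a := fun n : ℕ ↦ (n : ℝ)) (n := N)
    fun n _ ↦ intervalIntegrable_cos_mul_cosInterpolant_period u n
  refine hN'.mono_set (uIcc_subset_uIcc ?_ ?_) <;> rw [Nat.cast_zero, uIcc_of_le N.cast_nonneg]
  · exact ⟨ha, (le_max_left a b).trans hN⟩
  · exact ⟨hb, (le_max_right a b).trans hN⟩

lemma integral_cos_mul_cosInterpolant_natCast (u : ℝ → ℝ) (N : ℕ) :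
    ∫ x in (0 : ℝ)..N, Real.cos (2 * π * x) * cosInterpolant u x = 0 := by
  have hsum := intervalIntegral.sum_integral_adjacent_intervals (a := fun n : ℕ ↦ (n : ℝ)) (n := N)
    fun n _ ↦ intervalIntegrable_cos_mul_cosInterpolant_period u n
  rw [Nat.cast_zero] at hsum
  rw [← hsum]
  refine Finset.sum_eq_zero fun n _ ↦ ?_
  rw [Nat.cast_succ,
    ← intervalIntegral.integral_congr_uIoo (eqOn_cos_mul_periodSecant_cosInterpolant u n)]
  exact integral_cos_mul_secantLine_period u _ _ n

lemma tendsto_integral_cos_mul_cosInterpolant_nhdsGT_zero (u : ℝ → ℝ) :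
    Tendsto (fun a ↦ ∫ x in (0 : ℝ)..a, Real.cos (2 * π * x) * cosInterpolant u x)
      (𝓝[>] 0) (𝓝 0) := by
  have hcont := continuous_periodSecant u 0
  have hlim : Tendsto (fun a ↦ ∫ x in (0 : ℝ)..a, Real.cos (2 * π * x) * periodSecant u 0 x)
      (𝓝 0) (𝓝 0) := by
    simpa using (intervalIntegral.continuous_primitive
      (fun a b ↦ Continuous.intervalIntegrable (μ := volume)
        (u := fun x ↦ Real.cos (2 * π * x) * periodSecant u 0 x) (by fun_prop) a b) 0).tendsto 0
  refine (hlim.mono_left nhdsWithin_le_nhds).congr' ?_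
  filter_upwards [Ioo_mem_nhdsGT one_pos] with a ha
  refine intervalIntegral.integral_congr_uIoo
    ((eqOn_cos_mul_periodSecant_cosInterpolant u 0).mono ?_)
  rw [uIoo_of_le ha.1.le, uIoo_of_le (by simp)]
  exact Ioo_subset_Ioo (by simp) (by simpa using ha.2.le)

lemma tendsto_integral_cos_mul_sub_cosInterpolant {L : ℝ} (hu : ContinuousOn u (Ioi 0))
    (hL : Tendsto (fun p : ℝ × ℝ ↦ ∫ x in p.1..p.2, Real.cos (2 * π * x) * u x)
      (𝓝[>] 0 ×ˢ atTop) (𝓝 L)) :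
    Tendsto (fun p : ℝ × ℕ ↦ ∫ x in p.1..p.2, Real.cos (2 * π * x) * (u x - cosInterpolant u x))
      (𝓝[>] 0 ×ˢ atTop) (𝓝 L) := by
  -- The interpolant integrates to `0` over `[0, N]`, so it contributes minus its integral over
  -- `[a, N]`, that is its integral over `[0, a]`.
  have hlim := (hL.comp (tendsto_id.prodMap tendsto_natCast_atTop_atTop)).add
    ((tendsto_integral_cos_mul_cosInterpolant_nhdsGT_zero u).comp tendsto_fst)
  rw [add_zero] at hlim
  refine hlim.congr' ?_
  filter_upwards [prod_mem_prod self_mem_nhdsWithin (eventually_gt_atTop 0)] with ⟨a, N⟩ ⟨ha, hN⟩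
  have ha : 0 < a := ha
  have hN : (0 : ℝ) < N := Nat.cast_pos.2 hN
  have hint : IntervalIntegrable (fun x ↦ Real.cos (2 * π * x) * u x) volume a N :=
    intervalIntegrable_of_continuousOn_Ioi (by fun_prop) ha hN
  have hint' := fun {a b : ℝ} ↦ intervalIntegrable_cos_mul_cosInterpolant u (a := a) (b := b)
  have hsplit := intervalIntegral.integral_add_adjacent_intervals (hint' le_rfl ha.le)
    (hint' ha.le hN.le)
  rw [integral_cos_mul_cosInterpolant_natCast] at hsplit
  simp only [Function.comp_apply, Prod.map_apply, id_eq, mul_sub]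
  rw [intervalIntegral.integral_sub hint (hint' ha.le hN.le)]
  linarith

lemma eqOn_zero_of_eqOn_cosInterpolant (hlim : Tendsto u atTop (𝓝 0))
    (hdiff : ∀ n : ℕ, DifferentiableAt ℝ u (n + 1)) (h : EqOn u (cosInterpolant u) (Ioi 0)) :
    EqOn u 0 (Ioi 0) := by
  have hpiece (n : ℕ) : EqOn u (periodSecant u n) (Ioo n (n + 1)) := fun x hx ↦
    (h (n.cast_nonneg.trans_lt hx.1)).trans
      (eqOn_cosInterpolant_periodSecant u n (Ioo_subset_Ico_self hx))
  have hconst (n : ℕ) : periodSecant u n = periodSecant u 0 := by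
    induction n with
    | zero => rfl
    | succ n ih =>
      have hright := hpiece (n + 1)
      push_cast at hright
      rw [← ih, eq_comm]
      exact secantLine_eq_of_eventuallyEq (hdiff n)
        ((hpiece n).eventuallyEq_of_mem (Ioo_mem_nhdsLT (by linarith)))
        (hright.eventuallyEq_of_mem (Ioo_mem_nhdsGT (by linarith)))
  have heq : EqOn u (periodSecant u 0) (Ioi 0) := fun x hx ↦ by
    rw [h hx, cosInterpolant, hconst]
  have hzero : periodSecant u 0 = 0 := secantLine_eq_zero_of_tendsto
    (hlim.congr' (heq.eventuallyEq_of_mem (Ioi_mem_atTop 0)))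
  exact hzero ▸ heq

end CosInterpolant

section Positivity

variable {u : ℝ → ℝ} {L : ℝ}

lemma pos_of_tendsto_integral_cos_two_pi_mul (hu : ConvexOn ℝ (Ioi 0) u)
    (hne : ∃ x ∈ Ioi (0 : ℝ), u x ≠ 0) (hlim : Tendsto u atTop (𝓝 0))
    (hdiff : ∀ n : ℕ, DifferentiableAt ℝ u (n + 1))
    (hL : Tendsto (fun p : ℝ × ℝ ↦ ∫ x in p.1..p.2, Real.cos (2 * π * x) * u x)
      (𝓝[>] 0 ×ˢ atTop) (𝓝 L)) : 0 < L := by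
  have hcont : ContinuousOn u (Ioi 0) := hu.continuousOn isOpen_Ioi
  obtain ⟨x, hx, hxne⟩ : ∃ x, 0 < x ∧ u x ≠ cosInterpolant u x := by
    by_contra! heq
    obtain ⟨x, hx, hux⟩ := hne
    exact hux (eqOn_zero_of_eqOn_cosInterpolant hlim hdiff heq hx)
  obtain ⟨b, hxb, hb⟩ := exists_between (Nat.lt_floor_add_one x)
  have hsub : Icc x b ⊆ Ico (⌊x⌋₊ : ℝ) (⌊x⌋₊ + 1) := fun y hy ↦
    ⟨(Nat.floor_le hx.le).trans hy.1, hy.2.trans_lt hb⟩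
  refine pos_of_tendsto_integral tendsto_fst (tendsto_natCast_atTop_atTop.comp tendsto_snd)
    (tendsto_integral_cos_mul_sub_cosInterpolant hcont hL)
    (fun y ↦ cos_mul_sub_cosInterpolant_nonneg hu) (fun a b ha hb ↦ ?_) hx hxb ?_
    (cos_mul_sub_cosInterpolant_pos hu hx hxne)
  · simp only [mul_sub]
    exact (intervalIntegrable_of_continuousOn_Ioi (by fun_prop) ha hb).sub
      (intervalIntegrable_cos_mul_cosInterpolant u ha.le hb.le)
  · have hinterp : ContinuousOn (cosInterpolant u) (Icc x b) :=
      (continuous_periodSecant u _).continuousOn.congr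
        ((eqOn_cosInterpolant_periodSecant u _).mono hsub)
    have hu' : ContinuousOn u (Icc x b) := hcont.mono fun y hy ↦ hx.trans_le hy.1
    fun_prop

lemma pos_of_tendsto_integral_convexOn (hu : ConvexOn ℝ (Ioi 0) u)
    (hne : ∃ x ∈ Ioi (0 : ℝ), u x ≠ 0) (hlim : Tendsto u atTop (𝓝 0))
    (hL : Tendsto (fun p : ℝ × ℝ ↦ ∫ x in p.1..p.2, u x) (𝓝[>] 0 ×ˢ atTop) (𝓝 L)) : 0 < L := by
  have hcont : ContinuousOn u (Ioi 0) := hu.continuousOn isOpen_Ioi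
  obtain ⟨x, hx, hux⟩ := hne
  have hx : 0 < x := hx
  exact pos_of_tendsto_integral tendsto_fst tendsto_snd hL
    (fun y ↦ nonneg_of_convexOn_of_tendsto_zero hu hlim)
    (fun a b ↦ intervalIntegrable_of_continuousOn_Ioi hcont) hx (lt_add_one x)
    (hcont.mono fun y hy ↦ hx.trans_le hy.1)
    ((nonneg_of_convexOn_of_tendsto_zero hu hlim hx).lt_of_ne' hux)

lemma convexOn_comp_const_mul_Ioi {T : ℝ} (hu : ConvexOn ℝ (Ioi 0) u) (hT : 0 < T) :
    ConvexOn ℝ (Ioi 0) fun x ↦ u (T * x) := by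
  refine (hu.comp_linearMap (LinearMap.mulLeft ℝ T)).subset (fun x hx ↦ ?_) (convex_Ioi 0)
  exact mul_pos hT hx

end Positivity

theorem tuck_positivity_general (u : ℝ → ℝ) (ξ L : ℝ)
    (hconv : ConvexOn ℝ (Ioi (0 : ℝ)) u)
    (hne : ∃ x ∈ Ioi (0 : ℝ), u x ≠ 0)
    (hu_lim : Tendsto u atTop (𝓝 0))
    (hdiff : ξ ≠ 0 → ∀ x ∈ Ioi (0 : ℝ), Real.cos (x * ξ) = 1 → DifferentiableAt ℝ u x)
    (hL : Tendsto (fun p : ℝ × ℝ ↦ ∫ x in p.1..p.2, Real.cos (x * ξ) * u x)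
      (𝓝[>] 0 ×ˢ atTop) (𝓝 L)) :
    0 < L := by
  obtain rfl | hξ := eq_or_ne ξ 0
  · exact pos_of_tendsto_integral_convexOn hconv hne hu_lim (by simpa using hL)
  set T := 2 * π / |ξ| with hTdef
  have hT : 0 < T := by positivity
  have hcos (x : ℝ) : Real.cos (T * x * ξ) = Real.cos (2 * π * x) := by
    have habs : |T * x * ξ| = |2 * π * x| := by
      rw [abs_mul, abs_mul, abs_mul _ x, abs_of_pos hT, abs_of_pos Real.two_pi_pos, hTdef]
      field_simp
    rw [← Real.cos_abs, habs, Real.cos_abs]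
  refine (smul_pos_iff_of_pos_left (inv_pos.2 hT)).1 ?_
  refine pos_of_tendsto_integral_cos_two_pi_mul (convexOn_comp_const_mul_Ioi hconv hT) ?_
    (hu_lim.comp (tendsto_id.const_mul_atTop hT)) (fun n ↦ ?_)
    (by simpa only [hcos] using tendsto_integral_comp_const_mul hT hL)
  · obtain ⟨x, hx, hux⟩ := hne
    exact ⟨T⁻¹ * x, mul_pos (inv_pos.2 hT) hx, by rwa [mul_inv_cancel_left₀ hT.ne']⟩
  · have hgrid : DifferentiableAt ℝ u (T * (n + 1)) := by
      refine hdiff hξ _ (mem_Ioi.2 (by positivity)) ?_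
      rw [hcos, mul_comm]
      exact_mod_cast Real.cos_nat_mul_two_pi (n + 1)
    exact hgrid.comp (n + 1 : ℝ) (by fun_prop)

/-- **Tuck's lemma.** Let `u : (0,∞) → ℝ` be a differentiable convex function, not identically
zero, with `u(x) → 0` and `u'(x) → 0` as `x → +∞`, and `x·u(x) → 0` as `x → 0⁺`. Then for any
`ξ ∈ ℝ` for which the two-sided improper Riemann integral `∫₀^∞ cos(xξ) u(x) dx` converges
(i.e. `∫_a^b cos(xξ) u(x) dx` has a limit `L` as `a → 0⁺` and `b → ∞`), the integral is
strictly positive. -/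
theorem tuck_positivity (u : ℝ → ℝ)
    (hdiff : ∀ x ∈ Set.Ioi (0 : ℝ), DifferentiableAt ℝ u x)
    (hconv : ConvexOn ℝ (Set.Ioi (0 : ℝ)) u)
    (hne : ∃ x ∈ Set.Ioi (0 : ℝ), u x ≠ 0)
    (hu_lim : Tendsto u atTop (nhds 0))
    (hu'_lim : Tendsto (deriv u) atTop (nhds 0))
    (hxu_lim : Tendsto (fun x => x * u x) (nhdsWithin 0 (Set.Ioi 0)) (nhds 0))
    (ξ : ℝ) (L : ℝ)
    (hL : Tendsto (fun p : ℝ × ℝ => ∫ x in p.1..p.2, Real.cos (x * ξ) * u x)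
      ((nhdsWithin 0 (Set.Ioi 0)) ×ˢ atTop) (nhds L)) :
    0 < L :=
  tuck_positivity_general u ξ L hconv hne hu_lim (fun _ x hx _ ↦ hdiff x hx) hL
end

section
/- Let v be a weakly decreasing (monotone nonincreasing) continuous function on (0, ∞) with lim_{x→+∞} v(x) = 0, such that v is not identically zero and such that the two-sided improper Riemann integral ∫₀^∞ sin(x) v(x) dx converges. Then ∫₀^∞ sin(x) v(x) dx > 0. -/
/-!
Since `∫ sin` vanishes over a full period `[c - π, c + π]`, where `cos c = -1`, the function `v` may
be replaced there by `v - v c`, and `sin x * (v x - v c) ≥ 0` when `v` is antitone: `sin` is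
nonnegative to the left of the centre `c` and nonpositive to the right. So each full period
contributes a nonnegative amount, and a positive one if `v` is continuous and not constant on it.

As `v` may blow up at `0`, it is replaced by `x ↦ v (max x ε)` with `0 < ε ≤ π`. This only lowers
the integrals, because `sin ≥ 0` on `(0, ε)`, and it makes the first period like all the others.
-/

open Filter Set MeasureTheory

open Real Topology

lemma antitone_comp_max_of_antitoneOn {α β : Type*} [LinearOrder α] [Preorder β] {f : α → β}
    {a : α} (hf : AntitoneOn f (Ici a)) : Antitone fun x => f (max x a) := fun _ _ hxy =>
  hf (le_max_right _ _) (le_max_right _ _) (max_le_max_right a hxy)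

lemma exists_ge_apply_lt_of_tendsto_atTop {α β : Type*} [Preorder α] [IsDirectedOrder α]
    [LinearOrder β] [TopologicalSpace β] [OrderTopology β] {f : α → β} {a : α} {l : β}
    (hf : AntitoneOn f (Ici a)) (hlim : Tendsto f atTop (𝓝 l)) (hne : f a ≠ l) :
    ∃ b ≥ a, f b < f a := by
  have : Nonempty α := ⟨a⟩
  have hle : l ≤ f a := le_of_tendsto hlim <|
    (eventually_ge_atTop a).mono fun b hb => hf self_mem_Ici hb hb
  exact ((eventually_ge_atTop a).and (hlim.eventually_lt_const (hle.lt_of_ne' hne))).exists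

lemma exists_apply_succ_mul_lt_of_antitoneOn {𝕜 β : Type*} [Field 𝕜] [LinearOrder 𝕜]
    [IsStrictOrderedRing 𝕜] [Archimedean 𝕜] [LinearOrder β] {f : 𝕜 → β} {T b : 𝕜} (hT : 0 < T)
    (hf : AntitoneOn f (Ici 0)) (hb : 0 ≤ b) (hlt : f b < f 0) :
    ∃ k : ℕ, f ((k + 1) * T) < f (k * T) := by
  by_contra! hle
  have hmono : Monotone fun k : ℕ => f (k * T) :=
    monotone_nat_of_le_succ fun k => by simpa using hle k
  obtain ⟨n, hn⟩ := exists_nat_ge (b / T)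
  have hbn : b ≤ n * T := (div_le_iff₀ hT).mp hn
  have h0n : f 0 ≤ f (n * T) := by simpa using hmono n.zero_le
  exact (h0n.trans (hf hb (hb.trans hbn) hbn)).not_gt hlt

section FullPeriod

variable {v : ℝ → ℝ} {s : Set ℝ} {a b c x : ℝ}

lemma sin_eq_neg_sin_sub_of_cos_eq_neg_one (hc : cos c = -1) (x : ℝ) : sin x = -sin (x - c) := by
  have hsin : sin c = 0 := sin_eq_zero_iff_cos_eq.mpr (Or.inr hc)
  rw [sin_sub, hc, hsin]
  ring

lemma sin_mul_sub_nonneg_of_antitoneOn (hv : AntitoneOn v s) (hc : cos c = -1) (hcs : c ∈ s)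
    (hxs : x ∈ s) (hx : x ∈ Icc (c - π) (c + π)) : 0 ≤ sin x * (v x - v c) := by
  rw [sin_eq_neg_sin_sub_of_cos_eq_neg_one hc]
  rcases le_total x c with hxc | hcx
  · have hsin : sin (x - c) ≤ 0 :=
      sin_nonpos_of_nonpos_of_neg_pi_le (by linarith) (by linarith [hx.1])
    exact mul_nonneg (neg_nonneg.mpr hsin) (sub_nonneg.mpr (hv hxs hcs hxc))
  · have hsin : 0 ≤ sin (x - c) :=
      sin_nonneg_of_nonneg_of_le_pi (by linarith) (by linarith [hx.2])
    exact mul_nonneg_of_nonpos_of_nonpos (neg_nonpos.mpr hsin) (sub_nonpos.mpr (hv hcs hxs hcx))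

lemma sin_ne_zero_of_mem_Ioo_of_ne (hc : cos c = -1) (hx : x ∈ Ioo (c - π) (c + π))
    (hxc : x ≠ c) : sin x ≠ 0 := by
  rw [sin_eq_neg_sin_sub_of_cos_eq_neg_one hc, neg_ne_zero, Ne,
    sin_eq_zero_iff_of_lt_of_lt (by linarith [hx.1]) (by linarith [hx.2])]
  exact sub_ne_zero.mpr hxc

lemma intervalIntegrable_sin_mul_of_antitoneOn (hv : AntitoneOn v (uIcc a b)) :
    IntervalIntegrable (fun x => sin x * v x) volume a b :=
  hv.intervalIntegrable.continuousOn_mul continuous_sin.continuousOn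

lemma integral_sin_mul_sub_const (hv : IntervalIntegrable (fun x => sin x * v x) volume a b)
    (C : ℝ) :
    ∫ x in a..b, sin x * (v x - C) = (∫ x in a..b, sin x * v x) - (cos a - cos b) * C := by
  simp only [mul_sub]
  rw [intervalIntegral.integral_sub hv ((continuous_sin.mul_const C).intervalIntegrable a b),
    intervalIntegral.integral_mul_const, integral_sin]

lemma integral_sin_mul_sub_center (hv : AntitoneOn v (Icc (c - π) (c + π))) :
    ∫ x in (c - π)..(c + π), sin x * (v x - v c) = ∫ x in (c - π)..(c + π), sin x * v x := by
  rw [← uIcc_of_le (by linarith [pi_pos])] at hv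
  rw [integral_sin_mul_sub_const (intervalIntegrable_sin_mul_of_antitoneOn hv), cos_sub_pi,
    cos_add_pi, sub_self, zero_mul, sub_zero]

lemma integral_sin_mul_nonneg_of_antitoneOn (hv : AntitoneOn v (Icc (c - π) (c + π)))
    (hc : cos c = -1) : 0 ≤ ∫ x in (c - π)..(c + π), sin x * v x := by
  have hcI : c ∈ Icc (c - π) (c + π) := ⟨by linarith [pi_pos], by linarith [pi_pos]⟩
  rw [← integral_sin_mul_sub_center hv]
  exact intervalIntegral.integral_nonneg (hcI.1.trans hcI.2) fun x hx =>
    sin_mul_sub_nonneg_of_antitoneOn hv hc hcI hx hx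

lemma integral_sin_mul_pos_of_antitoneOn (hv : AntitoneOn v (Icc (c - π) (c + π)))
    (hcont : ContinuousOn v (Icc (c - π) (c + π))) (hc : cos c = -1)
    (hlt : v (c + π) < v (c - π)) : 0 < ∫ x in (c - π)..(c + π), sin x * v x := by
  have hcI : c ∈ Icc (c - π) (c + π) := ⟨by linarith [pi_pos], by linarith [pi_pos]⟩
  have hnonneg : ∀ x ∈ Icc (c - π) (c + π), 0 ≤ sin x * (v x - v c) := fun x hx =>
    sin_mul_sub_nonneg_of_antitoneOn hv hc hcI hx hx
  obtain ⟨x, hx, hvx⟩ : ∃ x ∈ Ioo (c - π) (c + π), v x ≠ v c := by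
    obtain ⟨y, hy, hyc⟩ := (Ioo_infinite hlt).exists_notMem_finite (finite_singleton (v c))
    obtain ⟨x, hx, rfl⟩ := intermediate_value_Ioo' (hcI.1.trans hcI.2) hcont hy
    exact ⟨x, hx, hyc⟩
  have hpos : 0 < sin x * (v x - v c) :=
    (hnonneg x (Ioo_subset_Icc_self hx)).lt_of_ne' <|
      mul_ne_zero (sin_ne_zero_of_mem_Ioo_of_ne hc hx (ne_of_apply_ne v hvx)) (sub_ne_zero.mpr hvx)
  rw [← integral_sin_mul_sub_center hv]
  exact intervalIntegral.integral_pos (by linarith [pi_pos])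
    (continuous_sin.continuousOn.mul (hcont.sub continuousOn_const))
    (fun y hy => hnonneg y (Ioc_subset_Icc_self hy)) ⟨x, Ioo_subset_Icc_self hx, hpos⟩

end FullPeriod

section NatMulTwoPi

variable {v : ℝ → ℝ}

lemma integral_sin_mul_nat_mul_two_pi_nonneg {m n : ℕ} (hmn : m ≤ n)
    (hv : AntitoneOn v (Icc (m * (2 * π)) (n * (2 * π)))) :
    0 ≤ ∫ x in (m * (2 * π))..(n * (2 * π)), sin x * v x := by
  have hmul : Monotone fun k : ℕ => (k : ℝ) * (2 * π) :=
    Nat.mono_cast.mul_const two_pi_pos.le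
  have hperiod : ∀ k ∈ Ico m n,
      AntitoneOn v (Icc (k * (2 * π)) ((k + 1 : ℕ) * (2 * π))) := fun k hk =>
    hv.mono (Icc_subset_Icc (hmul hk.1) (hmul hk.2))
  rw [← intervalIntegral.sum_integral_adjacent_intervals_Ico
    (a := fun k : ℕ => (k : ℝ) * (2 * π)) hmn fun k hk => intervalIntegrable_sin_mul_of_antitoneOn
      (by rw [uIcc_of_le (hmul k.le_succ)]; exact hperiod k hk)]
  refine Finset.sum_nonneg fun k hk => ?_
  have h := integral_sin_mul_nonneg_of_antitoneOn (v := v) (c := k * (2 * π) + π)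
  rw [add_sub_cancel_right,
    show k * (2 * π) + π + π = (k + 1 : ℕ) * (2 * π) by push_cast; ring] at h
  exact h (hperiod k (Finset.mem_Ico.mp hk)) (cos_nat_mul_two_pi_add_pi k)

lemma exists_nat_integral_sin_mul_pos {b : ℝ} (hv : AntitoneOn v (Ici 0))
    (hcont : ContinuousOn v (Ici 0)) (hb : 0 ≤ b) (hlt : v b < v 0) :
    ∃ n : ℕ, 0 < ∫ x in 0..(n * (2 * π)), sin x * v x := by
  obtain ⟨k, hk⟩ := exists_apply_succ_mul_lt_of_antitoneOn two_pi_pos hv hb hlt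
  have hk0 : 0 ≤ k * (2 * π) := by positivity
  have hanti {p q : ℝ} (hp : 0 ≤ p) : AntitoneOn v (Icc p q) :=
    hv.mono (Icc_subset_Ici_self.trans (Ici_subset_Ici.mpr hp))
  have hint {p q : ℝ} (hp : 0 ≤ p) (hpq : p ≤ q) :
      IntervalIntegrable (fun x => sin x * v x) volume p q :=
    intervalIntegrable_sin_mul_of_antitoneOn (by rw [uIcc_of_le hpq]; exact hanti hp)
  have hinitial : 0 ≤ ∫ x in 0..(k * (2 * π)), sin x * v x := by
    simpa using integral_sin_mul_nat_mul_two_pi_nonneg k.zero_le (hanti (by simp))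
  have hlast : 0 < ∫ x in (k * (2 * π))..((k + 1) * (2 * π)), sin x * v x := by
    have h := integral_sin_mul_pos_of_antitoneOn (v := v) (c := k * (2 * π) + π)
    rw [add_sub_cancel_right, show k * (2 * π) + π + π = (k + 1) * (2 * π) by ring] at h
    exact h (hanti hk0) (hcont.mono (Icc_subset_Ici_self.trans (Ici_subset_Ici.mpr hk0)))
      (cos_nat_mul_two_pi_add_pi k) hk
  refine ⟨k + 1, ?_⟩
  push_cast
  rw [← intervalIntegral.integral_add_adjacent_intervals (hint le_rfl hk0)
    (hint hk0 (by linarith [pi_pos]))]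
  exact add_pos_of_nonneg_of_pos hinitial hlast

end NatMulTwoPi

section Truncation

variable {v : ℝ → ℝ} {ε : ℝ}

lemma integral_sin_mul_comp_max_le {a b : ℝ} (hv : AntitoneOn v (Ici a)) (ha : 0 ≤ a)
    (hab : a ≤ b) (haε : a ≤ ε) (hε : ε ≤ π) :
    ∫ x in a..b, sin x * v (max x ε) ≤ ∫ x in a..b, sin x * v x := by
  have htrunc : Antitone fun x => v (max x ε) :=
    antitone_comp_max_of_antitoneOn (hv.mono (Ici_subset_Ici.mpr haε))
  refine intervalIntegral.integral_mono_on hab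
    (intervalIntegrable_sin_mul_of_antitoneOn (htrunc.antitoneOn _))
    (intervalIntegrable_sin_mul_of_antitoneOn
      (hv.mono (by rw [uIcc_of_le hab]; exact Icc_subset_Ici_self))) fun x hx => ?_
  rcases le_total x ε with hxε | hεx
  · have hsin : 0 ≤ sin x := sin_nonneg_of_nonneg_of_le_pi (ha.trans hx.1) (hxε.trans hε)
    exact mul_le_mul_of_nonneg_left (hv hx.1 (haε.trans (le_max_right x ε)) (le_max_left x ε)) hsin
  · rw [max_eq_left hεx]

lemma integral_sin_mul_comp_max_le_of_tendsto {L : ℝ} (hv : AntitoneOn v (Ioi 0)) (hε₀ : 0 < ε)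
    (hε : ε ≤ π) (hL : Tendsto (fun p : ℝ × ℝ => ∫ x in p.1..p.2, sin x * v x)
      (𝓝[>] 0 ×ˢ atTop) (𝓝 L)) (N : ℕ) :
    ∫ x in 0..(N * (2 * π)), sin x * v (max x ε) ≤ L := by
  have htrunc : Antitone fun x => v (max x ε) :=
    antitone_comp_max_of_antitoneOn (hv.mono (Ici_subset_Ioi.mpr hε₀))
  have hint (p q : ℝ) : IntervalIntegrable (fun x => sin x * v (max x ε)) volume p q :=
    intervalIntegrable_sin_mul_of_antitoneOn (htrunc.antitoneOn _)
  have hperiods : Tendsto (fun p : ℝ × ℕ => ∫ x in p.1..(p.2 * (2 * π)), sin x * v x)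
      (𝓝[>] 0 ×ˢ atTop) (𝓝 L) :=
    hL.comp (tendsto_id.prodMap (tendsto_natCast_atTop_atTop.atTop_mul_const two_pi_pos))
  have hcutoff : Tendsto (fun p : ℝ × ℕ => ∫ x in p.1..(N * (2 * π)), sin x * v (max x ε))
      (𝓝[>] 0 ×ˢ atTop) (𝓝 (∫ x in 0..(N * (2 * π)), sin x * v (max x ε))) := by
    have hcont : Continuous fun a => ∫ x in a..(N * (2 * π)), sin x * v (max x ε) := by
      simp only [intervalIntegral.integral_symm (N * (2 * π))]
      exact (intervalIntegral.continuous_primitive hint _).neg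
    exact ((hcont.tendsto 0).mono_left nhdsWithin_le_nhds).comp tendsto_fst
  refine le_of_tendsto_of_tendsto hcutoff hperiods ?_
  filter_upwards [prod_mem_prod (Ioo_mem_nhdsGT hε₀) (Ici_mem_atTop (max N 1))]
    with ⟨a, n⟩ ⟨⟨ha, haε⟩, hn⟩
  have hn1 : (1 : ℝ) ≤ n := by exact_mod_cast (le_max_right N 1).trans hn
  have han : a ≤ n * (2 * π) := by nlinarith [pi_pos]
  calc ∫ x in a..(N * (2 * π)), sin x * v (max x ε)
      ≤ (∫ x in a..(N * (2 * π)), sin x * v (max x ε)) +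
          ∫ x in (N * (2 * π))..(n * (2 * π)), sin x * v (max x ε) :=
        le_add_of_nonneg_right <| integral_sin_mul_nat_mul_two_pi_nonneg
          ((le_max_left N 1).trans hn) (htrunc.antitoneOn _)
    _ = ∫ x in a..(n * (2 * π)), sin x * v (max x ε) :=
        intervalIntegral.integral_add_adjacent_intervals (hint _ _) (hint _ _)
    _ ≤ ∫ x in a..(n * (2 * π)), sin x * v x :=
        integral_sin_mul_comp_max_le (hv.mono (Ici_subset_Ioi.mpr ha)) ha.le han haε.le hε

end Truncation

/-- Let `v` be a weakly decreasing continuous function on `(0,∞)` with `v(x) → 0` as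
`x → +∞`, not identically zero, and suppose the two-sided improper Riemann integral
`∫₀^∞ sin(x) v(x) dx` converges to `L` (i.e. `∫_a^b sin(x) v(x) dx → L` as `a → 0⁺`,
`b → ∞`). Then `L > 0`. -/
theorem sine_integral_positivity (v : ℝ → ℝ)
    (hmono : AntitoneOn v (Set.Ioi (0 : ℝ)))
    (hcont : ContinuousOn v (Set.Ioi (0 : ℝ)))
    (hlim : Tendsto v atTop (nhds 0))
    (hne : ∃ x ∈ Set.Ioi (0 : ℝ), v x ≠ 0)
    (L : ℝ)
    (hL : Tendsto (fun p : ℝ × ℝ => ∫ x in p.1..p.2, Real.sin x * v x)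
      ((nhdsWithin 0 (Set.Ioi 0)) ×ˢ atTop) (nhds L)) :
    0 < L := by
  obtain ⟨x, hx, hvx⟩ := hne
  obtain ⟨y, hxy, hvy⟩ :=
    exists_ge_apply_lt_of_tendsto_atTop (hmono.mono (Ici_subset_Ioi.mpr hx)) hlim hvx
  set ε := min x π
  have hε₀ : 0 < ε := lt_min hx pi_pos
  have hεy : ε ≤ y := (min_le_left x π).trans hxy
  have htrunc_anti : Antitone fun t => v (max t ε) :=
    antitone_comp_max_of_antitoneOn (hmono.mono (Ici_subset_Ioi.mpr hε₀))
  have htrunc_cont : Continuous fun t => v (max t ε) :=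
    hcont.comp_continuous (by fun_prop) fun t => hε₀.trans_le (le_max_right t ε)
  have htrunc_lt : v (max y ε) < v (max 0 ε) := by
    rw [max_eq_left hεy, max_eq_right hε₀.le]
    exact hvy.trans_le (hmono hε₀ hx (min_le_left x π))
  obtain ⟨N, hN⟩ := exists_nat_integral_sin_mul_pos (htrunc_anti.antitoneOn _)
    htrunc_cont.continuousOn (hε₀.le.trans hεy) htrunc_lt
  exact hN.trans_le
    (integral_sin_mul_comp_max_le_of_tendsto hmono hε₀ (min_le_right x π) hL N)
end

section
/- If ν, z ∈ ℂ with Re ν > −1/2 and Re z > 0, then the modified Bessel function of the second kind satisfies K_ν(z) = ((z/2)^ν √π / Γ(ν + 1/2)) ∫₀^∞ e^{−z cosh φ} (sinh φ)^{2ν} dφ, and equivalently K_ν(z) = ((z/2)^ν √π / Γ(ν + 1/2)) ∫₁^∞ e^{−zt} (t² − 1)^{ν − 1/2} dt. -/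
/-!
Write `J(a, z) = ∫₁^∞ e^{-zt} (t² - 1)^a dt` and `S(ν, w) = ∑ wⁿ / (n! Γ(n + ν + 1))`, so that
`I_ν(z) = (z/2)^ν S(ν, z²/4)`, and put `L_ν(z) = (√π / Γ(ν + 1/2)) J(ν - 1/2, z)`. Everything
follows from the connection formula `2 sin(νπ) (z/2)^ν L_ν(z) = π (I_{-ν}(z) - I_ν(z))`: divide by
the sine when `ν` is not an integer, and use the continuity of `L_ν` in `ν` when it is. The
hyperbolic form is the substitution `t = cosh φ`.

Both sides of the connection formula are holomorphic in `ν`, since `u = t² - 1` turns `J` into a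
Mellin transform, so by the identity theorem it suffices to treat `-1/2 < Re ν < 0`. There each of
`L_ν(z)`, `S(ν, z²/4)` and `(z/2)^{-2ν} S(-ν, z²/4)` is the component `f` of a solution of
`f' = (z/2)^{-(2ν+1)} p`, `p' = (z/2)^{2ν+1} f`. The coefficients of this system are integrable at
the origin, so by Grönwall's inequality a solution is determined by the limits of `f` and `p` at
`0⁺`. For `L_ν` these are a Beta and a Gamma integral; comparing limits expresses `L_ν` through the
two series, and the reflection formula for `Γ` turns the coefficients into the sine.
-/

open Filter Set MeasureTheory
open scoped Real Classical

/-- The modified Bessel function of the first kind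
`I_ν(z) = Σ_{n=0}^∞ (z/2)^{ν+2n} / (n! Γ(n+ν+1))`, with the principal branch of powers.
(When `ν` is a negative integer the terms with `n + ν + 1 ≤ 0` vanish, since Mathlib's
`Complex.Gamma` vanishes at nonpositive integers, implementing the convention that the sum
starts at `n = -ν`.) -/
noncomputable def besselI (ν z : ℂ) : ℂ :=
  ∑' n : ℕ, (z / 2) ^ (ν + 2 * (n : ℂ)) / ((n.factorial : ℂ) * Complex.Gamma ((n : ℂ) + ν + 1))

/-- The modified Bessel function of the second kind:
`K_ν = (π / (2 sin (νπ))) (I_{-ν} - I_ν)` for non-integer `ν`, and for integer `ν` the limit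
of this expression as the order tends to `ν`. -/

noncomputable def besselK (ν z : ℂ) : ℂ :=
  if ∃ n : ℤ, ν = (n : ℂ) then
    limUnder (nhdsWithin ν {ν}ᶜ)
      (fun μ => ((Real.pi : ℂ) / (2 * Complex.sin (μ * (Real.pi : ℂ)))) *
        (besselI (-μ) z - besselI μ z))
  else ((Real.pi : ℂ) / (2 * Complex.sin (ν * (Real.pi : ℂ)))) * (besselI (-ν) z - besselI ν z)

/-! ### The power series of `I_ν` -/

/-- The Taylor coefficients of the entire function `besselSeries ν`. -/
noncomputable def besselCoeff (ν : ℂ) (n : ℕ) : ℂ :=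
  ((n.factorial : ℂ) * Complex.Gamma ((n : ℂ) + ν + 1))⁻¹

/-- The entire function `S(ν, w) = ∑ wⁿ / (n! Γ(n + ν + 1))` of both variables, for which
`I_ν(z) = (z/2)^ν S(ν, z²/4)`. -/
noncomputable def besselSeries (ν w : ℂ) : ℂ :=
  ∑' n : ℕ, besselCoeff ν n * w ^ n

lemma succ_mul_besselCoeff_succ (ν : ℂ) (n : ℕ) :
    ((n : ℂ) + 1) * besselCoeff ν (n + 1) = besselCoeff (ν + 1) n := by
  have hn : (n : ℂ) + 1 ≠ 0 := n.cast_add_one_ne_zero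
  rw [besselCoeff, besselCoeff, Nat.factorial_succ, Nat.cast_mul, Nat.cast_succ, mul_assoc,
    mul_inv, mul_inv_cancel_left₀ hn, add_right_comm (n : ℂ) 1 ν, add_assoc (n : ℂ) ν 1]

lemma besselCoeff_eq_mul_besselCoeff_add_one (ν : ℂ) (n : ℕ) :
    besselCoeff ν n = (n + ν + 1) * besselCoeff (ν + 1) n := by
  rw [besselCoeff, besselCoeff, mul_inv, mul_inv,
    Complex.one_div_Gamma_eq_self_mul_one_div_Gamma_add_one, ← add_assoc (n : ℂ) ν 1]
  ring

lemma differentiable_besselCoeff (n : ℕ) : Differentiable ℂ fun ν => besselCoeff ν n := by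
  simp only [besselCoeff, mul_inv]
  exact (Complex.differentiable_one_div_Gamma.comp (by fun_prop)).const_mul _

lemma norm_inv_Gamma_add_one_le {s : ℂ} (hs : 1 ≤ ‖s‖) :
    ‖(Complex.Gamma (s + 1))⁻¹‖ ≤ ‖(Complex.Gamma s)⁻¹‖ := by
  rw [Complex.one_div_Gamma_eq_self_mul_one_div_Gamma_add_one s, norm_mul]
  exact le_mul_of_one_le_left (norm_nonneg _) hs

lemma exists_forall_norm_inv_Gamma_le (R : ℝ) : ∃ C : ℝ, ∀ (n : ℕ) (ν : ℂ), ‖ν‖ ≤ R →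
    ‖(Complex.Gamma (n + ν + 1))⁻¹‖ ≤ C := by
  have hbdd (n : ℕ) : ∃ C : ℝ, ∀ ν ∈ Metric.closedBall (0 : ℂ) R,
      ‖(Complex.Gamma (n + ν + 1))⁻¹‖ ≤ C :=
    (isCompact_closedBall 0 R).exists_bound_of_continuousOn
      (Complex.differentiable_one_div_Gamma.continuous.comp (by fun_prop)).continuousOn
  choose C hC using hbdd
  obtain ⟨N, hN⟩ := exists_nat_ge R
  obtain ⟨M, hM⟩ := ((Set.finite_Iic N).image C).bddAbove
  have hle (n : ℕ) (hn : n ≤ N) (ν : ℂ) (hν : ‖ν‖ ≤ R) : ‖(Complex.Gamma (n + ν + 1))⁻¹‖ ≤ M :=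
    (hC n ν (by simpa using hν)).trans (hM (mem_image_of_mem C hn))
  refine ⟨M, fun n ν hν => ?_⟩
  rcases le_total n N with h | h
  · exact hle n h ν hν
  · induction n, h using Nat.le_induction with
    | base => exact hle N le_rfl ν hν
    | succ n hn ih =>
      have hnorm : 1 ≤ ‖(n : ℂ) + ν + 1‖ := by
        have hsub := norm_sub_le_norm_add ((n + 1 : ℕ) : ℂ) ν
        rw [Complex.norm_natCast, Nat.cast_succ, Nat.cast_succ, add_right_comm] at hsub
        have hNn : (N : ℝ) ≤ n := Nat.cast_le.mpr hn
        linarith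
      rw [Nat.cast_succ, add_right_comm (n : ℂ) 1 ν]
      exact (norm_inv_Gamma_add_one_le hnorm).trans ih

lemma exists_summable_forall_norm_besselCoeff_mul_pow_le (R ρ : ℝ) : ∃ u : ℕ → ℝ, Summable u ∧
    ∀ (n : ℕ) (ν w : ℂ), ‖ν‖ ≤ R → ‖w‖ ≤ ρ → ‖besselCoeff ν n * w ^ n‖ ≤ u n := by
  obtain ⟨C, hC⟩ := exists_forall_norm_inv_Gamma_le R
  refine ⟨_, (Real.summable_pow_div_factorial ρ).mul_right C, fun n ν w hν hw => ?_⟩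
  have hρ : 0 ≤ ρ := (norm_nonneg w).trans hw
  calc ‖besselCoeff ν n * w ^ n‖
      = ‖w‖ ^ n / n.factorial * ‖(Complex.Gamma (n + ν + 1))⁻¹‖ := by
        rw [besselCoeff, norm_mul, mul_inv, norm_mul, norm_inv, norm_pow, Complex.norm_natCast]
        ring
    _ ≤ ρ ^ n / n.factorial * C := by
        gcongr
        exact hC n ν hν

lemma hasSum_besselSeries (ν w : ℂ) :
    HasSum (fun n => besselCoeff ν n * w ^ n) (besselSeries ν w) := by
  obtain ⟨u, hu, hle⟩ := exists_summable_forall_norm_besselCoeff_mul_pow_le ‖ν‖ ‖w‖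
  exact (Summable.of_norm_bounded hu fun n => hle n ν w le_rfl le_rfl).hasSum

lemma differentiable_besselSeries_order (w : ℂ) : Differentiable ℂ fun ν => besselSeries ν w := by
  intro ν
  obtain ⟨u, hu, hle⟩ := exists_summable_forall_norm_besselCoeff_mul_pow_le (‖ν‖ + 1) ‖w‖
  exact (Complex.differentiableOn_tsum_of_summable_norm hu
    (fun n => ((differentiable_besselCoeff n).mul_const _).differentiableOn) Metric.isOpen_ball
    fun n μ hμ => hle n μ w (norm_lt_of_mem_ball hμ).le le_rfl).differentiableAt
      (Metric.ball_mem_nhds ν one_pos)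

lemma hasDerivAt_besselSeries (ν w : ℂ) :
    HasDerivAt (besselSeries ν) (besselSeries (ν + 1) w) w := by
  obtain ⟨u, hu, hle⟩ := exists_summable_forall_norm_besselCoeff_mul_pow_le ‖ν‖ (‖w‖ + 1)
  have hdiff (n : ℕ) : DifferentiableOn ℂ (fun w => besselCoeff ν n * w ^ n) (Metric.ball w 1) := by
    fun_prop
  have hbound (n : ℕ) (v : ℂ) (hv : v ∈ Metric.ball w 1) :=
    hle n ν v le_rfl (norm_lt_of_mem_ball hv).le
  have hderiv := ((Complex.differentiableOn_tsum_of_summable_norm hu hdiff Metric.isOpen_ball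
    hbound).differentiableAt (Metric.ball_mem_nhds w one_pos)).hasDerivAt
  have hsum : HasSum (fun n => besselCoeff (ν + 1) n * w ^ n)
      (deriv (fun w => ∑' n : ℕ, besselCoeff ν n * w ^ n) w) := by
    simpa [← succ_mul_besselCoeff_succ ν, mul_assoc, mul_left_comm] using
      (hasSum_nat_add_iff' 1).mpr (Complex.hasSum_deriv_of_summable_norm hu hdiff
        Metric.isOpen_ball hbound (Metric.mem_ball_self one_pos))
  exact hderiv.congr_deriv (hsum.unique (hasSum_besselSeries (ν + 1) w))

lemma besselSeries_contiguous (ν w : ℂ) :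
    w * besselSeries (ν + 2) w + (ν + 1) * besselSeries (ν + 1) w = besselSeries ν w := by
  have hshift : HasSum (fun n : ℕ => n * besselCoeff (ν + 1) n * w ^ n)
      (w * besselSeries (ν + 2) w) := by
    have h := (hasSum_besselSeries (ν + 1 + 1) w).mul_left w
    simp_rw [← succ_mul_besselCoeff_succ (ν + 1), add_assoc ν, one_add_one_eq_two] at h
    rw [← hasSum_nat_add_iff' 1]
    simpa [pow_succ', mul_left_comm] using h
  refine (hshift.add ((hasSum_besselSeries (ν + 1) w).mul_left (ν + 1))).unique ?_
  convert hasSum_besselSeries ν w using 2 with n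
  rw [besselCoeff_eq_mul_besselCoeff_add_one ν n]
  ring

lemma besselSeries_zero (ν : ℂ) : besselSeries ν 0 = (Complex.Gamma (ν + 1))⁻¹ := by
  rw [besselSeries, tsum_eq_single 0 fun n hn => by rw [zero_pow hn, mul_zero]]
  simp [besselCoeff]

lemma besselI_eq_cpow_mul_besselSeries (ν : ℂ) {z : ℂ} (hz : z ≠ 0) :
    besselI ν z = (z / 2) ^ ν * besselSeries ν (z ^ 2 / 4) := by
  rw [besselI, besselSeries, ← tsum_mul_left]
  congr with n
  have hpow : (z / 2) ^ (2 * (n : ℂ)) = (z ^ 2 / 4) ^ n := by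
    rw [← Nat.cast_ofNat, ← Nat.cast_mul, Complex.cpow_natCast, pow_mul]
    norm_num [div_pow]
  rw [Complex.cpow_add _ _ (div_ne_zero hz two_ne_zero), hpow, besselCoeff]
  ring

/-! ### Laplace transforms -/

section Laplace

variable {E : Type*} [NormedAddCommGroup E] [NormedSpace ℂ E]

lemma norm_exp_neg_mul_smul_smul_le {w w' : ℂ} {δ t : ℝ} (hδ : 0 < δ) (ht : 0 ≤ t)
    (hw : w'.re + δ ≤ w.re) (v : E) :
    ‖Complex.exp (-w * t) • (t : ℂ) • v‖ ≤ δ⁻¹ * ‖Complex.exp (-w' * t) • v‖ := by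
  have hexp : Real.exp (-w.re * t) * t ≤ δ⁻¹ * Real.exp (-w'.re * t) :=
    calc Real.exp (-w.re * t) * t
        ≤ Real.exp (-w.re * t) * (δ⁻¹ * Real.exp (δ * t)) := by
          gcongr
          rw [le_inv_mul_iff₀ hδ]
          linarith [Real.add_one_le_exp (δ * t)]
      _ = δ⁻¹ * Real.exp ((δ - w.re) * t) := by
          rw [mul_left_comm, ← Real.exp_add]
          ring_nf
      _ ≤ δ⁻¹ * Real.exp (-w'.re * t) := by
          gcongr
          linarith
  calc ‖Complex.exp (-w * t) • (t : ℂ) • v‖ = Real.exp (-w.re * t) * t * ‖v‖ := by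
        simp [norm_smul, Complex.norm_exp, abs_of_nonneg ht, mul_assoc]
    _ ≤ δ⁻¹ * Real.exp (-w'.re * t) * ‖v‖ := by gcongr
    _ = δ⁻¹ * ‖Complex.exp (-w' * t) • v‖ := by
        simp [norm_smul, Complex.norm_exp, mul_assoc]

lemma hasDerivAt_integral_exp_neg_mul_smul {μ : Measure ℝ} {g : ℝ → E} {σ : ℝ} {z : ℂ}
    (hμ : ∀ᵐ t ∂μ, 0 ≤ t)
    (hg : ∀ w : ℂ, σ < w.re → Integrable (fun t : ℝ => Complex.exp (-w * t) • g t) μ)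
    (hz : σ < z.re) :
    Integrable (fun t : ℝ => Complex.exp (-z * t) • (t : ℂ) • g t) μ ∧
      HasDerivAt (fun w => ∫ t : ℝ, Complex.exp (-w * t) • g t ∂μ)
        (-∫ t : ℝ, Complex.exp (-z * t) • (t : ℂ) • g t ∂μ) z := by
  obtain ⟨δ, hδ, hδσ⟩ : ∃ δ : ℝ, 0 < δ ∧ σ < z.re - 2 * δ :=
    ⟨(z.re - σ) / 3, by linarith, by linarith⟩
  have hnhds : {w : ℂ | z.re - δ < w.re} ∈ nhds z :=
    (isOpen_lt continuous_const Complex.continuous_re).mem_nhds (by simpa using hδ)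
  have hmeas : AEStronglyMeasurable (fun t : ℝ => -(Complex.exp (-z * t) • (t : ℂ) • g t)) μ := by
    simp_rw [smul_comm _ (Complex.ofReal _)]
    exact (Complex.continuous_ofReal.aestronglyMeasurable.smul (hg z hz).1).neg
  have hbound : ∀ᵐ t : ℝ ∂μ, ∀ w ∈ {w : ℂ | z.re - δ < w.re},
      ‖-(Complex.exp (-w * t) • (t : ℂ) • g t)‖ ≤
        δ⁻¹ * ‖Complex.exp (-(z - (2 * δ : ℝ)) * t) • g t‖ := by
    filter_upwards [hμ] with t ht w hw
    rw [norm_neg]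
    refine norm_exp_neg_mul_smul_smul_le hδ ht ?_ _
    rw [Complex.sub_re, Complex.ofReal_re]
    linarith [mem_ofPred.mp hw]
  have hderiv (t : ℝ) (w : ℂ) : HasDerivAt (fun w : ℂ => Complex.exp (-w * t) • g t)
      (-(Complex.exp (-w * t) • (t : ℂ) • g t)) w := by
    refine (((hasDerivAt_neg w).mul_const (t : ℂ)).cexp.smul_const (g t)).congr_deriv ?_
    rw [mul_smul, neg_one_mul, neg_smul, smul_neg]
  have hmain := hasDerivAt_integral_of_dominated_loc_of_deriv_le hnhds
    (by filter_upwards [hnhds] with w hw using (hg w (by linarith [mem_ofPred.mp hw])).1)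
    (hg z hz) hmeas hbound ((hg _ (by simpa using hδσ)).norm.const_mul _)
    (ae_of_all _ fun t w _ => hderiv t w)
  rw [integral_neg] at hmain
  exact ⟨by simpa using hmain.1.neg, hmain.2⟩

end Laplace

/-! ### The integral representing `K_ν` -/

/-- The integral `J(a, z) = ∫₁^∞ e^{-zt} (t² - 1)^a dt`, convergent for `Re a > -1`, `Re z > 0`. -/
noncomputable def besselKInt (a z : ℂ) : ℂ :=
  ∫ t in Ioi (1 : ℝ), Complex.exp (-z * (t : ℂ)) * ((t : ℂ) ^ 2 - 1) ^ a

/-- The function whose Mellin transform at `a + 1` is `J(a, z)`, through `u = t² - 1`. -/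
noncomputable def besselKMellinKernel (z : ℂ) (u : ℝ) : ℂ :=
  Complex.exp (-z * √(1 + u)) / (2 * √(1 + u))

lemma continuousOn_besselKMellinKernel (z : ℂ) : ContinuousOn (besselKMellinKernel z) (Ioi 0) := by
  refine ContinuousOn.div (by fun_prop) (by fun_prop) fun u (hu : 0 < u) => ?_
  exact mul_ne_zero two_ne_zero (Complex.ofReal_ne_zero.mpr (by positivity))

lemma norm_besselKMellinKernel_le {z : ℂ} (hz : 0 ≤ z.re) {u : ℝ} (hu : 0 ≤ u) :
    ‖besselKMellinKernel z u‖ ≤ Real.exp (-z.re * √u) := by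
  have hone : 1 ≤ √(1 + u) := Real.one_le_sqrt.mpr (by linarith)
  calc ‖besselKMellinKernel z u‖ = Real.exp (-z.re * √(1 + u)) / (2 * √(1 + u)) := by
        simp [besselKMellinKernel, Complex.norm_exp, abs_of_nonneg (Real.sqrt_nonneg _)]
    _ ≤ Real.exp (-z.re * √(1 + u)) := div_le_self (Real.exp_pos _).le (by linarith)
    _ ≤ Real.exp (-z.re * √u) := by
        simp only [neg_mul]
        gcongr
        linarith

lemma besselKMellinKernel_isBigO_atTop {z : ℂ} (hz : 0 < z.re) (s : ℝ) :
    besselKMellinKernel z =O[atTop] fun u : ℝ => u ^ (-s) := by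
  have hexp : (fun u : ℝ => Real.exp (-z.re * √u)) =O[atTop] fun u : ℝ => √u ^ (-(2 * s)) :=
    ((isLittleO_exp_neg_mul_rpow_atTop hz _).comp_tendsto Real.tendsto_sqrt_atTop).isBigO
  refine .trans (.of_norm_eventuallyLE ?_) (hexp.congr' .rfl ?_)
  · filter_upwards [eventually_ge_atTop 0] with u hu using norm_besselKMellinKernel_le hz.le hu
  · filter_upwards [eventually_ge_atTop 0] with u hu
    rw [Real.sqrt_eq_rpow, ← Real.rpow_mul hu]
    ring_nf

lemma besselKMellinKernel_isBigO_zero {z : ℂ} (hz : 0 < z.re) :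
    besselKMellinKernel z =O[nhdsWithin 0 (Ioi 0)] fun u : ℝ => u ^ (-0 : ℝ) := by
  refine .of_norm_eventuallyLE ?_
  filter_upwards [self_mem_nhdsWithin] with u hu
  rw [neg_zero, Real.rpow_zero]
  refine (norm_besselKMellinKernel_le hz.le (le_of_lt hu)).trans (Real.exp_le_one_iff.mpr ?_)
  rw [neg_mul, neg_nonpos]
  positivity

lemma image_sq_sub_one_Ioi : (fun t : ℝ => t ^ 2 - 1) '' Ioi 1 = Ioi 0 := by
  ext u
  simp only [mem_image, mem_Ioi]
  constructor
  · rintro ⟨t, ht, rfl⟩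
    nlinarith
  · intro hu
    exact ⟨√(1 + u), (Real.lt_sqrt one_pos.le).mpr (by linarith),
      by rw [Real.sq_sqrt (by linarith)]; ring⟩

lemma monotoneOn_sq_sub_one : MonotoneOn (fun t : ℝ => t ^ 2 - 1) (Ioi 1) := by
  intro s (hs : 1 < s) t _ hst
  dsimp only
  gcongr

lemma hasDerivAt_sq_sub_one (t : ℝ) : HasDerivAt (fun t : ℝ => t ^ 2 - 1) (2 * t) t := by
  simpa using (hasDerivAt_pow 2 t).sub_const 1

lemma deriv_smul_besselKMellinKernel_sq_sub_one (a z : ℂ) {t : ℝ} (ht : 0 < t) :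
    (2 * t) • (((t ^ 2 - 1 : ℝ) : ℂ) ^ (a + 1 - 1) • besselKMellinKernel z (t ^ 2 - 1)) =
      Complex.exp (-z * t) * ((t : ℂ) ^ 2 - 1) ^ a := by
  have ht' : (t : ℂ) ≠ 0 := Complex.ofReal_ne_zero.mpr ht.ne'
  rw [besselKMellinKernel, add_sub_cancel, Real.sqrt_sq ht.le, Complex.real_smul, smul_eq_mul,
    add_sub_cancel_right]
  push_cast
  field_simp

lemma besselKInt_eq_mellin (a z : ℂ) :
    besselKInt a z = mellin (besselKMellinKernel z) (a + 1) := by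
  rw [mellin, ← image_sq_sub_one_Ioi, integral_image_eq_integral_deriv_smul_of_monotoneOn
    measurableSet_Ioi (fun t _ => (hasDerivAt_sq_sub_one t).hasDerivWithinAt) monotoneOn_sq_sub_one]
  exact (setIntegral_congr_fun measurableSet_Ioi fun t ht =>
    deriv_smul_besselKMellinKernel_sq_sub_one a z (one_pos.trans ht)).symm

lemma integrableOn_exp_neg_mul_sq_sub_one_cpow {a z : ℂ} (ha : -1 < a.re) (hz : 0 < z.re) :
    IntegrableOn (fun t : ℝ => Complex.exp (-z * t) * ((t : ℂ) ^ 2 - 1) ^ a) (Ioi 1) := by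
  have h : MellinConvergent (besselKMellinKernel z) (a + 1) :=
    mellinConvergent_of_isBigO_rpow
      ((continuousOn_besselKMellinKernel z).locallyIntegrableOn measurableSet_Ioi)
      (besselKMellinKernel_isBigO_atTop hz ((a + 1).re + 1)) (lt_add_one _)
      (besselKMellinKernel_isBigO_zero hz) (by simpa [neg_lt_iff_pos_add] using ha)
  rw [MellinConvergent, ← image_sq_sub_one_Ioi,
    integrableOn_image_iff_integrableOn_deriv_smul_of_monotoneOn measurableSet_Ioi
      (fun t _ => (hasDerivAt_sq_sub_one t).hasDerivWithinAt) monotoneOn_sq_sub_one] at h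
  exact h.congr_fun (fun t ht => deriv_smul_besselKMellinKernel_sq_sub_one a z (one_pos.trans ht))
    measurableSet_Ioi

lemma differentiableAt_besselKInt_order {a z : ℂ} (ha : -1 < a.re) (hz : 0 < z.re) :
    DifferentiableAt ℂ (fun a => besselKInt a z) a := by
  have h : DifferentiableAt ℂ (mellin (besselKMellinKernel z)) (a + 1) :=
    mellin_differentiableAt_of_isBigO_rpow
      ((continuousOn_besselKMellinKernel z).locallyIntegrableOn measurableSet_Ioi)
      (besselKMellinKernel_isBigO_atTop hz ((a + 1).re + 1)) (lt_add_one _)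
      (besselKMellinKernel_isBigO_zero hz) (by simpa [neg_lt_iff_pos_add] using ha)
  simp_rw [besselKInt_eq_mellin]
  exact h.comp (f := fun a => a + 1) a (by fun_prop)

lemma ofReal_sq_sub_one_mem_slitPlane {t : ℝ} (ht : 1 < t) :
    (t : ℂ) ^ 2 - 1 ∈ Complex.slitPlane := by
  rw [show (t : ℂ) ^ 2 - 1 = ((t ^ 2 - 1 : ℝ) : ℂ) by push_cast; ring,
    Complex.ofReal_mem_slitPlane]
  nlinarith

lemma hasDerivAt_exp_neg_mul_sq_sub_one_cpow (a z : ℂ) {t : ℝ} (ht : 1 < t) :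
    HasDerivAt (fun t : ℝ => Complex.exp (-z * t) * ((t : ℂ) ^ 2 - 1) ^ (a + 1))
      (-z * (Complex.exp (-z * t) * ((t : ℂ) ^ 2 - 1) ^ (a + 1)) +
        2 * (a + 1) * (Complex.exp (-z * t) * (t * ((t : ℂ) ^ 2 - 1) ^ a))) t := by
  have hexp := ((hasDerivAt_id (t : ℂ)).const_mul (-z)).cexp
  have hpow := (((hasDerivAt_id (t : ℂ)).pow 2).sub_const 1).cpow_const (c := a + 1)
    (ofReal_sq_sub_one_mem_slitPlane ht)
  refine (hexp.mul hpow).comp_ofReal.congr_deriv ?_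
  simp
  ring

lemma continuous_ofReal_sq_sub_one_cpow {a : ℂ} (ha : 0 < a.re) :
    Continuous fun t : ℝ => ((t : ℂ) ^ 2 - 1) ^ a := by
  have h := (Complex.continuous_ofReal_cpow_const ha).comp
    (f := fun t : ℝ => t ^ 2 - 1) (by fun_prop)
  simpa [Function.comp_def] using h

lemma ae_restrict_Ioi_one_nonneg : ∀ᵐ t : ℝ ∂volume.restrict (Ioi 1), 0 ≤ t :=
  ae_restrict_of_forall_mem measurableSet_Ioi fun _ ht => zero_le_one.trans (le_of_lt ht)

lemma integrableOn_exp_neg_mul_mul_sq_sub_one_cpow {a z : ℂ} (ha : -1 < a.re) (hz : 0 < z.re) :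
    IntegrableOn (fun t : ℝ => Complex.exp (-z * t) * (t * ((t : ℂ) ^ 2 - 1) ^ a)) (Ioi 1) :=
  (hasDerivAt_integral_exp_neg_mul_smul ae_restrict_Ioi_one_nonneg
    (fun _ hw => integrableOn_exp_neg_mul_sq_sub_one_cpow ha hw) hz).1

/-- The boundary terms of `∫₁^∞ d/dt (e^{-zt} (t² - 1)^(a+1)) dt` vanish. -/
lemma mul_besselKInt_add_one {a z : ℂ} (ha : -1 < a.re) (hz : 0 < z.re) :
    z * besselKInt (a + 1) z = 2 * (a + 1) *
      ∫ t in Ioi (1 : ℝ), Complex.exp (-z * t) * (t * ((t : ℂ) ^ 2 - 1) ^ a) := by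
  have ha1 : 0 < (a + 1).re := by simpa [neg_lt_iff_pos_add] using ha
  have hne : a + 1 ≠ 0 := fun h => by simp [h] at ha1
  have hint : IntegrableOn (fun t : ℝ => Complex.exp (-z * t) * ((t : ℂ) ^ 2 - 1) ^ (a + 1))
      (Ioi 1) := integrableOn_exp_neg_mul_sq_sub_one_cpow (by linarith) hz
  have hint' := (integrableOn_exp_neg_mul_mul_sq_sub_one_cpow ha hz).const_mul (2 * (a + 1))
  have hderiv (t : ℝ) (ht : t ∈ Ioi 1) := hasDerivAt_exp_neg_mul_sq_sub_one_cpow a z ht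
  have hcont : Continuous fun t : ℝ => Complex.exp (-z * t) * ((t : ℂ) ^ 2 - 1) ^ (a + 1) :=
    .mul (by fun_prop) (continuous_ofReal_sq_sub_one_cpow ha1)
  have hsum := (hint.const_mul (-z)).add hint'
  have h := integral_Ioi_of_hasDerivAt_of_tendsto hcont.continuousWithinAt hderiv hsum
    (tendsto_zero_of_hasDerivAt_of_integrableOn_Ioi hderiv hsum hint)
  rw [integral_add (hint.const_mul _) hint', integral_const_mul, integral_const_mul,
    Complex.ofReal_one, one_pow, sub_self, Complex.zero_cpow hne] at h
  rw [besselKInt]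
  linear_combination -h

lemma hasDerivAt_besselKInt {a z : ℂ} (ha : -1 < a.re) (hz : 0 < z.re) :
    HasDerivAt (besselKInt a) (-(z / (2 * (a + 1)) * besselKInt (a + 1) z)) z := by
  have hne : a + 1 ≠ 0 := fun h => by simp [add_eq_zero_iff_eq_neg.mp h] at ha
  refine (hasDerivAt_integral_exp_neg_mul_smul ae_restrict_Ioi_one_nonneg
    (fun w hw => integrableOn_exp_neg_mul_sq_sub_one_cpow ha hw) hz).2.congr_deriv ?_
  rw [neg_inj, div_mul_eq_mul_div, eq_div_iff (mul_ne_zero two_ne_zero hne),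
    mul_besselKInt_add_one ha hz, mul_comm]
  rfl

lemma integral_exp_neg_mul_mul_mul_sq_sub_one_cpow {a z : ℂ} (ha : -1 < a.re) (hz : 0 < z.re) :
    ∫ t in Ioi (1 : ℝ), Complex.exp (-z * t) * (t * (t * ((t : ℂ) ^ 2 - 1) ^ a)) =
      besselKInt (a + 1) z + besselKInt a z := by
  rw [besselKInt, besselKInt, ← integral_add
    (integrableOn_exp_neg_mul_sq_sub_one_cpow (by rw [Complex.add_re, Complex.one_re]; linarith) hz)
    (integrableOn_exp_neg_mul_sq_sub_one_cpow ha hz)]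
  refine setIntegral_congr_fun measurableSet_Ioi fun t (ht : 1 < t) => ?_
  rw [Complex.cpow_add _ _ (Complex.slitPlane_ne_zero (ofReal_sq_sub_one_mem_slitPlane ht)),
    Complex.cpow_one]
  ring

/-- Both sides come from the second derivative of `besselKInt a`: differentiating twice under the
integral sign multiplies the integrand by `t² = (t² - 1) + 1`. -/
lemma besselKInt_contiguous {a z : ℂ} (ha : -1 < a.re) (hz : 0 < z.re) :
    z ^ 2 * besselKInt (a + 2) z =
      2 * (a + 2) * ((2 * a + 3) * besselKInt (a + 1) z + 2 * (a + 1) * besselKInt a z) := by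
  have ha1 : -1 < (a + 1).re := by rw [Complex.add_re, Complex.one_re]; linarith
  have hne : a + 2 ≠ 0 := fun h => by simp [add_eq_zero_iff_eq_neg.mp h] at ha
  have hmoment : HasDerivAt
      (fun w => ∫ t in Ioi (1 : ℝ), Complex.exp (-w * t) * (t * ((t : ℂ) ^ 2 - 1) ^ a))
      (-(besselKInt (a + 1) z + besselKInt a z)) z := by
    rw [← integral_exp_neg_mul_mul_mul_sq_sub_one_cpow ha hz]
    exact (hasDerivAt_integral_exp_neg_mul_smul ae_restrict_Ioi_one_nonneg
      (fun w hw => integrableOn_exp_neg_mul_mul_sq_sub_one_cpow ha hw) hz).2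
  have hparts : HasDerivAt (fun w => 2 * (a + 1) *
      ∫ t in Ioi (1 : ℝ), Complex.exp (-w * t) * (t * ((t : ℂ) ^ 2 - 1) ^ a))
      (1 * besselKInt (a + 1) z +
        z * -(z / (2 * (a + 1 + 1)) * besselKInt (a + 1 + 1) z)) z := by
    refine ((hasDerivAt_id z).mul (hasDerivAt_besselKInt ha1 hz)).congr_of_eventuallyEq ?_
    filter_upwards [(isOpen_lt continuous_const Complex.continuous_re).mem_nhds hz] with w hw
    exact (mul_besselKInt_add_one ha hw).symm
  have h := hparts.unique (hmoment.const_mul (2 * (a + 1)))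
  rw [add_assoc, one_add_one_eq_two] at h
  field_simp at h
  linear_combination -h

/-- The function `(z/2)^(-ν) K_ν(z)`, as given by the integral representation. -/
noncomputable def besselKScaled (ν z : ℂ) : ℂ :=
  √π / Complex.Gamma (ν + 1 / 2) * besselKInt (ν - 1 / 2) z

lemma differentiableAt_besselKScaled_order {ν z : ℂ} (hν : -1 / 2 < ν.re) (hz : 0 < z.re) :
    DifferentiableAt ℂ (fun ν => besselKScaled ν z) ν := by
  have hGamma : DifferentiableAt ℂ (fun ν : ℂ => (Complex.Gamma (ν + 1 / 2))⁻¹) ν :=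
    Complex.differentiable_one_div_Gamma.differentiableAt.comp ν (by fun_prop)
  have hint : DifferentiableAt ℂ (fun ν => besselKInt (ν - 1 / 2) z) ν :=
    (differentiableAt_besselKInt_order (by norm_num; linarith) hz).comp (f := fun ν => ν - 1 / 2) ν
      (by fun_prop)
  exact (hGamma.const_mul _).mul hint

lemma hasDerivAt_besselKScaled {ν z : ℂ} (hν : -1 / 2 < ν.re) (hz : 0 < z.re) :
    HasDerivAt (besselKScaled ν) (-(z / 2 * besselKScaled (ν + 1) z)) z := by
  have hne : ν + 1 / 2 ≠ 0 := fun h => by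
    norm_num [add_eq_zero_iff_eq_neg.mp h] at hν
  refine ((hasDerivAt_besselKInt (a := ν - 1 / 2) (by norm_num; linarith) hz).const_mul
    (√π / Complex.Gamma (ν + 1 / 2))).congr_deriv ?_
  rw [besselKScaled, add_right_comm ν, Complex.Gamma_add_one _ hne,
    show ν - 1 / 2 + 1 = ν + 1 / 2 by ring, show ν + 1 - 1 / 2 = ν + 1 / 2 by ring]
  field_simp

lemma besselKScaled_contiguous {ν z : ℂ} (hν : -1 / 2 < ν.re) (hz : 0 < z.re) :
    z ^ 2 / 4 * besselKScaled (ν + 2) z - (ν + 1) * besselKScaled (ν + 1) z =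
      besselKScaled ν z := by
  obtain ⟨a, rfl⟩ : ∃ a, ν = a + 1 / 2 := ⟨ν - 1 / 2, by ring⟩
  have ha : -1 < a.re := by
    norm_num at hν
    linarith
  have hne : a + 1 ≠ 0 := fun h => by simp [add_eq_zero_iff_eq_neg.mp h] at ha
  have hne' : a + 1 + 1 ≠ 0 := fun h => by
    norm_num [add_eq_zero_iff_eq_neg.mp (add_assoc a 1 1 ▸ h)] at ha
  have h := besselKInt_contiguous ha hz
  simp only [besselKScaled, show a + 1 / 2 + 2 - 1 / 2 = a + 2 by ring,
    show a + 1 / 2 + 1 - 1 / 2 = a + 1 by ring, show a + 1 / 2 - 1 / 2 = a by ring,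
    show a + 1 / 2 + 2 + 1 / 2 = a + 1 + 1 + 1 by ring,
    show a + 1 / 2 + 1 + 1 / 2 = a + 1 + 1 by ring, show a + 1 / 2 + 1 / 2 = a + 1 by ring,
    Complex.Gamma_add_one _ hne, Complex.Gamma_add_one _ hne']
  field_simp
  linear_combination 2 * (Complex.Gamma (a + 1))⁻¹ * h

/-! ### Behaviour at the origin -/

lemma cpow_two_mul_ofReal {x : ℝ} (hx : 0 ≤ x) (b : ℂ) : (x : ℂ) ^ (2 * b) = ((x : ℂ) ^ 2) ^ b := by
  have harg := Complex.arg_ofReal_of_nonneg hx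
  exact Complex.cpow_ofNat_mul' (by rw [harg]; simpa using Real.pi_pos)
    (by rw [harg]; simpa using Real.pi_pos.le) b

lemma image_inv_sq_Ioi : (fun t : ℝ => (t ^ 2)⁻¹) '' Ioi 1 = Ioo 0 1 := by
  ext u
  simp only [mem_image, mem_Ioi, mem_Ioo]
  constructor
  · rintro ⟨t, ht, rfl⟩
    exact ⟨by positivity, inv_lt_one_of_one_lt₀ (by nlinarith)⟩
  · rintro ⟨hu0, hu1⟩
    refine ⟨√u⁻¹, (Real.lt_sqrt one_pos.le).mpr ?_, by rw [Real.sq_sqrt (by positivity), inv_inv]⟩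
    rw [one_pow]
    exact (one_lt_inv₀ hu0).mpr hu1

lemma antitoneOn_inv_sq : AntitoneOn (fun t : ℝ => (t ^ 2)⁻¹) (Ioi 1) := by
  intro s (hs : 1 < s) t _ hst
  dsimp only
  gcongr

lemma hasDerivAt_inv_sq {t : ℝ} (ht : t ≠ 0) :
    HasDerivAt (fun t : ℝ => (t ^ 2)⁻¹) (-2 * (t ^ 3)⁻¹) t := by
  refine ((hasDerivAt_pow 2 t).inv (pow_ne_zero 2 ht)).congr_deriv ?_
  field_simp
  ring

lemma neg_deriv_smul_betaIntegrand_inv_sq (a : ℂ) {t : ℝ} (ht : 1 < t) :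
    (-(-2 * (t ^ 3)⁻¹)) • ((((t ^ 2)⁻¹ : ℝ) : ℂ) ^ (-a - 1 / 2 - 1) *
      (1 - (((t ^ 2)⁻¹ : ℝ) : ℂ)) ^ (a + 1 - 1)) = 2 * ((t : ℂ) ^ 2 - 1) ^ a := by
  have ht0 : 0 < t := by linarith
  have ht' : (t : ℂ) ≠ 0 := Complex.ofReal_ne_zero.mpr ht0.ne'
  have hone_sub : 1 - (((t ^ 2)⁻¹ : ℝ) : ℂ) = ((t ^ 2 - 1 : ℝ) : ℂ) * (((t ^ 2)⁻¹ : ℝ) : ℂ) := by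
    push_cast
    field_simp
  have hpow : (((t ^ 2)⁻¹ : ℝ) : ℂ) ^ (-a - 1 / 2 - 1) * (((t ^ 2)⁻¹ : ℝ) : ℂ) ^ a =
      (t : ℂ) ^ 3 := by
    rw [← Complex.cpow_add _ _ (by simpa using ht'), ← inv_pow, Complex.ofReal_pow,
      ← cpow_two_mul_ofReal (by positivity), show 2 * (-a - 1 / 2 - 1 + a) = -(3 : ℕ) by
      push_cast; ring, Complex.cpow_neg, Complex.cpow_natCast, Complex.ofReal_inv, inv_pow, inv_inv]
  rw [add_sub_cancel_right, hone_sub, Complex.mul_cpow_ofReal_nonneg (by nlinarith) (by positivity),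
    mul_left_comm, hpow, Complex.real_smul]
  push_cast
  field_simp

lemma integrableOn_sq_sub_one_cpow {a : ℂ} (ha : -1 < a.re) (ha' : a.re < -1 / 2) :
    IntegrableOn (fun t : ℝ => ((t : ℂ) ^ 2 - 1) ^ a) (Ioi 1) := by
  have h := Complex.betaIntegral_convergent (u := -a - 1 / 2) (v := a + 1)
    (by norm_num; linarith) (by norm_num; linarith)
  rw [intervalIntegrable_iff_integrableOn_Ioo_of_le zero_le_one, ← image_inv_sq_Ioi,
    integrableOn_image_iff_integrableOn_deriv_smul_of_antitoneOn measurableSet_Ioi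
      (fun t ht => (hasDerivAt_inv_sq (one_pos.trans ht).ne').hasDerivWithinAt)
      antitoneOn_inv_sq] at h
  exact (integrable_const_mul_iff (IsUnit.mk0 2 two_ne_zero) _).mp
    (h.congr_fun (fun t ht => neg_deriv_smul_betaIntegrand_inv_sq a ht) measurableSet_Ioi)

lemma two_mul_integral_sq_sub_one_cpow (a : ℂ) :
    2 * ∫ t in Ioi (1 : ℝ), ((t : ℂ) ^ 2 - 1) ^ a = Complex.betaIntegral (-a - 1 / 2) (a + 1) := by
  rw [Complex.betaIntegral, intervalIntegral.integral_of_le zero_le_one,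
    integral_Ioc_eq_integral_Ioo, ← image_inv_sq_Ioi,
    integral_image_eq_integral_deriv_smul_of_antitoneOn measurableSet_Ioi
      (fun t ht => (hasDerivAt_inv_sq (one_pos.trans ht).ne').hasDerivWithinAt) antitoneOn_inv_sq,
    setIntegral_congr_fun measurableSet_Ioi fun t ht => neg_deriv_smul_betaIntegrand_inv_sq a ht,
    integral_const_mul]

lemma tendsto_besselKInt_zero {a : ℂ} (ha : -1 < a.re) (ha' : a.re < -1 / 2) :
    Tendsto (fun x : ℝ => besselKInt a x) (nhdsWithin 0 (Ioi 0))
      (nhds (∫ t in Ioi (1 : ℝ), ((t : ℂ) ^ 2 - 1) ^ a)) := by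
  have hint := integrableOn_sq_sub_one_cpow ha ha'
  refine tendsto_integral_filter_of_dominated_convergence (fun t => ‖((t : ℂ) ^ 2 - 1) ^ a‖)
    (.of_forall fun x => .mul (by fun_prop) hint.1) ?_ hint.norm (ae_of_all _ fun t => ?_)
  · filter_upwards [self_mem_nhdsWithin] with x (hx : 0 < x)
    filter_upwards [ae_restrict_Ioi_one_nonneg] with t ht
    rw [norm_mul]
    refine mul_le_of_le_one_left (norm_nonneg _) ?_
    simpa [Complex.norm_exp] using by positivity
  · have hcont : Continuous fun x : ℝ => Complex.exp (-x * t) * ((t : ℂ) ^ 2 - 1) ^ a := by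
      fun_prop
    simpa using (hcont.tendsto 0).mono_left nhdsWithin_le_nhds

lemma tendsto_besselKScaled_zero {ν : ℂ} (hν : -1 / 2 < ν.re) (hν' : ν.re < 0) :
    Tendsto (fun x : ℝ => besselKScaled ν x) (nhdsWithin 0 (Ioi 0))
      (nhds (Complex.Gamma (-ν) / 2)) := by
  have hν₁ : 0 < (ν + 1 / 2).re := by norm_num; linarith
  have hGamma : Complex.Gamma (ν + 1 / 2) ≠ 0 := Complex.Gamma_ne_zero_of_re_pos hν₁
  have hbeta := Complex.Gamma_mul_Gamma_eq_betaIntegral (s := -ν) (t := ν + 1 / 2)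
    (by simpa using hν') hν₁
  have hval := two_mul_integral_sq_sub_one_cpow (ν - 1 / 2)
  rw [show -(ν - 1 / 2) - 1 / 2 = -ν by ring, show ν - 1 / 2 + 1 = ν + 1 / 2 by ring] at hval
  rw [neg_add_cancel_left, Complex.Gamma_one_half_eq, ← hval] at hbeta
  have hlim : Complex.Gamma (-ν) / 2 = √π / Complex.Gamma (ν + 1 / 2) *
      ∫ t in Ioi (1 : ℝ), ((t : ℂ) ^ 2 - 1) ^ (ν - 1 / 2) := by
    rw [div_mul_eq_mul_div, eq_div_iff hGamma, Real.sqrt_eq_rpow,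
      Complex.ofReal_cpow Real.pi_pos.le]
    push_cast
    linear_combination hbeta / 2
  rw [hlim]
  exact (tendsto_besselKInt_zero (by norm_num; linarith) (by norm_num; linarith)).const_mul _

/-- The substitution `s = x t`. -/
lemma cpow_mul_besselKInt (b : ℂ) {x : ℝ} (hx : 0 < x) :
    (x : ℂ) ^ (2 * b + 1) * besselKInt b x = ∫ s in Ioi (0 : ℝ),
      (Ioi x).indicator (fun s : ℝ => Complex.exp (-s) * ((s ^ 2 - x ^ 2 : ℝ) : ℂ) ^ b) s := by
  have hx' : (x : ℂ) ≠ 0 := Complex.ofReal_ne_zero.mpr hx.ne'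
  have hscale : EqOn (fun t : ℝ => Complex.exp (-(x * t : ℝ)) *
      (((x * t) ^ 2 - x ^ 2 : ℝ) : ℂ) ^ b)
      (fun t : ℝ => (x : ℂ) ^ (2 * b) * (Complex.exp (-x * t) * ((t : ℂ) ^ 2 - 1) ^ b))
      (Ioi 1) := by
    intro t (ht : 1 < t)
    dsimp only
    rw [show (x * t) ^ 2 - x ^ 2 = x ^ 2 * (t ^ 2 - 1) by ring,
      Complex.ofReal_mul (x ^ 2),
      Complex.mul_cpow_ofReal_nonneg (by positivity) (by nlinarith), Complex.ofReal_pow x,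
      ← cpow_two_mul_ofReal hx.le]
    push_cast
    ring_nf
  have h := integral_comp_mul_left_Ioi
    (fun s : ℝ => Complex.exp (-s) * ((s ^ 2 - x ^ 2 : ℝ) : ℂ) ^ b) 1 hx
  rw [setIntegral_congr_fun measurableSet_Ioi hscale, integral_const_mul, ← besselKInt, mul_one,
    Complex.real_smul, Complex.ofReal_inv, eq_inv_mul_iff_mul_eq₀ hx'] at h
  rw [setIntegral_indicator measurableSet_Ioi, Ioi_inter_Ioi, sup_of_le_right hx.le, ← h,
    Complex.cpow_add _ _ hx', Complex.cpow_one]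
  ring

lemma norm_indicator_exp_neg_mul_cpow_le {b : ℂ} (hb : 0 ≤ b.re) {x s : ℝ} (hx : 0 < x)
    (hs : 0 < s) :
    ‖(Ioi x).indicator (fun s : ℝ => Complex.exp (-s) * ((s ^ 2 - x ^ 2 : ℝ) : ℂ) ^ b) s‖ ≤
      Real.exp (-s) * s ^ (2 * b.re) := by
  by_cases hxs : x < s
  · have hpos : 0 < s ^ 2 - x ^ 2 := by nlinarith
    rw [indicator_of_mem (mem_Ioi.mpr hxs), norm_mul, Complex.norm_cpow_eq_rpow_re_of_pos hpos,
      Real.rpow_mul hs.le, Real.rpow_two, ← Complex.ofReal_neg, Complex.norm_exp_ofReal]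
    gcongr
    nlinarith
  · rw [indicator_of_notMem (by simpa using hxs), norm_zero]
    positivity

lemma tendsto_indicator_exp_neg_mul_cpow (b : ℂ) {s : ℝ} (hs : 0 < s) :
    Tendsto (fun x : ℝ => (Ioi x).indicator
        (fun s : ℝ => Complex.exp (-s) * ((s ^ 2 - x ^ 2 : ℝ) : ℂ) ^ b) s)
      (nhdsWithin 0 (Ioi 0)) (nhds (Complex.exp (-s) * (s : ℂ) ^ (2 * b))) := by
  have hcont : ContinuousAt
      (fun x : ℝ => Complex.exp (-s) * ((s ^ 2 - x ^ 2 : ℝ) : ℂ) ^ b) 0 :=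
    .mul continuousAt_const <| .cpow (by fun_prop) continuousAt_const <| by
      rw [zero_pow two_ne_zero, sub_zero]
      exact Complex.ofReal_mem_slitPlane.mpr (by positivity)
  have h := hcont.tendsto.mono_left (nhdsWithin_le_nhds (s := Ioi 0))
  rw [zero_pow two_ne_zero, sub_zero, Complex.ofReal_pow, ← cpow_two_mul_ofReal hs.le] at h
  refine h.congr' ?_
  filter_upwards [Ioo_mem_nhdsGT hs] with x hx
  rw [indicator_of_mem (mem_Ioi.mpr hx.2)]

lemma tendsto_cpow_mul_besselKInt_zero {b : ℂ} (hb : 0 ≤ b.re) :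
    Tendsto (fun x : ℝ => (x : ℂ) ^ (2 * b + 1) * besselKInt b x) (nhdsWithin 0 (Ioi 0))
      (nhds (Complex.Gamma (2 * b + 1))) := by
  have hint := Real.GammaIntegral_convergent (s := 2 * b.re + 1) (by linarith)
  rw [add_sub_cancel_right] at hint
  have hGamma : Complex.Gamma (2 * b + 1) =
      ∫ s in Ioi (0 : ℝ), Complex.exp (-s) * (s : ℂ) ^ (2 * b) := by
    rw [Complex.Gamma_eq_integral (by norm_num; linarith), Complex.GammaIntegral]
    simp
  rw [hGamma]
  refine Tendsto.congr'
    (eventually_nhdsWithin_of_forall fun x hx => (cpow_mul_besselKInt b hx).symm)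
    (tendsto_integral_filter_of_dominated_convergence _ (.of_forall fun x => ?_) ?_ hint ?_)
  · exact (Measurable.indicator (by fun_prop) measurableSet_Ioi).aestronglyMeasurable
  · exact eventually_nhdsWithin_of_forall fun x hx => ae_restrict_of_forall_mem measurableSet_Ioi
      fun s hs => norm_indicator_exp_neg_mul_cpow_le hb hx hs
  · exact ae_restrict_of_forall_mem measurableSet_Ioi fun s hs =>
      tendsto_indicator_exp_neg_mul_cpow b hs

lemma tendsto_cpow_mul_besselKScaled_zero {ν : ℂ} (hν : 1 / 2 ≤ ν.re) :
    Tendsto (fun x : ℝ => (x / 2 : ℂ) ^ (2 * ν) * besselKScaled ν x) (nhdsWithin 0 (Ioi 0))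
      (nhds (Complex.Gamma ν / 2)) := by
  have hGamma : Complex.Gamma (ν + 1 / 2) ≠ 0 :=
    Complex.Gamma_ne_zero_of_re_pos (by norm_num; linarith)
  have htwo : (2 : ℂ) ^ (2 * ν) ≠ 0 := by simp [Complex.cpow_eq_zero_iff]
  have hlim : Complex.Gamma ν / 2 =
      √π / Complex.Gamma (ν + 1 / 2) / 2 ^ (2 * ν) * Complex.Gamma (2 * ν) := by
    have hpow : (2 : ℂ) ^ (1 - 2 * ν) * 2 ^ (2 * ν) = 2 := by
      rw [← Complex.cpow_add _ _ two_ne_zero, sub_add_cancel, Complex.cpow_one]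
    rw [div_div, div_mul_eq_mul_div, eq_div_iff (mul_ne_zero hGamma htwo)]
    linear_combination (2 : ℂ) ^ (2 * ν) / 2 * Complex.Gamma_mul_Gamma_add_half ν +
      Complex.Gamma (2 * ν) * √π / 2 * hpow
  have h := (tendsto_cpow_mul_besselKInt_zero (b := ν - 1 / 2) (by norm_num; linarith)).const_mul
    (√π / Complex.Gamma (ν + 1 / 2) / 2 ^ (2 * ν))
  rw [show 2 * (ν - 1 / 2) + 1 = 2 * ν by ring, ← hlim] at h
  refine h.congr' (eventually_nhdsWithin_of_forall fun x (hx : 0 < x) => ?_)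
  have hdiv := Complex.div_cpow_ofReal_nonneg hx.le two_pos.le (2 * ν)
  rw [Complex.ofReal_ofNat] at hdiv
  simp only [besselKScaled, hdiv]
  ring

/-! ### Solutions determined by their limits at the origin -/

section Gronwall

variable {E : Type*} [NormedAddCommGroup E] [NormedSpace ℝ E]
  {y y' : ℝ → E} {k K : ℝ → ℝ} {a b : ℝ}

lemma norm_le_mul_exp_sub_of_norm_deriv_right_le
    (hy : ContinuousOn y (Icc a b)) (hy' : ∀ x ∈ Ico a b, HasDerivWithinAt y (y' x) (Ici x) x)
    (hK : ContinuousOn K (Icc a b)) (hK' : ∀ x ∈ Ico a b, HasDerivWithinAt K (k x) (Ici x) x)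
    (hbound : ∀ x ∈ Ico a b, ‖y' x‖ ≤ k x * ‖y x‖) (hab : a ≤ b) :
    ‖y b‖ ≤ ‖y a‖ * Real.exp (K b - K a) := by
  have hε : ∀ ε > 0, ‖y b‖ ≤ (‖y a‖ + ε) * Real.exp (K b - K a + ε * (b - a)) := by
    intro ε hε
    refine image_norm_le_of_norm_deriv_right_lt_deriv_boundary' hy hy'
      (B := fun x => (‖y a‖ + ε) * Real.exp (K x - K a + ε * (x - a)))
      (B' := fun x => (k x + ε) * ((‖y a‖ + ε) * Real.exp (K x - K a + ε * (x - a))))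
      (by simpa using hε.le) (by fun_prop) (fun x hx => ?_) (fun x hx heq => ?_) ⟨hab, le_rfl⟩
    · have hexponent : HasDerivWithinAt (fun x => K x - K a + ε * (x - a)) (k x + ε) (Ici x) x := by
        exact (((hK' x hx).sub_const _).add
          (((hasDerivWithinAt_id x _).sub_const a).const_mul ε)).congr_deriv (by rw [mul_one])
      exact (hexponent.exp.const_mul _).congr_deriv (by ring)
    · have hpos : 0 < ‖y x‖ := heq ▸ by positivity
      calc ‖y' x‖ ≤ k x * ‖y x‖ := hbound x hx
        _ < (k x + ε) * ‖y x‖ := by gcongr; linarith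
        _ = _ := by rw [heq]
  have hlim : Tendsto (fun ε => (‖y a‖ + ε) * Real.exp (K b - K a + ε * (b - a)))
      (nhdsWithin 0 (Ioi 0)) (nhds (‖y a‖ * Real.exp (K b - K a))) := by
    have hcont : Continuous fun ε => (‖y a‖ + ε) * Real.exp (K b - K a + ε * (b - a)) := by
      fun_prop
    simpa using (hcont.tendsto 0).mono_left nhdsWithin_le_nhds
  exact ge_of_tendsto hlim (eventually_nhdsWithin_of_forall hε)

lemma eq_zero_of_norm_deriv_le_of_tendsto_zero
    (hy : ∀ x ∈ Ioi a, HasDerivAt y (y' x) x) (hlim : Tendsto y (nhdsWithin a (Ioi a)) (nhds 0))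
    (hK : ContinuousWithinAt K (Ioi a) a) (hK' : ∀ x ∈ Ioi a, HasDerivAt K (k x) x)
    (hbound : ∀ x ∈ Ioi a, ‖y' x‖ ≤ k x * ‖y x‖) (hb : a < b) : y b = 0 := by
  have hle : ∀ᶠ c in nhdsWithin a (Ioi a), ‖y b‖ ≤ ‖y c‖ * Real.exp (K b - K c) := by
    filter_upwards [Ioo_mem_nhdsGT hb] with c ⟨hac, hcb⟩
    have hgt {x : ℝ} (hx : c ≤ x) : x ∈ Ioi a := hac.trans_le hx
    exact norm_le_mul_exp_sub_of_norm_deriv_right_le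
      (fun x hx => (hy x (hgt hx.1)).continuousAt.continuousWithinAt)
      (fun x hx => (hy x (hgt hx.1)).hasDerivWithinAt)
      (fun x hx => (hK' x (hgt hx.1)).continuousAt.continuousWithinAt)
      (fun x hx => (hK' x (hgt hx.1)).hasDerivWithinAt)
      (fun x hx => hbound x (hgt hx.1)) hcb.le
  have h := ge_of_tendsto (hlim.norm.mul (tendsto_const_nhds.sub hK).rexp) hle
  simpa using h

end Gronwall

lemma hasDerivAt_two_div_mul_div_two_rpow {r x : ℝ} (hr : r + 1 ≠ 0) (hx : x ≠ 0) :
    HasDerivAt (fun x : ℝ => 2 / (r + 1) * (x / 2) ^ (r + 1)) ((x / 2) ^ r) x := by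
  refine ((((hasDerivAt_id x).div_const 2).rpow_const (Or.inl (by simpa))).const_mul
    (2 / (r + 1))).congr_deriv ?_
  rw [add_sub_cancel_right, id]
  field_simp

/-- A solution on the right half plane of the equation satisfied by `(z/2)^(-ν) I_ν(z)` and
`(z/2)^(-ν) K_ν(z)`, written as a first-order system for `f` and `p = (z/2)^(2ν+1) f'`. The
coefficients of this system are integrable at the origin for `-1 < Re ν < 0`. -/
structure IsModifiedBesselPair (ν : ℂ) (f p : ℂ → ℂ) : Prop where
  hasDerivAt_fst : ∀ ⦃z : ℂ⦄, 0 < z.re → HasDerivAt f ((z / 2) ^ (-(2 * ν + 1)) * p z) z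
  hasDerivAt_snd : ∀ ⦃z : ℂ⦄, 0 < z.re → HasDerivAt p ((z / 2) ^ (2 * ν + 1) * f z) z

namespace IsModifiedBesselPair

variable {ν : ℂ} {f p g q : ℂ → ℂ}

lemma const_mul (h : IsModifiedBesselPair ν f p) (c : ℂ) :
    IsModifiedBesselPair ν (fun z => c * f z) fun z => c * p z where
  hasDerivAt_fst _ hz := ((h.hasDerivAt_fst hz).const_mul c).congr_deriv (by ring)
  hasDerivAt_snd _ hz := ((h.hasDerivAt_snd hz).const_mul c).congr_deriv (by ring)

lemma sub (h : IsModifiedBesselPair ν f p) (h' : IsModifiedBesselPair ν g q) :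
    IsModifiedBesselPair ν (fun z => f z - g z) fun z => p z - q z where
  hasDerivAt_fst _ hz := ((h.hasDerivAt_fst hz).sub (h'.hasDerivAt_fst hz)).congr_deriv (by ring)
  hasDerivAt_snd _ hz := ((h.hasDerivAt_snd hz).sub (h'.hasDerivAt_snd hz)).congr_deriv (by ring)

lemma swap (h : IsModifiedBesselPair ν f p) : IsModifiedBesselPair (-ν - 1) p f where
  hasDerivAt_fst z hz := by
    rw [show -(2 * (-ν - 1) + 1) = 2 * ν + 1 by ring]
    exact h.hasDerivAt_snd hz
  hasDerivAt_snd z hz := by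
    rw [show 2 * (-ν - 1) + 1 = -(2 * ν + 1) by ring]
    exact h.hasDerivAt_fst hz

lemma of_hasDerivAt {g₁ g₂ : ℂ → ℂ} (hf : ∀ ⦃z : ℂ⦄, 0 < z.re → HasDerivAt f (z / 2 * g₁ z) z)
    (hg₁ : ∀ ⦃z : ℂ⦄, 0 < z.re → HasDerivAt g₁ (z / 2 * g₂ z) z)
    (hcontiguous : ∀ ⦃z : ℂ⦄, 0 < z.re → z ^ 2 / 4 * g₂ z + (ν + 1) * g₁ z = f z) :
    IsModifiedBesselPair ν f fun z => (z / 2) ^ (2 * ν + 2) * g₁ z where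
  hasDerivAt_fst z hz := by
    have hz' : z / 2 ≠ 0 := fun h => by simp_all
    refine (hf hz).congr_deriv ?_
    rw [← mul_assoc, ← Complex.cpow_add _ _ hz', show -(2 * ν + 1) + (2 * ν + 2) = 1 by ring,
      Complex.cpow_one]
  hasDerivAt_snd z hz := by
    have hz' : z / 2 ≠ 0 := fun h => by simp_all
    have hslit : z / 2 ∈ Complex.slitPlane := Or.inl (by simpa using hz)
    refine ((((hasDerivAt_id z).div_const 2).cpow_const hslit).mul (hg₁ hz)).congr_deriv ?_
    rw [id, ← hcontiguous hz, show 2 * ν + 2 - 1 = 2 * ν + 1 by ring,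
      show 2 * ν + 2 = 2 * ν + 1 + 1 by ring, Complex.cpow_add (2 * ν + 1) 1 hz', Complex.cpow_one]
    ring

lemma apply_ofReal_eq_zero (h : IsModifiedBesselPair ν f p) (hν : -1 < ν.re) (hν' : ν.re < 0)
    (hf : Tendsto (fun x : ℝ => f x) (nhdsWithin 0 (Ioi 0)) (nhds 0))
    (hp : Tendsto (fun x : ℝ => p x) (nhdsWithin 0 (Ioi 0)) (nhds 0)) {x : ℝ} (hx : 0 < x) :
    f x = 0 := by
  set c : ℝ := 2 * ν.re + 1 with hc
  have hnorm (s : ℂ) {x : ℝ} (hx : 0 < x) : ‖(x / 2 : ℂ) ^ s‖ = (x / 2) ^ s.re := by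
    have hx2 : (x / 2 : ℂ) = ((x / 2 : ℝ) : ℂ) := by push_cast; rfl
    rw [hx2, Complex.norm_cpow_eq_rpow_re_of_pos (by positivity)]
  have hy : ∀ x ∈ Ioi (0 : ℝ), HasDerivAt (fun x : ℝ => (f x, p x))
      ((x / 2 : ℂ) ^ (-(2 * ν + 1)) * p x, (x / 2 : ℂ) ^ (2 * ν + 1) * f x) x := fun x hx =>
    (h.hasDerivAt_fst (by simpa using hx)).comp_ofReal.prodMk
      (h.hasDerivAt_snd (by simpa using hx)).comp_ofReal
  have hzero := eq_zero_of_norm_deriv_le_of_tendsto_zero (E := ℂ × ℂ)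
    (k := fun x => (x / 2) ^ (-c) + (x / 2) ^ c)
    (K := fun x => 2 / (-c + 1) * (x / 2) ^ (-c + 1) + 2 / (c + 1) * (x / 2) ^ (c + 1))
    hy (hf.prodMk_nhds hp) ?_ (fun x hx => ?_) (fun x hx => ?_) hx
  · exact (Prod.mk.inj hzero).1
  · refine Continuous.continuousWithinAt ?_
    have h1 : 0 ≤ -c + 1 := by linarith
    have h2 : 0 ≤ c + 1 := by linarith
    fun_prop (disch := assumption)
  · exact (hasDerivAt_two_div_mul_div_two_rpow (by linarith) (ne_of_gt hx)).add
      (hasDerivAt_two_div_mul_div_two_rpow (by linarith) (ne_of_gt hx))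
  · have hx2 : 0 ≤ x / 2 := (half_pos hx).le
    have hre : (2 * ν + 1).re = c := by simp [hc]
    rw [Prod.norm_mk, norm_mul, norm_mul, hnorm _ hx, hnorm _ hx, Complex.neg_re, hre]
    refine max_le ?_ ?_ <;> gcongr
    · exact le_add_of_nonneg_right (by positivity)
    · exact le_max_right _ _
    · exact le_add_of_nonneg_left (by positivity)
    · exact le_max_left _ _

lemma eq_zero (h : IsModifiedBesselPair ν f p) (hν : -1 < ν.re) (hν' : ν.re < 0)
    (hf : Tendsto (fun x : ℝ => f x) (nhdsWithin 0 (Ioi 0)) (nhds 0))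
    (hp : Tendsto (fun x : ℝ => p x) (nhdsWithin 0 (Ioi 0)) (nhds 0)) {z : ℂ} (hz : 0 < z.re) :
    f z = 0 := by
  have hanalytic : AnalyticOnNhd ℂ f {z | 0 < z.re} :=
    DifferentiableOn.analyticOnNhd
      (fun z hz => (h.hasDerivAt_fst hz).differentiableAt.differentiableWithinAt)
      (isOpen_lt continuous_const Complex.continuous_re)
  have hzero : ∃ᶠ z in nhdsWithin (1 : ℂ) {1}ᶜ, f z = 0 := by
    have hofReal : Tendsto ((↑) : ℝ → ℂ) (nhdsWithin 1 {1}ᶜ) (nhdsWithin 1 {1}ᶜ) :=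
      Complex.ofRealCLM.hasDerivAt.tendsto_nhdsNE (by simp)
    refine hofReal.frequently (Eventually.frequently ?_)
    filter_upwards [mem_nhdsWithin_of_mem_nhds (Ioi_mem_nhds one_pos)] with x hx
    exact h.apply_ofReal_eq_zero hν hν' hf hp hx
  exact hanalytic.eqOn_zero_of_preconnected_of_frequently_eq_zero
    (convex_halfSpace_re_gt 0).isPreconnected (by simp) hzero hz

end IsModifiedBesselPair

/-! ### The connection formula -/

lemma isModifiedBesselPair_besselKScaled {ν : ℂ} (hν : -1 / 2 < ν.re) :
    IsModifiedBesselPair ν (besselKScaled ν)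
      fun z => (z / 2) ^ (2 * ν + 2) * -besselKScaled (ν + 1) z := by
  have hν₁ : -1 / 2 < (ν + 1).re := by
    rw [Complex.add_re, Complex.one_re]
    linarith
  refine .of_hasDerivAt (g₂ := besselKScaled (ν + 2)) (fun z hz => ?_) (fun z hz => ?_)
    fun z hz => ?_
  · exact (hasDerivAt_besselKScaled hν hz).congr_deriv (by ring)
  · exact (hasDerivAt_besselKScaled hν₁ hz).neg.congr_deriv (by rw [add_assoc, neg_neg]; norm_num)
  · rw [mul_neg, ← sub_eq_add_neg, besselKScaled_contiguous hν hz]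

lemma hasDerivAt_besselSeries_sq_div_four (ν z : ℂ) :
    HasDerivAt (fun z => besselSeries ν (z ^ 2 / 4)) (z / 2 * besselSeries (ν + 1) (z ^ 2 / 4))
      z := by
  refine ((hasDerivAt_besselSeries ν _).comp z ((hasDerivAt_pow 2 z).div_const 4)).congr_deriv ?_
  ring

lemma isModifiedBesselPair_besselSeries (ν : ℂ) :
    IsModifiedBesselPair ν (fun z => besselSeries ν (z ^ 2 / 4))
      fun z => (z / 2) ^ (2 * ν + 2) * besselSeries (ν + 1) (z ^ 2 / 4) := by
  refine .of_hasDerivAt (g₂ := fun z => besselSeries (ν + 2) (z ^ 2 / 4))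
    (fun z _ => hasDerivAt_besselSeries_sq_div_four ν z) (fun z _ => ?_)
    fun z _ => besselSeries_contiguous ν _
  simpa only [add_assoc, one_add_one_eq_two] using hasDerivAt_besselSeries_sq_div_four (ν + 1) z

lemma isModifiedBesselPair_cpow_mul_besselSeries_neg (ν : ℂ) :
    IsModifiedBesselPair ν (fun z => (z / 2) ^ (-(2 * ν)) * besselSeries (-ν) (z ^ 2 / 4))
      fun z => besselSeries (-ν - 1) (z ^ 2 / 4) := by
  have h := (isModifiedBesselPair_besselSeries (-ν - 1)).swap
  rw [sub_add_cancel, show 2 * (-ν - 1) + 2 = -(2 * ν) by ring,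
    show -(-ν - 1) - 1 = ν by ring] at h
  exact h

lemma tendsto_besselSeries_sq_div_four (ν : ℂ) :
    Tendsto (fun x : ℝ => besselSeries ν ((x : ℂ) ^ 2 / 4)) (nhdsWithin 0 (Ioi 0))
      (nhds (Complex.Gamma (ν + 1))⁻¹) := by
  have hcont : Continuous fun x : ℝ => besselSeries ν ((x : ℂ) ^ 2 / 4) :=
    (continuous_iff_continuousAt.mpr fun w => (hasDerivAt_besselSeries ν w).continuousAt).comp
      (by fun_prop)
  simpa [besselSeries_zero] using (hcont.tendsto 0).mono_left nhdsWithin_le_nhds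

lemma tendsto_cpow_mul_besselSeries_sq_div_four {s : ℂ} (hs : 0 < s.re) (ν : ℂ) :
    Tendsto (fun x : ℝ => (x / 2 : ℂ) ^ s * besselSeries ν ((x : ℂ) ^ 2 / 4))
      (nhdsWithin 0 (Ioi 0)) (nhds 0) := by
  have hcont : Continuous fun x : ℝ => (x / 2 : ℂ) ^ s :=
    ((Complex.continuous_ofReal_cpow_const hs).comp (continuous_id.div_const 2)).congr
      fun x => by simp
  have hs0 : s ≠ 0 := fun h => by simp [h] at hs
  have hpow : Tendsto (fun x : ℝ => (x / 2 : ℂ) ^ s) (nhdsWithin 0 (Ioi 0)) (nhds 0) := by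
    simpa [Complex.zero_cpow hs0] using (hcont.tendsto 0).mono_left nhdsWithin_le_nhds
  simpa using hpow.mul (tendsto_besselSeries_sq_div_four ν)

lemma besselKScaled_eq_Gamma_mul_sub {ν z : ℂ} (hν : -1 / 2 < ν.re) (hν' : ν.re < 0)
    (hz : 0 < z.re) :
    besselKScaled ν z = Complex.Gamma (-ν) * Complex.Gamma (ν + 1) / 2 *
      (besselSeries ν (z ^ 2 / 4) - (z / 2) ^ (-(2 * ν)) * besselSeries (-ν) (z ^ 2 / 4)) := by
  have hGamma : Complex.Gamma (ν + 1) ≠ 0 := Complex.Gamma_ne_zero_of_re_pos (by simp; linarith)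
  have hGamma' : Complex.Gamma (-ν) ≠ 0 := Complex.Gamma_ne_zero_of_re_pos (by simpa)
  have hpair := (isModifiedBesselPair_besselKScaled hν).sub
    (((isModifiedBesselPair_besselSeries ν).sub
      (isModifiedBesselPair_cpow_mul_besselSeries_neg ν)).const_mul
        (Complex.Gamma (-ν) * Complex.Gamma (ν + 1) / 2))
  refine sub_eq_zero.mp (hpair.eq_zero (by linarith) hν' ?_ ?_ hz)
  · have hlim := (tendsto_besselKScaled_zero hν hν').sub
      (((tendsto_besselSeries_sq_div_four ν).sub (tendsto_cpow_mul_besselSeries_sq_div_four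
        (s := -(2 * ν)) (by simp; linarith) (-ν))).const_mul
          (Complex.Gamma (-ν) * Complex.Gamma (ν + 1) / 2))
    rw [show Complex.Gamma (-ν) / 2 - Complex.Gamma (-ν) * Complex.Gamma (ν + 1) / 2 *
      ((Complex.Gamma (ν + 1))⁻¹ - 0) = 0 by rw [sub_zero]; field_simp; ring] at hlim
    exact hlim
  · have hlim := (tendsto_cpow_mul_besselKScaled_zero (ν := ν + 1) (by simp; linarith)).neg.sub
      (((tendsto_cpow_mul_besselSeries_sq_div_four (s := 2 * ν + 2) (by simp; linarith) (ν + 1)).sub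
        (tendsto_besselSeries_sq_div_four (-ν - 1))).const_mul
          (Complex.Gamma (-ν) * Complex.Gamma (ν + 1) / 2))
    rw [sub_add_cancel, mul_add_one, show -(Complex.Gamma (ν + 1) / 2) -
      Complex.Gamma (-ν) * Complex.Gamma (ν + 1) / 2 * (0 - (Complex.Gamma (-ν))⁻¹) = 0 by
        rw [zero_sub]; field_simp; ring] at hlim
    simpa only [mul_neg] using hlim

lemma two_mul_sin_mul_cpow_mul_besselKScaled_of_re_neg {ν z : ℂ} (hν : -1 / 2 < ν.re)
    (hν' : ν.re < 0) (hz : 0 < z.re) :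
    2 * Complex.sin (ν * π) * ((z / 2) ^ ν * besselKScaled ν z) =
      π * (besselI (-ν) z - besselI ν z) := by
  have hz0 : z ≠ 0 := fun h => by simp [h] at hz
  have hreflection : Complex.sin (ν * π) * (Complex.Gamma (-ν) * Complex.Gamma (ν + 1)) = -π := by
    have h := Complex.Gamma_mul_Gamma_one_sub (-ν)
    have hne : Complex.Gamma (-ν) * Complex.Gamma (ν + 1) ≠ 0 :=
      mul_ne_zero (Complex.Gamma_ne_zero_of_re_pos (by simpa))
        (Complex.Gamma_ne_zero_of_re_pos (by simp; linarith))
    rw [sub_neg_eq_add, add_comm 1, mul_neg, Complex.sin_neg, mul_comm (π : ℂ), div_neg] at h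
    have hsin : Complex.sin (ν * π) ≠ 0 := fun h0 => hne (by rw [h, h0, div_zero, neg_zero])
    rw [h, mul_neg, mul_div_cancel₀ _ hsin]
  have hpow : (z / 2) ^ ν * (z / 2) ^ (-(2 * ν)) = (z / 2) ^ (-ν) := by
    rw [← Complex.cpow_add _ _ (div_ne_zero hz0 two_ne_zero), show ν + -(2 * ν) = -ν by ring]
  rw [besselKScaled_eq_Gamma_mul_sub hν hν' hz, besselI_eq_cpow_mul_besselSeries _ hz0,
    besselI_eq_cpow_mul_besselSeries _ hz0]
  linear_combination
    ((z / 2) ^ ν * besselSeries ν (z ^ 2 / 4) -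
      (z / 2) ^ (-ν) * besselSeries (-ν) (z ^ 2 / 4)) * hreflection -
    Complex.sin (ν * π) * (Complex.Gamma (-ν) * Complex.Gamma (ν + 1)) *
      besselSeries (-ν) (z ^ 2 / 4) * hpow

lemma differentiable_besselI_order {z : ℂ} (hz : z ≠ 0) :
    Differentiable ℂ fun ν => besselI ν z := by
  simp_rw [besselI_eq_cpow_mul_besselSeries _ hz]
  exact (differentiable_id.const_cpow (Or.inl (div_ne_zero hz two_ne_zero))).mul
    (differentiable_besselSeries_order _)

lemma differentiableAt_cpow_mul_besselKScaled_order {ν z : ℂ} (hν : -1 / 2 < ν.re)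
    (hz : 0 < z.re) : DifferentiableAt ℂ (fun ν => (z / 2) ^ ν * besselKScaled ν z) ν := by
  have hz0 : z ≠ 0 := fun h => by simp [h] at hz
  exact (differentiableAt_id.const_cpow (Or.inl (div_ne_zero hz0 two_ne_zero))).mul
    (differentiableAt_besselKScaled_order hν hz)

lemma two_mul_sin_mul_cpow_mul_besselKScaled {ν z : ℂ} (hν : -1 / 2 < ν.re) (hz : 0 < z.re) :
    2 * Complex.sin (ν * π) * ((z / 2) ^ ν * besselKScaled ν z) =
      π * (besselI (-ν) z - besselI ν z) := by
  have hz0 : z ≠ 0 := fun h => by simp [h] at hz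
  have hI := differentiable_besselI_order hz0
  have hlhs : AnalyticOnNhd ℂ
      (fun ν => 2 * Complex.sin (ν * π) * ((z / 2) ^ ν * besselKScaled ν z))
      {ν | -1 / 2 < ν.re} := by
    refine DifferentiableOn.analyticOnNhd (fun μ hμ => ?_)
      (isOpen_lt continuous_const Complex.continuous_re)
    exact (DifferentiableAt.mul (by fun_prop)
      (differentiableAt_cpow_mul_besselKScaled_order hμ hz)).differentiableWithinAt
  have hrhs : AnalyticOnNhd ℂ (fun ν => π * (besselI (-ν) z - besselI ν z)) univ :=
    (((hI.comp differentiable_neg).sub hI).const_mul _).differentiableOn.analyticOnNhd isOpen_univ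
  have hstrip : {ν : ℂ | -1 / 2 < ν.re ∧ ν.re < 0} ∈ nhds (-1 / 4 : ℂ) :=
    ((isOpen_lt continuous_const Complex.continuous_re).inter
      (isOpen_lt Complex.continuous_re continuous_const)).mem_nhds (by norm_num)
  refine hlhs.eqOn_of_preconnected_of_eventuallyEq (hrhs.mono (subset_univ _))
    (convex_halfSpace_re_gt _).isPreconnected (z₀ := -1 / 4) (by norm_num) ?_ hν
  filter_upwards [hstrip] with μ hμ
  exact two_mul_sin_mul_cpow_mul_besselKScaled_of_re_neg hμ.1 hμ.2 hz

lemma eventually_sin_mul_pi_ne_zero (n : ℤ) :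
    ∀ᶠ μ in nhdsWithin (n : ℂ) {(n : ℂ)}ᶜ, Complex.sin (μ * π) ≠ 0 := by
  have hderiv : HasDerivAt (fun μ => Complex.sin (μ * π)) (Complex.cos (n * π) * π) (n : ℂ) :=
    (hasDerivAt_mul_const (π : ℂ)).csin
  refine hderiv.eventually_ne (mul_ne_zero ?_ (Complex.ofReal_ne_zero.mpr Real.pi_ne_zero))
  intro h
  simpa [h, Complex.sin_int_mul_pi] using Complex.sin_sq_add_cos_sq (n * π)

lemma besselK_eq_cpow_mul_besselKScaled {ν z : ℂ} (hν : -1 / 2 < ν.re) (hz : 0 < z.re) :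
    besselK ν z = (z / 2) ^ ν * besselKScaled ν z := by
  have hquotient {μ : ℂ} (hμ : -1 / 2 < μ.re) (hsin : Complex.sin (μ * π) ≠ 0) :
      π / (2 * Complex.sin (μ * π)) * (besselI (-μ) z - besselI μ z) =
        (z / 2) ^ μ * besselKScaled μ z := by
    rw [div_mul_eq_mul_div, ← two_mul_sin_mul_cpow_mul_besselKScaled hμ hz]
    exact mul_div_cancel_left₀ _ (mul_ne_zero two_ne_zero hsin)
  rw [besselK]
  split_ifs with hint
  · have hcont : Tendsto (fun μ => (z / 2) ^ μ * besselKScaled μ z) (nhdsWithin ν {ν}ᶜ)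
        (nhds ((z / 2) ^ ν * besselKScaled ν z)) :=
      (differentiableAt_cpow_mul_besselKScaled_order hν hz).continuousAt.tendsto.mono_left
        nhdsWithin_le_nhds
    refine (hcont.congr' ?_).limUnder_eq
    obtain ⟨n, rfl⟩ := hint
    filter_upwards [eventually_sin_mul_pi_ne_zero n, nhdsWithin_le_nhds
      ((isOpen_lt continuous_const Complex.continuous_re).mem_nhds hν)] with μ hμ hμν
    exact (hquotient hμν hμ).symm
  · have hmem : ν ∈ Complex.integerComplement := fun ⟨n, hn⟩ => hint ⟨n, hn.symm⟩
    exact hquotient hν (mul_comm ν π ▸ sin_pi_mul_ne_zero hmem)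

/-! ### The hyperbolic form of the integral -/

lemma image_cosh_Ioi : Real.cosh '' Ioi 0 = Ioi 1 := by
  ext t
  simp only [mem_image, mem_Ioi]
  constructor
  · rintro ⟨φ, hφ, rfl⟩
    exact Real.one_lt_cosh.mpr hφ.ne'
  · intro ht
    exact ⟨Real.arcosh t, Real.arcosh_pos ht, Real.cosh_arcosh ht.le⟩

lemma besselKInt_eq_integral_cosh (a z : ℂ) : besselKInt a z =
    ∫ φ in Ioi (0 : ℝ), Complex.exp (-z * Real.cosh φ) * (Real.sinh φ : ℂ) ^ (2 * a + 1) := by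
  rw [besselKInt, ← image_cosh_Ioi,
    integral_image_eq_integral_deriv_smul_of_monotoneOn measurableSet_Ioi
      (fun φ _ => (Real.hasDerivAt_cosh φ).hasDerivWithinAt)
      (Real.cosh_strictMonoOn.monotoneOn.mono Ioi_subset_Ici_self)]
  refine setIntegral_congr_fun measurableSet_Ioi fun φ hφ => ?_
  have hsinh : 0 < Real.sinh φ := Real.sinh_pos_iff.mpr hφ
  have hsq : (Real.cosh φ : ℂ) ^ 2 - 1 = (Real.sinh φ : ℂ) ^ 2 := by
    rw [← Complex.ofReal_pow, Real.cosh_sq]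
    push_cast
    ring
  rw [hsq, ← cpow_two_mul_ofReal hsinh.le, Complex.real_smul,
    Complex.cpow_add _ _ (Complex.ofReal_ne_zero.mpr hsinh.ne'), Complex.cpow_one]
  ring

/-- For `Re ν > -1/2` and `Re z > 0`,
`K_ν(z) = ((z/2)^ν √π / Γ(ν+1/2)) ∫₀^∞ e^{-z cosh φ} (sinh φ)^{2ν} dφ`
and equivalently
`K_ν(z) = ((z/2)^ν √π / Γ(ν+1/2)) ∫₁^∞ e^{-zt} (t²-1)^{ν-1/2} dt`. -/
theorem besselK_integral_rep (ν z : ℂ) (hν : -1/2 < ν.re) (hz : 0 < z.re) :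
    besselK ν z = ((z / 2) ^ ν * (Real.sqrt Real.pi : ℂ) / Complex.Gamma (ν + 1/2)) *
      ∫ φ in Set.Ioi (0 : ℝ), Complex.exp (-z * (Real.cosh φ : ℂ)) *
        ((Real.sinh φ : ℂ) ^ (2 * ν)) ∧
    besselK ν z = ((z / 2) ^ ν * (Real.sqrt Real.pi : ℂ) / Complex.Gamma (ν + 1/2)) *
      ∫ t in Set.Ioi (1 : ℝ), Complex.exp (-z * (t : ℂ)) * (((t : ℂ) ^ 2 - 1) ^ (ν - 1/2)) := by
  have hK := besselK_eq_cpow_mul_besselKScaled hν hz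
  have hfactor : (z / 2) ^ ν * besselKScaled ν z =
      (z / 2) ^ ν * √π / Complex.Gamma (ν + 1 / 2) * besselKInt (ν - 1 / 2) z := by
    rw [besselKScaled]
    ring
  have hcosh := besselKInt_eq_integral_cosh (ν - 1 / 2) z
  rw [show 2 * (ν - 1 / 2) + 1 = 2 * ν by ring] at hcosh
  exact ⟨by rw [hK, hfactor, hcosh], hK.trans hfactor⟩
end

section
/- If ν, z ∈ ℂ with Re ν > −1/2 and Re z > 0, then Basset's integral formula holds: K_ν(z) = ((2z)^ν Γ(ν + 1/2) / (2√π)) ∫_{−∞}^∞ e^{−iu} (z² + u²)^{−ν − 1/2} du, where the integral on the right-hand side is a convergent two-sided improper Riemann integral (the limit of ∫_{−N}^{N} as N → ∞). -/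
/-!
Write `I_ν(z) = (z/2)^ν C_ν(z²/4)` with `C_ν` entire, and set
`F_ν(x) = ∫_0^∞ t^{-ν-1} e^{-t-x/t} dt` for `x > 0`. Both families satisfy contiguity relations, by
which the cross Wronskian of `F_ν` and `C_{-ν-1}` is constant in `x` and `1`-periodic in `ν`; as
`x → 0` it tends to `1` when `Re ν < 0`, so it is always `1`. Together with the symmetry
`x^ν F_ν = F_{-ν}` this expresses `F_ν` through `C_ν` and `C_{-ν}`, which for real `r > 0` and
non-integer `ν` reads `K_ν(r) = (r/2)^ν F_ν(r²/4) / 2`.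

Basset's integral converges only conditionally for `Re ν ≤ 0`, but one integration by parts makes
it absolutely convergent, hence holomorphic in `z` and continuous in `ν`. For `z = r > 0`, writing
the power of `r² + u²` as a Gamma integral and integrating over `u` first (the Fourier transform of
a Gaussian) gives `(r/2)^ν F_ν(r²/4) / 2` again. The identity theorem extends the equality to
`Re z > 0`, and continuity in the order extends it to integer `ν`.
-/

open Filter Set MeasureTheory
open scoped Real Classical

open Complex Asymptotics Topology
open scoped Nat

/-! ### The Bessel–Clifford function -/

/-- The `n`-th term of the power series defining `besselClifford`. Where `Γ` has a pole the term
vanishes, as it should, because `Complex.Gamma` is `0` there. -/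
noncomputable def besselCliffordTerm (ν x : ℂ) (n : ℕ) : ℂ :=
  x ^ n / (n ! * Gamma (n + ν + 1))

/-- The Bessel–Clifford function `C_ν(x) = ∑ xⁿ / (n! Γ(n + ν + 1))`, the entire factor in
`I_ν(z) = (z / 2)^ν C_ν(z² / 4)`. -/
noncomputable def besselClifford (ν x : ℂ) : ℂ := ∑' n, besselCliffordTerm ν x n

lemma succ_mul_besselCliffordTerm_succ (ν x : ℂ) (n : ℕ) :
    (n + 1) * besselCliffordTerm ν x (n + 1) = x * besselCliffordTerm (ν + 1) x n := by
  have : (n : ℂ) + 1 ≠ 0 := n.cast_add_one_ne_zero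
  simp only [besselCliffordTerm, Nat.factorial_succ, pow_succ]
  push_cast
  rw [show (n : ℂ) + 1 + ν + 1 = n + (ν + 1) + 1 by ring]
  field_simp

lemma add_mul_besselCliffordTerm_add_one (ν x : ℂ) (n : ℕ) :
    (n + ν + 1) * besselCliffordTerm (ν + 1) x n = besselCliffordTerm ν x n := by
  have h := one_div_Gamma_eq_self_mul_one_div_Gamma_add_one (n + ν + 1)
  rw [show (n : ℂ) + ν + 1 + 1 = n + (ν + 1) + 1 by ring] at h
  simp only [besselCliffordTerm, div_eq_mul_inv, mul_inv] at h ⊢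
  rw [h]
  ring

lemma summable_besselCliffordTerm (ν x : ℂ) : Summable (besselCliffordTerm ν x) := by
  refine summable_of_ratio_norm_eventually_le (r := 1 / 2) (by norm_num) ?_
  filter_upwards [eventually_ge_atTop ⌈‖ν‖ + 2 * ‖x‖⌉₊] with n hn
  rw [Nat.ceil_le] at hn
  have hratio : (n + ν + 1) * ((n + 1 : ℕ) * besselCliffordTerm ν x (n + 1)) =
      x * besselCliffordTerm ν x n := by
    rw [← add_mul_besselCliffordTerm_add_one ν x n, Nat.cast_succ,
      succ_mul_besselCliffordTerm_succ]
    ring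
  have hν : 1 ≤ ‖(n : ℂ) + ν + 1‖ := by
    have h := norm_sub_le_norm_add ((n + 1 : ℕ) : ℂ) ν
    rw [Complex.norm_natCast, Nat.cast_succ, Nat.cast_succ, add_right_comm] at h
    linarith [norm_nonneg x]
  refine le_of_mul_le_mul_left (a := ((n + 1 : ℕ) : ℝ)) ?_ (by positivity)
  calc (n + 1 : ℕ) * ‖besselCliffordTerm ν x (n + 1)‖
      ≤ ‖(n : ℂ) + ν + 1‖ * ((n + 1 : ℕ) * ‖besselCliffordTerm ν x (n + 1)‖) :=
        le_mul_of_one_le_left (by positivity) hν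
    _ = ‖x‖ * ‖besselCliffordTerm ν x n‖ := by
        simpa only [norm_mul, Complex.norm_natCast] using congrArg norm hratio
    _ ≤ (n + 1) / 2 * ‖besselCliffordTerm ν x n‖ := by
        gcongr
        linarith [norm_nonneg ν]
    _ = (n + 1 : ℕ) * (1 / 2 * ‖besselCliffordTerm ν x n‖) := by
        push_cast
        ring

lemma hasDerivAt_besselCliffordTerm_succ (ν x : ℂ) (n : ℕ) :
    HasDerivAt (fun y ↦ besselCliffordTerm ν y (n + 1)) (besselCliffordTerm (ν + 1) x n) x := by
  have hn : (n : ℂ) + 1 ≠ 0 := n.cast_add_one_ne_zero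
  refine ((hasDerivAt_pow (n + 1) x).div_const _).congr_deriv ?_
  rw [besselCliffordTerm, Nat.factorial_succ, Nat.add_sub_cancel]
  push_cast
  rw [show (n : ℂ) + 1 + ν + 1 = n + (ν + 1) + 1 by ring, mul_assoc, mul_div_mul_left _ _ hn]

lemma hasDerivAt_besselClifford (ν x : ℂ) :
    HasDerivAt (besselClifford ν) (besselClifford (ν + 1) x) x := by
  set U := Metric.ball (0 : ℂ) (‖x‖ + 1)
  have hx : x ∈ U := by simp [U]
  have hsum := (summable_besselCliffordTerm ν ((‖x‖ + 1 : ℝ) : ℂ)).norm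
  have hdiff (n : ℕ) : DifferentiableOn ℂ (fun y ↦ besselCliffordTerm ν y n) U := by
    unfold besselCliffordTerm
    fun_prop
  have hbound (n : ℕ) (y : ℂ) (hy : y ∈ U) :
      ‖besselCliffordTerm ν y n‖ ≤ ‖besselCliffordTerm ν ((‖x‖ + 1 : ℝ) : ℂ) n‖ := by
    simp only [besselCliffordTerm, norm_div, norm_pow, norm_real]
    gcongr
    exact (mem_ball_zero_iff.1 hy).le.trans (le_abs_self _)
  have hderiv := hasSum_deriv_of_summable_norm hsum hdiff Metric.isOpen_ball hbound hx
  have hzero : deriv (fun y ↦ besselCliffordTerm ν y 0) x = 0 := by simp [besselCliffordTerm]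
  have hvalue : deriv (besselClifford ν) x = besselClifford (ν + 1) x := by
    rw [← hasSum_nat_add_iff' 1] at hderiv
    simp only [(hasDerivAt_besselCliffordTerm_succ ν x _).deriv, Finset.range_one,
      Finset.sum_singleton, hzero, sub_zero] at hderiv
    exact hderiv.unique (summable_besselCliffordTerm (ν + 1) x).hasSum
  have hdiffOn : DifferentiableOn ℂ (besselClifford ν) U :=
    differentiableOn_tsum_of_summable_norm hsum hdiff Metric.isOpen_ball hbound
  rw [← hvalue]
  exact (hdiffOn.differentiableAt (Metric.isOpen_ball.mem_nhds hx)).hasDerivAt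

lemma besselClifford_recurrence (ν x : ℂ) :
    x * besselClifford (ν + 2) x + (ν + 1) * besselClifford (ν + 1) x = besselClifford ν x := by
  have hsum := (summable_besselCliffordTerm (ν + 1) x).hasSum.mul_left (ν + 1)
  have hshift : HasSum (fun n : ℕ ↦ n * besselCliffordTerm (ν + 1) x n)
      (x * besselClifford (ν + 2) x) := by
    have h := (summable_besselCliffordTerm (ν + 2) x).hasSum.mul_left x
    rw [← hasSum_nat_add_iff' 1]
    simpa [succ_mul_besselCliffordTerm_succ, add_assoc, one_add_one_eq_two] using! h
  refine ((hshift.add hsum).congr_fun fun n ↦ ?_).tsum_eq.symm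
  rw [← add_mul_besselCliffordTerm_add_one]
  ring

lemma besselClifford_zero (ν : ℂ) : besselClifford ν 0 = (Gamma (ν + 1))⁻¹ := by
  rw [besselClifford, tsum_eq_single 0 fun n hn ↦ by simp [besselCliffordTerm, hn]]
  simp [besselCliffordTerm]

lemma besselI_eq_cpow_mul_besselClifford (ν : ℂ) {z : ℂ} (hz : z ≠ 0) :
    besselI ν z = (z / 2) ^ ν * besselClifford ν (z ^ 2 / 4) := by
  rw [besselI, besselClifford, ← tsum_mul_left]
  refine tsum_congr fun n ↦ ?_
  have hpow : (z / 2) ^ (2 * n : ℂ) = (z ^ 2 / 4) ^ n := by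
    rw [← Nat.cast_ofNat, ← Nat.cast_mul, cpow_natCast, pow_mul]
    ring
  rw [besselCliffordTerm, cpow_add _ _ (div_ne_zero hz two_ne_zero), hpow, mul_div_assoc]

/-- The left-hand side has zero derivative, and its value at `x = 0` is `1 / (Γ(ν + 1) Γ(-ν))`. -/
lemma besselClifford_wronskian (ν x : ℂ) :
    besselClifford ν x * besselClifford (-ν - 1) x -
      x * besselClifford (ν + 1) x * besselClifford (-ν) x = -(sin (ν * π) / π) := by
  set W : ℂ → ℂ := fun y ↦ besselClifford ν y * besselClifford (-ν - 1) y -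
    y * besselClifford (ν + 1) y * besselClifford (-ν) y
  have hderiv (y : ℂ) : HasDerivAt W 0 y := by
    have d₁ := hasDerivAt_besselClifford (-ν - 1) y
    have d₂ := hasDerivAt_besselClifford (ν + 1) y
    have r₁ := besselClifford_recurrence ν y
    have r₂ := besselClifford_recurrence (-ν - 1) y
    rw [show -ν - 1 + 1 = -ν by ring] at d₁ r₂
    rw [show ν + 1 + 1 = ν + 2 by ring] at d₂
    rw [show -ν - 1 + 2 = -ν + 1 by ring] at r₂
    refine (((hasDerivAt_besselClifford ν y).mul d₁).sub
      (((hasDerivAt_id y).mul d₂).mul (hasDerivAt_besselClifford (-ν) y))).congr_deriv ?_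
    simp only [Pi.mul_apply, id_eq, one_mul]
    linear_combination -besselClifford (-ν) y * r₁ - besselClifford (ν + 1) y * r₂
  have hconst : W x = W 0 :=
    is_const_of_deriv_eq_zero (fun y ↦ (hderiv y).differentiableAt) (fun y ↦ (hderiv y).deriv) x 0
  have hrefl := Gamma_mul_Gamma_one_sub (-ν)
  calc
    W x = (Gamma (-ν) * Gamma (1 - -ν))⁻¹ := by
        simp only [hconst, W, besselClifford_zero, zero_mul, sub_zero, sub_add_cancel, mul_inv_rev,
          sub_neg_eq_add, add_comm (1 : ℂ)]
    _ = -(sin (ν * π) / π) := by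
        rw [hrefl, inv_div, mul_neg, sin_neg, neg_div, mul_comm ν]

/-! ### The Bessel–Clifford function of the second kind -/

/-- The function `t ↦ e^{-t - x/t}` whose Mellin transform defines `besselCliffordK`. -/
noncomputable def besselCliffordKernel (x t : ℝ) : ℂ := (Real.exp (-t - x / t) : ℝ)

/-- Twice the Bessel–Clifford function of the second kind,
`F_ν(x) = ∫_0^∞ t^{-ν-1} e^{-t-x/t} dt = 2 x^{-ν/2} K_ν(2√x)` for `x > 0`. -/
noncomputable def besselCliffordK (ν : ℂ) (x : ℝ) : ℂ := mellin (besselCliffordKernel x) (-ν)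

lemma norm_besselCliffordKernel (x t : ℝ) :
    ‖besselCliffordKernel x t‖ = Real.exp (-t - x / t) := by
  rw [besselCliffordKernel, norm_real, Real.norm_of_nonneg (Real.exp_pos _).le]

lemma norm_besselCliffordKernel_anti {x y t : ℝ} (hxy : x ≤ y) (ht : 0 < t) :
    ‖besselCliffordKernel y t‖ ≤ ‖besselCliffordKernel x t‖ := by
  rw [norm_besselCliffordKernel, norm_besselCliffordKernel]
  gcongr

lemma continuousOn_besselCliffordKernel (x : ℝ) : ContinuousOn (besselCliffordKernel x) (Ioi 0) :=
  continuous_ofReal.comp_continuousOn <| Real.continuous_exp.comp_continuousOn <|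
    continuousOn_neg.sub <| continuousOn_const.div continuousOn_id fun _ ht ↦
      ne_of_gt (mem_Ioi.1 ht)

/-- At `t = 0` the kernel decays faster than every power, because `e^{-x/t} ≤ n! (t/x)ⁿ`. -/
lemma besselCliffordKernel_isBigO_pow {x : ℝ} (hx : 0 < x) (n : ℕ) :
    besselCliffordKernel x =O[𝓝[>] 0] fun t ↦ t ^ n := by
  refine IsBigO.of_bound (n ! / x ^ n) ?_
  filter_upwards [self_mem_nhdsWithin] with t ht
  rw [mem_Ioi] at ht
  have hexp := Real.pow_div_factorial_le_exp (x / t) (by positivity) n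
  calc ‖besselCliffordKernel x t‖ ≤ (Real.exp (x / t))⁻¹ := by
        rw [norm_besselCliffordKernel, ← Real.exp_neg]
        gcongr
        linarith
    _ ≤ ((x / t) ^ n / n !)⁻¹ := inv_anti₀ (by positivity) hexp
    _ = n ! / x ^ n * ‖t ^ n‖ := by
        rw [Real.norm_of_nonneg (by positivity), div_pow]
        field_simp

lemma mellinConvergent_besselCliffordKernel (s : ℂ) {x : ℝ} (hx : 0 < x) :
    MellinConvergent (besselCliffordKernel x) s := by
  obtain ⟨n, hn⟩ := exists_nat_gt (-s.re)
  refine mellinConvergent_of_isBigO_rpow_exp (b := -n) one_pos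
    ((continuousOn_besselCliffordKernel x).locallyIntegrableOn measurableSet_Ioi) ?_ ?_
    (by linarith)
  · refine IsBigO.of_bound 1 ?_
    filter_upwards [eventually_gt_atTop 0] with t ht
    rw [norm_besselCliffordKernel, Real.norm_of_nonneg (Real.exp_pos _).le, one_mul]
    gcongr
    linarith [div_pos hx ht]
  · simpa using besselCliffordKernel_isBigO_pow hx n

lemma hasDerivAt_besselCliffordK (ν : ℂ) {x : ℝ} (hx : 0 < x) :
    HasDerivAt (besselCliffordK ν) (-besselCliffordK (ν + 1) x) x := by
  have hint (s : ℂ) {y : ℝ} (hy : 0 < y) := mellinConvergent_besselCliffordKernel s hy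
  have hderiv (t : ℝ) (ht : 0 < t) (y : ℝ) :
      HasDerivAt (fun y ↦ (t : ℂ) ^ (-ν - 1) • besselCliffordKernel y t)
        (-((t : ℂ) ^ (-(ν + 1) - 1) • besselCliffordKernel y t)) y := by
    have hexp : HasDerivAt (fun y : ℝ ↦ Real.exp (-t - y / t))
        (Real.exp (-t - y / t) * -(1 / t)) y :=
      (((hasDerivAt_id y).div_const t).const_sub (-t)).exp
    refine (hexp.ofReal_comp.const_mul ((t : ℂ) ^ (-ν - 1))).congr_deriv ?_
    have ht' : (t : ℂ) ≠ 0 := ofReal_ne_zero.2 ht.ne'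
    rw [show -(ν + 1) - 1 = -ν - 1 - 1 by ring, cpow_sub (-ν - 1) 1 ht', cpow_one,
      besselCliffordKernel]
    push_cast
    simp only [smul_eq_mul]
    ring
  have h := hasDerivAt_integral_of_dominated_loc_of_deriv_le (Ioi_mem_nhds (half_lt_self hx))
    (F' := fun y t ↦ -((t : ℂ) ^ (-(ν + 1) - 1) • besselCliffordKernel y t))
    (bound := fun t : ℝ ↦ ‖(t : ℂ) ^ (-(ν + 1) - 1) • besselCliffordKernel (x / 2) t‖)
    (eventually_of_mem (Ioi_mem_nhds hx) fun y hy ↦ (hint (-ν) hy).aestronglyMeasurable)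
    (hint (-ν) hx) (hint (-(ν + 1)) hx).aestronglyMeasurable.neg ?_
    (hint (-(ν + 1)) (half_pos hx)).norm ?_
  · exact h.2.congr_deriv (integral_neg _)
  · filter_upwards [ae_restrict_mem measurableSet_Ioi] with t ht y hy
    rw [norm_neg, norm_smul, norm_smul]
    gcongr
    exact norm_besselCliffordKernel_anti (le_of_lt hy) ht
  · filter_upwards [ae_restrict_mem measurableSet_Ioi] with t ht y _ using hderiv t ht y

/-- The substitution `t ↦ x / t`. -/
lemma cpow_mul_besselCliffordK (ν : ℂ) {x : ℝ} (hx : 0 < x) :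
    (x : ℂ) ^ ν * besselCliffordK ν x = besselCliffordK (-ν) x := by
  have hinv : mellin (fun t ↦ besselCliffordKernel x (x * t)) (-ν) =
      mellin (fun t ↦ besselCliffordKernel x t⁻¹) (-ν) := by
    refine setIntegral_congr_fun measurableSet_Ioi fun t _ ↦ ?_
    have hexp : -(x * t) - x / (x * t) = -t⁻¹ - x / t⁻¹ := by
      field_simp
      ring
    simp only [besselCliffordKernel, hexp]
  rw [mellin_comp_mul_left _ _ hx, mellin_comp_inv, neg_neg, smul_eq_mul] at hinv
  rw [besselCliffordK, besselCliffordK, hinv, neg_neg]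

/-- Differentiate the symmetry `x^ν F_ν = F_{-ν}`. -/
lemma besselCliffordK_recurrence (ν : ℂ) {x : ℝ} (hx : 0 < x) :
    x * besselCliffordK (ν + 2) x = (ν + 1) * besselCliffordK (ν + 1) x + besselCliffordK ν x := by
  have hx' : (x : ℂ) ≠ 0 := ofReal_ne_zero.2 hx.ne'
  have hxν : (x : ℂ) ^ ν ≠ 0 := by simp [cpow_eq_zero_iff, hx']
  have hpow : HasDerivAt (fun y : ℝ ↦ (y : ℂ) ^ (ν + 1)) ((ν + 1) * (x : ℂ) ^ ν) x := by
    simpa using ((hasDerivAt_id (x : ℂ)).cpow_const (c := ν + 1)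
      (Or.inl (by simpa using hx))).comp_ofReal
  have hleft := hpow.mul (hasDerivAt_besselCliffordK (ν + 1) hx)
  have hright := hasDerivAt_besselCliffordK (-(ν + 1)) hx
  have hsymm : (fun y : ℝ ↦ (y : ℂ) ^ (ν + 1)) * besselCliffordK (ν + 1) =ᶠ[𝓝 x]
      besselCliffordK (-(ν + 1)) := by
    filter_upwards [Ioi_mem_nhds hx] with y hy using cpow_mul_besselCliffordK (ν + 1) hy
  have h := (hleft.congr_of_eventuallyEq hsymm.symm).unique hright
  rw [show -(ν + 1) + 1 = -ν by ring, ← cpow_mul_besselCliffordK ν hx, cpow_add _ _ hx', cpow_one,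
    show ν + 1 + 1 = ν + 2 by ring] at h
  refine mul_left_cancel₀ hxν ?_
  linear_combination -h

lemma tendsto_besselCliffordK_zero {ν : ℂ} (hν : ν.re < 0) :
    Tendsto (besselCliffordK ν) (𝓝[>] 0) (𝓝 (Gamma (-ν))) := by
  have hν' : 0 < (-ν).re := by simpa using hν
  have hzero : (fun t : ℝ ↦ ((Real.exp (-t) : ℝ) : ℂ)) = besselCliffordKernel 0 := by
    ext t
    simp [besselCliffordKernel]
  have hint : MellinConvergent (besselCliffordKernel 0) (-ν) := by
    rw [← hzero]
    simpa only [MellinConvergent, smul_eq_mul, mul_comm] using GammaIntegral_convergent hν'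
  rw [Gamma_eq_integral hν', GammaIntegral_eq_mellin, hzero]
  refine tendsto_integral_filter_of_dominated_convergence _
    (eventually_of_mem self_mem_nhdsWithin fun x hx ↦
      (mellinConvergent_besselCliffordKernel (-ν) hx).aestronglyMeasurable) ?_ hint.norm ?_
  · filter_upwards [self_mem_nhdsWithin] with x hx
    filter_upwards [ae_restrict_mem measurableSet_Ioi] with t ht
    rw [norm_smul, norm_smul]
    gcongr
    exact norm_besselCliffordKernel_anti (le_of_lt hx) ht
  · refine Eventually.of_forall fun t ↦ (Continuous.tendsto ?_ 0).mono_left nhdsWithin_le_nhds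
    unfold besselCliffordKernel
    fun_prop

lemma tendsto_mul_besselCliffordK_zero {ν : ℂ} (hν : ν.re < 0) :
    Tendsto (fun x : ℝ ↦ x * besselCliffordK (ν + 1) x) (𝓝[>] 0) (𝓝 0) := by
  have hν' : (ν - 1).re < 0 := by
    rw [sub_re, one_re]
    linarith
  have hν₀ : -ν ≠ 0 := neg_ne_zero.2 fun h ↦ by simp [h] at hν
  have h := ((tendsto_besselCliffordK_zero hν).const_mul ν).add (tendsto_besselCliffordK_zero hν')
  rw [neg_sub', sub_neg_eq_add, Gamma_add_one _ hν₀, neg_mul, add_neg_cancel] at h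
  refine h.congr' ?_
  filter_upwards [self_mem_nhdsWithin] with x hx
  simpa [show ν - 1 + 2 = ν + 1 by ring] using (besselCliffordK_recurrence (ν - 1) hx).symm

/-- The cross Wronskian of the solutions of the two kinds, up to elementary factors. -/
noncomputable def crossWronskian (ν : ℂ) (x : ℝ) : ℂ :=
  besselCliffordK ν x * besselClifford (-ν - 1) x +
    x * besselCliffordK (ν + 1) x * besselClifford (-ν) x

lemma hasDerivAt_crossWronskian (ν : ℂ) {x : ℝ} (hx : 0 < x) :
    HasDerivAt (crossWronskian ν) 0 x := by
  have dF := hasDerivAt_besselCliffordK (ν + 1) hx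
  have dC := (hasDerivAt_besselClifford (-ν - 1) x).comp_ofReal
  have rF := besselCliffordK_recurrence ν hx
  have rC := besselClifford_recurrence (-ν - 1) x
  rw [show ν + 1 + 1 = ν + 2 by ring] at dF
  rw [show -ν - 1 + 1 = -ν by ring] at dC rC
  rw [show -ν - 1 + 2 = -ν + 1 by ring] at rC
  refine (((hasDerivAt_besselCliffordK ν hx).mul dC).add
    (((hasDerivAt_id x).ofReal_comp.mul dF).mul
      (hasDerivAt_besselClifford (-ν) x).comp_ofReal)).congr_deriv ?_
  simp only [id_eq, ofReal_one, Pi.mul_apply]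
  linear_combination besselCliffordK (ν + 1) x * rC - besselClifford (-ν) x * rF

lemma crossWronskian_eq_one_of_re_neg {ν : ℂ} (hν : ν.re < 0) {x : ℝ} (hx : 0 < x) :
    crossWronskian ν x = 1 := by
  have hconst (y : ℝ) (hy : y ∈ Ioi 0) : crossWronskian ν x = crossWronskian ν y :=
    isOpen_Ioi.is_const_of_deriv_eq_zero isPreconnected_Ioi
      (fun w hw ↦ (hasDerivAt_crossWronskian ν hw).differentiableAt.differentiableWithinAt)
      (fun w hw ↦ (hasDerivAt_crossWronskian ν hw).deriv) hx hy
  have hC (μ : ℂ) : Tendsto (fun y : ℝ ↦ besselClifford μ y) (𝓝[>] 0) (𝓝 (Gamma (μ + 1))⁻¹) := by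
    have h := (hasDerivAt_besselClifford μ (0 : ℝ)).comp_ofReal.continuousAt.tendsto
    simpa [besselClifford_zero] using h.mono_left (nhdsWithin_le_nhds (s := Ioi 0))
  have hlim : Tendsto (crossWronskian ν) (𝓝[>] 0) (𝓝 1) := by
    have h := ((tendsto_besselCliffordK_zero hν).mul (hC (-ν - 1))).add
      ((tendsto_mul_besselCliffordK_zero hν).mul (hC (-ν)))
    have hΓ : Gamma (-ν) ≠ 0 := Gamma_ne_zero_of_re_pos (by simpa using hν)
    rwa [sub_add_cancel, mul_inv_cancel₀ hΓ, zero_mul, add_zero] at h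
  exact tendsto_nhds_unique
    (tendsto_const_nhds.congr' (eventually_of_mem self_mem_nhdsWithin hconst)) hlim

lemma crossWronskian_add_one (ν : ℂ) {x : ℝ} (hx : 0 < x) :
    crossWronskian (ν + 1) x = crossWronskian ν x := by
  have rF := besselCliffordK_recurrence ν hx
  have rC := besselClifford_recurrence (-ν - 2) x
  rw [show -ν - 2 + 1 = -ν - 1 by ring, sub_add_cancel] at rC
  rw [crossWronskian, crossWronskian, show ν + 1 + 1 = ν + 2 by ring,
    show -(ν + 1) - 1 = -ν - 2 by ring, neg_add']
  linear_combination besselClifford (-ν - 1) x * rF - besselCliffordK (ν + 1) x * rC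

lemma crossWronskian_eq_one (ν : ℂ) {x : ℝ} (hx : 0 < x) : crossWronskian ν x = 1 := by
  have hshift (n : ℕ) : crossWronskian ν x = crossWronskian (ν - n) x := by
    induction n with
    | zero => simp
    | succ n ih =>
      rw [ih, ← crossWronskian_add_one (ν - (n + 1 : ℕ)) hx, Nat.cast_succ, ← sub_sub,
        sub_add_cancel]
  obtain ⟨n, hn⟩ := exists_nat_gt ν.re
  rw [hshift n, crossWronskian_eq_one_of_re_neg (by simpa using hn) hx]

/-- The cross Wronskians of orders `ν` and `-ν - 1` are, by the symmetry `x^μ F_μ = F_{-μ}`, two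
linear equations for `F_ν` and `F_{ν+1}`. Their determinant is `besselClifford_wronskian`, and
Cramer's rule gives the connection formula. -/
lemma sin_mul_besselCliffordK (ν : ℂ) {x : ℝ} (hx : 0 < x) :
    sin (ν * π) * besselCliffordK ν x =
      π * ((x : ℂ) ^ (-ν) * besselClifford (-ν) x - besselClifford ν x) := by
  have hx' : (x : ℂ) ≠ 0 := ofReal_ne_zero.2 hx.ne'
  have hxν : (x : ℂ) ^ ν ≠ 0 := by simp [cpow_eq_zero_iff, hx']
  have hπ : (π : ℂ) ≠ 0 := ofReal_ne_zero.2 Real.pi_ne_zero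
  have eq₁ := crossWronskian_eq_one ν hx
  have eq₂ := crossWronskian_eq_one (-ν - 1) hx
  have det := besselClifford_wronskian ν x
  rw [crossWronskian] at eq₁ eq₂
  rw [sub_add_cancel, ← neg_add', neg_neg, add_sub_cancel_right, ← cpow_mul_besselCliffordK ν hx,
    ← cpow_mul_besselCliffordK (ν + 1) hx, cpow_add _ _ hx', cpow_one] at eq₂
  rw [cpow_neg]
  field_simp at det ⊢
  linear_combination π * besselClifford (-ν) x * eq₂ - π * (x : ℂ) ^ ν * besselClifford ν x * eq₁ +
    besselCliffordK ν x * (x : ℂ) ^ ν * det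

/-! ### Basset's integral -/

lemma sq_mem_slitPlane {z : ℂ} (hz : 0 < z.re) : z ^ 2 ∈ slitPlane := by
  rw [mem_slitPlane_iff, sq, mul_re, mul_im]
  by_cases him : z.im = 0
  · exact Or.inl (by simpa only [him, mul_zero, sub_zero] using mul_pos hz hz)
  · exact Or.inr (by simpa [mul_comm z.im, ← two_mul] using ⟨hz.ne', him⟩)

lemma sq_add_sq_mem_slitPlane {z : ℂ} (hz : 0 < z.re) (u : ℝ) :
    z ^ 2 + (u : ℂ) ^ 2 ∈ slitPlane := by
  have h := mem_slitPlane_iff.1 (sq_mem_slitPlane hz)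
  rw [mem_slitPlane_iff, ← ofReal_pow, add_re, add_im, ofReal_re, ofReal_im, add_zero]
  exact h.imp_left fun hre ↦ by positivity

lemma continuous_sq_add_sq_cpow (s : ℂ) {z : ℂ} (hz : 0 < z.re) :
    Continuous fun u : ℝ ↦ (z ^ 2 + (u : ℂ) ^ 2) ^ s :=
  (continuous_const.add (continuous_ofReal.pow 2)).cpow continuous_const
    (sq_add_sq_mem_slitPlane hz)

lemma hasDerivAt_sq_add_sq_cpow (s : ℂ) {z : ℂ} (hz : 0 < z.re) (u : ℝ) :
    HasDerivAt (fun u : ℝ ↦ (z ^ 2 + (u : ℂ) ^ 2) ^ s)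
      (s * (z ^ 2 + (u : ℂ) ^ 2) ^ (s - 1) * (2 * u)) u := by
  have hbase : HasDerivAt (fun w : ℂ ↦ z ^ 2 + w ^ 2) (2 * u) (u : ℂ) := by
    simpa using (hasDerivAt_pow 2 (u : ℂ)).const_add (z ^ 2)
  exact (hbase.cpow_const (sq_add_sq_mem_slitPlane hz u)).comp_ofReal

lemma ofReal_mul_cpow {a : ℝ} (ha : 0 < a) {w : ℂ} (hw : w ≠ 0) (s : ℂ) :
    (a * w) ^ s = (a : ℂ) ^ s * w ^ s := by
  have ha' : (a : ℂ) ≠ 0 := ofReal_ne_zero.2 ha.ne'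
  rw [cpow_def_of_ne_zero (mul_ne_zero ha' hw), cpow_def_of_ne_zero ha', cpow_def_of_ne_zero hw,
    log_ofReal_mul ha hw, ofReal_log ha.le, add_mul, exp_add]

lemma one_add_mul_sq_sub_one_mem_slitPlane {z : ℂ} (hz : 0 < z.re) {τ : ℝ} (hτ : τ ∈ Icc 0 1) :
    1 + τ * (z ^ 2 - 1) ∈ slitPlane := by
  simpa using starConvex_one_slitPlane.add_smul_sub_mem (sq_mem_slitPlane hz) hτ.1 hτ.2

lemma sq_add_sq_eq (z : ℂ) (u : ℝ) :
    z ^ 2 + (u : ℂ) ^ 2 =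
      ((1 + u ^ 2 : ℝ) : ℂ) * (1 + ((1 + u ^ 2)⁻¹ : ℝ) * (z ^ 2 - 1)) := by
  have hu : ((1 + u ^ 2 : ℝ) : ℂ) ≠ 0 := ofReal_ne_zero.2 (by positivity)
  rw [ofReal_inv, mul_add, mul_inv_cancel_left₀ hu]
  push_cast
  ring

lemma inv_one_add_sq_mem_Icc (u : ℝ) : (1 + u ^ 2)⁻¹ ∈ Icc (0 : ℝ) 1 :=
  ⟨by positivity, inv_le_one_of_one_le₀ (by linarith [sq_nonneg u])⟩

/-- Up to the factor `1 + u²`, the base `z² + u²` ranges over a compact subset of the slit plane. -/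
lemma exists_norm_sq_add_sq_cpow_le {K S : Set ℂ} (hK : IsCompact K) (hre : ∀ z ∈ K, 0 < z.re)
    (hS : IsCompact S) :
    ∃ C, ∀ z ∈ K, ∀ s ∈ S, ∀ u : ℝ, ‖(z ^ 2 + (u : ℂ) ^ 2) ^ s‖ ≤ C * (1 + u ^ 2) ^ s.re := by
  have hcont : ContinuousOn (fun p : ℝ × ℂ × ℂ ↦ (1 + p.1 * (p.2.1 ^ 2 - 1)) ^ p.2.2)
      (Icc 0 1 ×ˢ K ×ˢ S) := by
    refine ContinuousOn.cpow (by fun_prop) (by fun_prop) ?_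
    rintro ⟨τ, z, s⟩ ⟨hτ, hz, -⟩
    exact one_add_mul_sq_sub_one_mem_slitPlane (hre z hz) hτ
  obtain ⟨C, hC⟩ := (isCompact_Icc.prod (hK.prod hS)).exists_bound_of_continuousOn hcont
  refine ⟨C, fun z hz s hs u ↦ ?_⟩
  have hu : 0 < 1 + u ^ 2 := by positivity
  have hτ := inv_one_add_sq_mem_Icc u
  rw [sq_add_sq_eq, ofReal_mul_cpow hu
    (slitPlane_ne_zero (one_add_mul_sq_sub_one_mem_slitPlane (hre z hz) hτ)), norm_mul,
    norm_cpow_eq_rpow_re_of_pos hu, mul_comm]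
  gcongr
  exact hC (_, z, s) ⟨hτ, hz, hs⟩

/-- The integrand `e^{-iu} u (z² + u²)^s` left by one integration by parts in Basset's integral. -/
noncomputable def bassetKernel (s z : ℂ) (u : ℝ) : ℂ :=
  exp (-I * u) * (u * (z ^ 2 + (u : ℂ) ^ 2) ^ s)

lemma norm_exp_neg_I_mul_ofReal (u : ℝ) : ‖exp (-I * u)‖ = 1 := by
  simpa [mul_comm] using norm_exp_ofReal_mul_I (-u)

lemma continuous_bassetKernel (s : ℂ) {z : ℂ} (hz : 0 < z.re) : Continuous (bassetKernel s z) := by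
  have h := continuous_sq_add_sq_cpow s hz
  unfold bassetKernel
  fun_prop

lemma exists_norm_bassetKernel_le {K S : Set ℂ} (hK : IsCompact K) (hre : ∀ z ∈ K, 0 < z.re)
    (hS : IsCompact S) {q : ℝ} (hq : ∀ s ∈ S, s.re ≤ q) :
    ∃ C, ∀ z ∈ K, ∀ s ∈ S, ∀ u, ‖bassetKernel s z u‖ ≤ C * (1 + ‖u‖ ^ 2) ^ (-(-2 * q - 1) / 2) := by
  obtain ⟨C, hC⟩ := exists_norm_sq_add_sq_cpow_le hK hre hS
  refine ⟨C, fun z hz s hs u ↦ ?_⟩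
  have hC₀ : 0 ≤ C := by simpa using (norm_nonneg _).trans (hC z hz s hs 0)
  have hu : |u| ≤ (1 + u ^ 2) ^ (1 / 2 : ℝ) := by
    rw [← Real.sqrt_eq_rpow]
    exact Real.abs_le_sqrt (by linarith)
  calc ‖bassetKernel s z u‖ = |u| * ‖(z ^ 2 + (u : ℂ) ^ 2) ^ s‖ := by
        rw [bassetKernel, norm_mul, norm_mul, norm_exp_neg_I_mul_ofReal, one_mul, norm_real,
          Real.norm_eq_abs]
    _ ≤ (1 + u ^ 2) ^ (1 / 2 : ℝ) * (C * (1 + u ^ 2) ^ q) := by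
        gcongr
        refine (hC z hz s hs u).trans ?_
        gcongr
        exacts [le_add_of_nonneg_right (sq_nonneg u), hq s hs]
    _ = C * (1 + ‖u‖ ^ 2) ^ (-(-2 * q - 1) / 2) := by
        rw [mul_left_comm, ← Real.rpow_add (by positivity), Real.norm_eq_abs, sq_abs]
        ring_nf

lemma integrable_const_mul_one_add_norm_sq_rpow {q : ℝ} (hq : q < -1) (C : ℝ) :
    Integrable fun u : ℝ ↦ C * (1 + ‖u‖ ^ 2) ^ (-(-2 * q - 1) / 2) :=
  (integrable_rpow_neg_one_add_norm_sq (by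
    rw [Module.finrank_self, Nat.cast_one]
    linarith)).const_mul C

lemma integrable_bassetKernel {s z : ℂ} (hs : s.re < -1) (hz : 0 < z.re) :
    Integrable (bassetKernel s z) := by
  obtain ⟨C, hC⟩ := exists_norm_bassetKernel_le (isCompact_singleton (x := z)) (by simpa)
    (isCompact_singleton (x := s)) (q := s.re) (by simp)
  exact (integrable_const_mul_one_add_norm_sq_rpow hs C).mono'
    (continuous_bassetKernel s hz).aestronglyMeasurable
    (Eventually.of_forall (hC z rfl s rfl))

lemma continuousAt_integral_bassetKernel {s z : ℂ} (hs : s.re < -1) (hz : 0 < z.re) :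
    ContinuousAt (fun s ↦ ∫ u, bassetKernel s z u) s := by
  obtain ⟨q, hsq, hq⟩ := exists_between hs
  have hnhds : {w : ℂ | w.re < q} ∈ 𝓝 s := (isOpen_lt continuous_re continuous_const).mem_nhds hsq
  obtain ⟨S, hSs, hSq, hS⟩ := local_compact_nhds hnhds
  obtain ⟨C, hC⟩ := exists_norm_bassetKernel_le (isCompact_singleton (x := z)) (by simpa) hS
    fun w hw ↦ (hSq hw).le
  refine continuousAt_of_dominated
    (Eventually.of_forall fun w ↦ (continuous_bassetKernel w hz).aestronglyMeasurable)
    (eventually_of_mem hSs fun w hw ↦ Eventually.of_forall (hC z rfl w hw))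
    (integrable_const_mul_one_add_norm_sq_rpow hq C) (Eventually.of_forall fun u ↦ ?_)
  exact continuousAt_const.mul <| continuousAt_const.mul <|
    continuousAt_id.const_cpow <| Or.inl <| slitPlane_ne_zero <| sq_add_sq_mem_slitPlane hz u

lemma hasDerivAt_bassetKernel (s : ℂ) {z : ℂ} (hz : 0 < z.re) (u : ℝ) :
    HasDerivAt (fun w ↦ bassetKernel s w u) (2 * s * z * bassetKernel (s - 1) z u) z := by
  have hbase : HasDerivAt (fun w : ℂ ↦ w ^ 2 + (u : ℂ) ^ 2) (2 * z) z := by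
    simpa using (hasDerivAt_pow 2 z).add_const ((u : ℂ) ^ 2)
  refine (((hbase.cpow_const (c := s) (sq_add_sq_mem_slitPlane hz u)).const_mul
    (u : ℂ)).const_mul (exp (-I * u))).congr_deriv ?_
  rw [bassetKernel]
  ring

lemma differentiableAt_integral_bassetKernel {s z : ℂ} (hs : s.re < -1) (hz : 0 < z.re) :
    DifferentiableAt ℂ (fun z ↦ ∫ u, bassetKernel s z u) z := by
  have hnhds : {w : ℂ | 0 < w.re} ∈ 𝓝 z := (isOpen_lt continuous_const continuous_re).mem_nhds hz
  obtain ⟨K, hKz, hre, hK⟩ := local_compact_nhds hnhds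
  have hs' : (s - 1).re < -1 := by
    rw [sub_re, one_re]
    linarith
  obtain ⟨C, hC⟩ := exists_norm_bassetKernel_le hK hre (isCompact_singleton (x := s - 1))
    (q := (s - 1).re) (by simp)
  obtain ⟨R, hR⟩ := hK.exists_bound_of_continuousOn (f := fun w : ℂ ↦ 2 * s * w) (by fun_prop)
  refine (hasDerivAt_integral_of_dominated_loc_of_deriv_le hKz
    (F' := fun w u ↦ 2 * s * w * bassetKernel (s - 1) w u)
    (eventually_of_mem hnhds fun w hw ↦ (continuous_bassetKernel s hw).aestronglyMeasurable)
    (integrable_bassetKernel hs hz)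
    ((continuous_bassetKernel (s - 1) hz).const_mul _).aestronglyMeasurable
    (Eventually.of_forall fun u w hw ↦ ?_)
    ((integrable_const_mul_one_add_norm_sq_rpow hs' C).const_mul R)
    (Eventually.of_forall fun u w hw ↦ hasDerivAt_bassetKernel s (hre hw) u)).2.differentiableAt
  rw [norm_mul]
  exact mul_le_mul (hR w hw) (hC w hw _ rfl u) (norm_nonneg _) ((norm_nonneg _).trans (hR w hw))

lemma tendsto_intervalIntegral_mul_deriv {A : Type*} [NormedRing A] [NormedAlgebra ℝ A]
    [CompleteSpace A] {u v u' v' : ℝ → A} (hu : ∀ x, HasDerivAt u (u' x) x)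
    (hv : ∀ x, HasDerivAt v (v' x) x)
    (hu' : ∀ a b, IntervalIntegrable u' volume a b) (hv' : ∀ a b, IntervalIntegrable v' volume a b)
    (hint : Integrable fun x ↦ u' x * v x)
    (hlim : Tendsto (fun x ↦ u x * v x) (cocompact ℝ) (𝓝 0)) :
    Tendsto (fun N ↦ ∫ x in (-N)..N, u x * v' x) atTop (𝓝 (-∫ x, u' x * v x)) := by
  have hparts (N : ℝ) : ∫ x in (-N)..N, u x * v' x =
      u N * v N - u (-N) * v (-N) - ∫ x in (-N)..N, u' x * v x :=
    intervalIntegral.integral_mul_deriv_eq_deriv_mul (fun x _ ↦ hu x) (fun x _ ↦ hv x)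
      (hu' _ _) (hv' _ _)
  have htop := hlim.mono_left atTop_le_cocompact
  have hbot := (hlim.mono_left atBot_le_cocompact).comp tendsto_neg_atTop_atBot
  simpa only [hparts, sub_zero, zero_sub, Function.comp_def, id_eq] using
    (htop.sub hbot).sub (intervalIntegral_tendsto_integral hint tendsto_neg_atTop_atBot tendsto_id)

lemma tendsto_sq_add_sq_cpow_cocompact {s z : ℂ} (hs : s.re < 0) (hz : 0 < z.re) :
    Tendsto (fun u : ℝ ↦ (z ^ 2 + (u : ℂ) ^ 2) ^ s) (cocompact ℝ) (𝓝 0) := by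
  obtain ⟨C, hC⟩ := exists_norm_sq_add_sq_cpow_le (isCompact_singleton (x := z)) (by simpa)
    (isCompact_singleton (x := s))
  have hsq : Tendsto (fun u : ℝ ↦ 1 + u ^ 2) (cocompact ℝ) atTop := by
    refine tendsto_atTop_add_const_left _ _ ?_
    simpa only [Function.comp_def, Real.norm_eq_abs, sq_abs] using
      (tendsto_pow_atTop two_ne_zero).comp (tendsto_norm_cocompact_atTop (E := ℝ))
  have hbound : Tendsto (fun u : ℝ ↦ C * (1 + u ^ 2) ^ s.re) (cocompact ℝ) (𝓝 0) := by
    simpa only [Function.comp_def, neg_neg, mul_zero] using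
      ((tendsto_rpow_neg_atTop (neg_pos.2 hs)).comp hsq).const_mul C
  exact squeeze_zero_norm (hC z rfl s rfl) hbound

lemma re_add_half_pos {ν : ℂ} (hν : -1 / 2 < ν.re) : 0 < (ν + 1 / 2).re := by
  rw [add_re, div_ofNat_re, one_re]
  linarith

lemma re_neg_sub_three_halves_lt {ν : ℂ} (hν : -1 / 2 < ν.re) : (-ν - 3 / 2).re < -1 := by
  rw [sub_re, neg_re, div_ofNat_re, re_ofNat]
  linarith

/-- The value of the improper integral `∫ e^{-iu} (z² + u²)^{-ν-1/2} du`, written as the absolutely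
convergent integral that one integration by parts turns it into. -/
noncomputable def bassetIntegral (ν z : ℂ) : ℂ :=
  I * (2 * ν + 1) * ∫ u, bassetKernel (-ν - 3 / 2) z u

lemma tendsto_bassetIntegral {ν z : ℂ} (hν : -1 / 2 < ν.re) (hz : 0 < z.re) :
    Tendsto (fun N : ℝ ↦ ∫ u in (-N)..N, exp (-I * (u : ℂ)) * (z ^ 2 + (u : ℂ) ^ 2) ^ (-ν - 1 / 2))
      atTop (𝓝 (bassetIntegral ν z)) := by
  have hsub : -ν - 1 / 2 - 1 = -ν - 3 / 2 := by ring
  have hexp (u : ℝ) : HasDerivAt (fun u : ℝ ↦ I * exp (-I * u)) (exp (-I * u)) u := by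
    refine (((hasDerivAt_id (u : ℂ)).const_mul (-I)).cexp.const_mul I).comp_ofReal.congr_deriv ?_
    rw [id_eq]
    linear_combination -exp (-I * u) * I_sq
  have hbound : Tendsto (fun u : ℝ ↦ (z ^ 2 + (u : ℂ) ^ 2) ^ (-ν - 1 / 2) * (I * exp (-I * u)))
      (cocompact ℝ) (𝓝 0) := by
    have hre : (-ν - 1 / 2).re < 0 := by
      simpa only [← neg_add', neg_re, neg_neg_iff_pos] using re_add_half_pos hν
    have h := tendsto_sq_add_sq_cpow_cocompact hre hz
    rw [tendsto_zero_iff_norm_tendsto_zero] at h ⊢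
    simpa only [norm_mul, norm_I, norm_exp_neg_I_mul_ofReal, mul_one] using h
  have hkernel (u : ℝ) : (-ν - 1 / 2) * (z ^ 2 + (u : ℂ) ^ 2) ^ (-ν - 3 / 2) * (2 * u) *
      (I * exp (-I * u)) = -(I * (2 * ν + 1) * bassetKernel (-ν - 3 / 2) z u) := by
    rw [bassetKernel]
    ring
  have hcont := continuous_sq_add_sq_cpow (-ν - 3 / 2) hz
  have hint : Integrable (bassetKernel (-ν - 3 / 2) z) :=
    integrable_bassetKernel (re_neg_sub_three_halves_lt hν) hz
  have h := tendsto_intervalIntegral_mul_deriv (hasDerivAt_sq_add_sq_cpow (-ν - 1 / 2) hz) hexp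
    (fun _ _ ↦ Continuous.intervalIntegrable (by rw [hsub]; fun_prop) _ _)
    (fun _ _ ↦ Continuous.intervalIntegrable (by fun_prop) _ _)
    (by simpa only [hsub, hkernel, Pi.neg_def] using (hint.const_mul _).neg) hbound
  simp only [hsub, hkernel, integral_neg, integral_const_mul, neg_neg] at h
  simpa only [mul_comm (exp _), bassetIntegral] using h

/-! ### Evaluation on the positive real axis -/

lemma integral_abs_mul_exp_neg_mul_sq {b : ℝ} (hb : 0 < b) :
    ∫ u : ℝ, |u| * Real.exp (-b * u ^ 2) = b⁻¹ := by
  have hhalf : ∫ u in Ioi (0 : ℝ), u * Real.exp (-b * u ^ 2) = (2 * b)⁻¹ := by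
    have h := integral_mul_cexp_neg_mul_sq (b := (b : ℂ)) (by simpa using hb)
    rw [← ofReal_inj, ← integral_complex_ofReal]
    exact_mod_cast h
  calc ∫ u : ℝ, |u| * Real.exp (-b * u ^ 2) = ∫ u : ℝ, |u| * Real.exp (-b * |u| ^ 2) := by
        simp only [sq_abs]
    _ = 2 * (2 * b)⁻¹ := by
        rw [integral_comp_abs (f := fun u ↦ u * Real.exp (-b * u ^ 2)), hhalf]
    _ = b⁻¹ := by rw [mul_inv, mul_inv_cancel_left₀ two_ne_zero]

lemma integral_exp_I_mul_mul_gaussian {b : ℂ} (hb : 0 < b.re) (t : ℝ) :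
    ∫ u : ℝ, exp (I * t * u) * (u * exp (-b * (u : ℂ) ^ 2)) =
      I * t / (2 * b) * ((π / b) ^ (1 / 2 : ℂ) * exp (-(t : ℂ) ^ 2 / (4 * b))) := by
  have hb' : b ≠ 0 := ne_zero_of_re_pos hb
  have hbdd {f : ℝ → ℂ} (hf : Integrable f) : Integrable fun u : ℝ ↦ exp (I * t * u) * f u :=
    hf.bdd_mul (c := 1) (by fun_prop) <| Eventually.of_forall fun u ↦ by
      rw [mul_assoc, mul_comm, ← ofReal_mul, norm_exp_ofReal_mul_I]
  have hexp (u : ℝ) : HasDerivAt (fun u : ℝ ↦ exp (I * t * u)) (I * t * exp (I * t * u)) u := by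
    refine ((hasDerivAt_id (u : ℂ)).const_mul (I * t)).cexp.comp_ofReal.congr_deriv ?_
    simp only [id_eq, mul_one, mul_comm]
  have hgauss (u : ℝ) : HasDerivAt (fun u : ℝ ↦ exp (-b * (u : ℂ) ^ 2))
      (-(2 * b) * (u * exp (-b * (u : ℂ) ^ 2))) u := by
    refine ((hasDerivAt_pow 2 (u : ℂ)).const_mul (-b)).cexp.comp_ofReal.congr_deriv ?_
    push_cast
    ring
  have hi₀ := hbdd (integrable_cexp_neg_mul_sq hb)
  have h := integral_mul_deriv_eq_deriv_mul_of_integrable (fun u _ ↦ hexp u) (fun u _ ↦ hgauss u)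
    (hbdd ((integrable_mul_cexp_neg_mul_sq hb).const_mul _))
    (by simpa only [Pi.mul_def, mul_assoc] using hi₀.const_mul (I * t)) hi₀
  simp only [mul_assoc (I * (t : ℂ)), mul_left_comm _ (-(2 * b)), integral_const_mul] at h
  rw [← fourierIntegral_gaussian hb, div_mul_eq_mul_div,
    eq_div_iff (mul_ne_zero two_ne_zero hb')]
  linear_combination -h

/-- The integrand of `Γ(a) e^{-iu} u (r² + u²)^{-a}`, written as an integral over `s > 0`. -/
noncomputable def bassetGammaKernel (a : ℂ) (r u s : ℝ) : ℂ :=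
  exp (-I * u) * (u * ((s : ℂ) ^ (a - 1) * exp (-(((r ^ 2 + u ^ 2 : ℝ) : ℂ) * s))))

section BassetGammaKernel

variable {a : ℂ} {r s : ℝ}

lemma integral_bassetGammaKernel (ha : 0 < a.re) (hr : 0 < r) (u : ℝ) :
    ∫ s in Ioi 0, bassetGammaKernel a r u s = Gamma a * bassetKernel (-a) r u := by
  have hp : 0 < r ^ 2 + u ^ 2 := by positivity
  have hinv : (1 / ((r ^ 2 + u ^ 2 : ℝ) : ℂ)) ^ a = ((r ^ 2 + u ^ 2 : ℝ) : ℂ) ^ (-a) := by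
    rw [one_div, inv_cpow _ _ (by rw [arg_ofReal_of_nonneg hp.le]; exact Real.pi_ne_zero.symm),
      cpow_neg]
  simp only [bassetGammaKernel, bassetKernel]
  rw [integral_const_mul, integral_const_mul, integral_cpow_mul_exp_neg_mul_Ioi ha hp, hinv]
  push_cast
  ring

lemma norm_bassetGammaKernel (a : ℂ) (r u : ℝ) (hs : 0 < s) : ‖bassetGammaKernel a r u s‖ =
    s ^ (a.re - 1) * Real.exp (-(r ^ 2) * s) * (|u| * Real.exp (-s * u ^ 2)) := by
  rw [bassetGammaKernel, norm_mul, norm_mul, norm_mul, norm_exp_neg_I_mul_ofReal, norm_real,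
    norm_cpow_eq_rpow_re_of_pos hs, ← ofReal_mul, ← ofReal_neg, ← ofReal_exp, norm_real,
    Real.norm_of_nonneg (Real.exp_pos _).le, sub_re, one_re, Real.norm_eq_abs,
    show -((r ^ 2 + u ^ 2) * s) = -(r ^ 2) * s + -s * u ^ 2 by ring, Real.exp_add]
  ring

/-- Integrating `|u| e^{-su²}` gains a factor `1 / s`, so that the norm integrates to a multiple of
`Γ(Re a - 1)`. -/
lemma integrable_bassetGammaKernel (ha : 1 < a.re) (hr : 0 < r) :
    Integrable (Function.uncurry (bassetGammaKernel a r))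
      (volume.prod (volume.restrict (Ioi 0))) := by
  have hmeas : Measurable (Function.uncurry (bassetGammaKernel a r)) := by
    unfold bassetGammaKernel Function.uncurry
    fun_prop
  refine (integrable_prod_iff' hmeas.aestronglyMeasurable).2 ⟨?_, ?_⟩
  · filter_upwards [ae_restrict_mem measurableSet_Ioi] with s hs
    have hi := (integrable_mul_exp_neg_mul_sq hs).norm.const_mul
      (s ^ (a.re - 1) * Real.exp (-(r ^ 2) * s))
    refine hi.mono' (hmeas.comp (by fun_prop)).aestronglyMeasurable
      (Eventually.of_forall fun u ↦ ?_)
    rw [Function.uncurry_apply_pair, norm_bassetGammaKernel _ _ _ hs, norm_mul, Real.norm_eq_abs,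
      Real.norm_of_nonneg (Real.exp_pos _).le]
  · have hi := integrableOn_rpow_mul_exp_neg_mul_rpow (p := 1) (s := a.re - 2) (b := r ^ 2)
      (by linarith) one_pos (by positivity)
    refine IntegrableOn.congr_fun hi (fun s hs ↦ ?_) measurableSet_Ioi
    rw [mem_Ioi] at hs
    simp only [Function.uncurry_apply_pair, norm_bassetGammaKernel _ _ _ hs]
    rw [integral_const_mul, integral_abs_mul_exp_neg_mul_sq hs, Real.rpow_one,
      show a.re - 1 = a.re - 2 + 1 by ring, Real.rpow_add_one hs.ne']
    field_simp

lemma ofReal_div_cpow_half (hr : 0 ≤ r) (hs : 0 < s) :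
    ((r : ℂ) / s) ^ (1 / 2 : ℂ) = √r * (s : ℂ) ^ (-(1 / 2) : ℂ) := by
  rw [div_eq_mul_inv, ← ofReal_inv, mul_cpow_ofReal_nonneg hr (inv_nonneg.2 hs.le), ofReal_inv,
    inv_cpow _ _ (by rw [arg_ofReal_of_nonneg hs.le]; exact Real.pi_ne_zero.symm), cpow_neg,
    Real.sqrt_eq_rpow, ofReal_cpow hr]
  norm_num

lemma integral_bassetGammaKernel_left (a : ℂ) (r : ℝ) (hs : 0 < s) :
    ∫ u, bassetGammaKernel a r u s =
      -(I * √π / 2) * ((s : ℂ) ^ (a - 3 / 2 - 1) * besselCliffordKernel (r ^ 2 / 4) (4 * s)⁻¹) := by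
  have hs' : (s : ℂ) ≠ 0 := ofReal_ne_zero.2 hs.ne'
  have hsplit (u : ℝ) : bassetGammaKernel a r u s = (s : ℂ) ^ (a - 1) * exp (-(r ^ 2 * s)) *
      (exp (I * (-1 : ℝ) * u) * (u * exp (-s * (u : ℂ) ^ 2))) := by
    rw [bassetGammaKernel]
    push_cast
    rw [show -(((r : ℂ) ^ 2 + (u : ℂ) ^ 2) * s) = -(r ^ 2 * s) + -s * (u : ℂ) ^ 2 by ring, exp_add,
      mul_neg_one]
    ring
  have hexp : besselCliffordKernel (r ^ 2 / 4) (4 * s)⁻¹ =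
      exp (-(r ^ 2 * s)) * exp (-((-1 : ℝ) : ℂ) ^ 2 / (4 * s)) := by
    rw [besselCliffordKernel, ← exp_add]
    push_cast
    field_simp
    ring_nf
  have hpow : (s : ℂ) ^ (a - 3 / 2 - 1) =
      (s : ℂ) ^ (a - 1) * (s : ℂ) ^ (-(1 / 2) : ℂ) * (s : ℂ)⁻¹ := by
    rw [← cpow_neg_one, ← cpow_add _ _ hs', ← cpow_add _ _ hs']
    ring_nf
  simp only [hsplit]
  rw [integral_const_mul, integral_exp_I_mul_mul_gaussian (by simpa using hs),
    ofReal_div_cpow_half Real.pi_pos.le hs, hexp, hpow]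
  push_cast
  field_simp

end BassetGammaKernel

/-- Write `Γ(a) (r² + u²)^{-a}` as a Gamma integral and integrate over `u` first. -/
lemma Gamma_mul_integral_bassetKernel {a : ℂ} (ha : 1 < a.re) {r : ℝ} (hr : 0 < r) :
    Gamma a * ∫ u, bassetKernel (-a) r u = -(I * √π / 2) *
      mellin (fun s ↦ besselCliffordKernel (r ^ 2 / 4) (4 * s)⁻¹) (a - 3 / 2) := by
  calc Gamma a * ∫ u, bassetKernel (-a) r u
      = ∫ u, ∫ s in Ioi 0, bassetGammaKernel a r u s := by
        simp only [integral_bassetGammaKernel (one_pos.trans ha) hr, integral_const_mul]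
    _ = ∫ s in Ioi 0, ∫ u, bassetGammaKernel a r u s :=
        integral_integral_swap (integrable_bassetGammaKernel ha hr)
    _ = _ := by
        rw [mellin, ← integral_const_mul]
        exact setIntegral_congr_fun measurableSet_Ioi fun s hs ↦
          integral_bassetGammaKernel_left a r hs

lemma mellin_besselCliffordKernel_inv (ν : ℂ) (x : ℝ) :
    mellin (fun s ↦ besselCliffordKernel x (4 * s)⁻¹) ν = 4 ^ (-ν) * besselCliffordK ν x := by
  rw [mellin_comp_mul_left (fun t ↦ besselCliffordKernel x t⁻¹) ν four_pos, mellin_comp_inv,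
    smul_eq_mul, besselCliffordK, ofReal_ofNat]

/-- The right-hand side of Basset's formula. -/
noncomputable def bassetFormula (ν z : ℂ) : ℂ :=
  (2 * z) ^ ν * Gamma (ν + 1 / 2) / (2 * √π) * bassetIntegral ν z

lemma bassetFormula_ofReal {ν : ℂ} (hν : -1 / 2 < ν.re) {r : ℝ} (hr : 0 < r) :
    bassetFormula ν r = (r / 2 : ℂ) ^ ν * besselCliffordK ν (r ^ 2 / 4) / 2 := by
  have hν₀ : ν + 1 / 2 ≠ 0 := ne_zero_of_re_pos (re_add_half_pos hν)
  have ha : 1 < (ν + 3 / 2).re := by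
    rw [add_re, div_ofNat_re, re_ofNat]
    linarith
  have hΓ := Gamma_mul_integral_bassetKernel ha hr
  rw [show -(ν + 3 / 2) = -ν - 3 / 2 by ring, add_sub_cancel_right,
    mellin_besselCliffordKernel_inv, show ν + 3 / 2 = ν + 1 / 2 + 1 by ring,
    Gamma_add_one _ hν₀] at hΓ
  have hpow : (2 * (r : ℂ)) ^ ν * 4 ^ (-ν) = (r / 2 : ℂ) ^ ν := by
    have hr₂ : (r / 2 : ℂ) ≠ 0 := by simpa using hr.ne'
    have h := ofReal_mul_cpow four_pos hr₂ ν
    rw [show ((4 : ℝ) : ℂ) * (r / 2) = 2 * r by push_cast; ring, ofReal_ofNat] at h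
    rw [h, mul_right_comm, ← cpow_add _ _ (by norm_num), add_neg_cancel, cpow_zero, one_mul]
  have hπ : (√π : ℂ) ≠ 0 := ofReal_ne_zero.2 (Real.sqrt_pos.2 Real.pi_pos).ne'
  calc bassetFormula ν r = (2 * r : ℂ) ^ ν * I / √π *
        ((ν + 1 / 2) * Gamma (ν + 1 / 2) * ∫ u, bassetKernel (-ν - 3 / 2) r u) := by
        rw [bassetFormula, bassetIntegral]
        ring
    _ = -I ^ 2 * ((2 * r : ℂ) ^ ν * 4 ^ (-ν)) * besselCliffordK ν (r ^ 2 / 4) / 2 := by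
        rw [hΓ]
        field_simp
    _ = (r / 2 : ℂ) ^ ν * besselCliffordK ν (r ^ 2 / 4) / 2 := by
        rw [hpow, I_sq, neg_neg, one_mul]

/-! ### Basset's formula -/

section NonIntegerOrder

variable {ν : ℂ}

lemma sin_mul_pi_ne_zero (hν : ν ∈ integerComplement) : sin (ν * π) ≠ 0 :=
  sin_ne_zero_iff.2 fun k hk ↦
    hν ⟨k, (mul_right_cancel₀ (ofReal_ne_zero.2 Real.pi_ne_zero) hk).symm⟩

lemma besselK_of_mem_integerComplement (hν : ν ∈ integerComplement) (z : ℂ) :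
    besselK ν z = π / (2 * sin (ν * π)) * (besselI (-ν) z - besselI ν z) :=
  if_neg fun ⟨n, hn⟩ ↦ hν ⟨n, hn.symm⟩

lemma besselK_ofReal (hν : ν ∈ integerComplement) {r : ℝ} (hr : 0 < r) :
    besselK ν r = (r / 2 : ℂ) ^ ν * besselCliffordK ν (r ^ 2 / 4) / 2 := by
  have hr' : (r : ℂ) ≠ 0 := ofReal_ne_zero.2 hr.ne'
  have hr₂ : (r / 2 : ℂ) ≠ 0 := div_ne_zero hr' two_ne_zero
  have hpow : ((r ^ 2 / 4 : ℝ) : ℂ) ^ (-ν) = (r / 2 : ℂ) ^ (-ν) * (r / 2 : ℂ) ^ (-ν) := by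
    rw [show ((r ^ 2 / 4 : ℝ) : ℂ) = (r / 2 : ℝ) * (r / 2 : ℂ) by push_cast; ring,
      ofReal_mul_cpow (half_pos hr) hr₂]
    push_cast
    rfl
  have hinv : (r / 2 : ℂ) ^ ν * (r / 2 : ℂ) ^ (-ν) = 1 := by
    rw [← cpow_add _ _ hr₂, add_neg_cancel, cpow_zero]
  have hsin := sin_mul_pi_ne_zero hν
  have h := sin_mul_besselCliffordK ν (x := r ^ 2 / 4) (by positivity)
  rw [hpow] at h
  push_cast at h
  rw [besselK_of_mem_integerComplement hν, besselI_eq_cpow_mul_besselClifford _ hr',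
    besselI_eq_cpow_mul_besselClifford _ hr', div_mul_eq_mul_div,
    div_eq_div_iff (mul_ne_zero two_ne_zero hsin) two_ne_zero]
  linear_combination -2 * (r / 2 : ℂ) ^ ν * h -
    2 * π * (r / 2 : ℂ) ^ (-ν) * besselClifford (-ν) (r ^ 2 / 4) * hinv

end NonIntegerOrder

lemma differentiableAt_besselI (ν : ℂ) {z : ℂ} (hz : 0 < z.re) :
    DifferentiableAt ℂ (besselI ν) z := by
  have hz₀ : z ≠ 0 := ne_zero_of_re_pos hz
  have hpow : DifferentiableAt ℂ (fun w : ℂ ↦ (w / 2) ^ ν) z :=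
    (differentiableAt_id.div_const 2).cpow_const (Or.inl (by simpa using hz))
  have hC : DifferentiableAt ℂ (fun w ↦ besselClifford ν (w ^ 2 / 4)) z :=
    (hasDerivAt_besselClifford ν (z ^ 2 / 4)).differentiableAt.comp z
      (f := fun w ↦ w ^ 2 / 4) (by fun_prop)
  refine (hpow.mul hC).congr_of_eventuallyEq ?_
  filter_upwards [isOpen_ne.mem_nhds hz₀] with w hw
    using besselI_eq_cpow_mul_besselClifford ν hw

lemma differentiableAt_bassetFormula {ν z : ℂ} (hν : -1 / 2 < ν.re) (hz : 0 < z.re) :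
    DifferentiableAt ℂ (bassetFormula ν) z := by
  have hpow : DifferentiableAt ℂ (fun w : ℂ ↦ (2 * w) ^ ν) z :=
    (differentiableAt_id.const_mul 2).cpow_const (Or.inl (by simpa using hz))
  have hint := differentiableAt_integral_bassetKernel (re_neg_sub_three_halves_lt hν) hz
  exact ((hpow.mul_const _).div_const _).mul (hint.const_mul _)

lemma continuousAt_bassetFormula {ν z : ℂ} (hν : -1 / 2 < ν.re) (hz : 0 < z.re) :
    ContinuousAt (fun μ ↦ bassetFormula μ z) ν := by
  have hz₀ : 2 * z ≠ 0 := mul_ne_zero two_ne_zero (ne_zero_of_re_pos hz)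
  have hΓ : ContinuousAt (fun μ : ℂ ↦ Gamma (μ + 1 / 2)) ν := by
    refine (differentiableAt_Gamma _ fun m h ↦ ?_).continuousAt.comp (f := fun μ ↦ μ + 1 / 2)
      (by fun_prop)
    have hre := re_add_half_pos hν
    rw [h, neg_re, natCast_re, neg_pos] at hre
    exact hre.not_ge m.cast_nonneg
  have hint : ContinuousAt (fun μ ↦ ∫ u, bassetKernel (-μ - 3 / 2) z u) ν :=
    (continuousAt_integral_bassetKernel (re_neg_sub_three_halves_lt hν) hz).comp
      (f := fun μ ↦ -μ - 3 / 2) (by fun_prop)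
  unfold bassetFormula bassetIntegral
  exact (((continuousAt_id.const_cpow (Or.inl hz₀)).mul hΓ).div_const _).mul
    (ContinuousAt.mul (by fun_prop) hint)

lemma eqOn_re_pos_of_eq_ofReal {E : Type*} [NormedAddCommGroup E] [NormedSpace ℂ E]
    [CompleteSpace E] {f g : ℂ → E} (hf : DifferentiableOn ℂ f {z | 0 < z.re})
    (hg : DifferentiableOn ℂ g {z | 0 < z.re}) (hfg : ∀ r : ℝ, 0 < r → f r = g r) :
    EqOn f g {z | 0 < z.re} := by
  have hopen : IsOpen {z : ℂ | 0 < z.re} := isOpen_lt continuous_const continuous_re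
  have hone : Tendsto ((↑) : ℝ → ℂ) (𝓝[≠] 1) (𝓝[≠] 1) := by
    simpa using (hasDerivAt_id (1 : ℝ)).ofReal_comp.tendsto_nhdsNE (by simp)
  have hfreq : ∀ᶠ r : ℝ in 𝓝[≠] 1, f r = g r := by
    filter_upwards [nhdsWithin_le_nhds (Ioi_mem_nhds one_pos)] with r hr using hfg r hr
  exact (hf.analyticOnNhd hopen).eqOn_of_preconnected_of_frequently_eq (hg.analyticOnNhd hopen)
    (convex_halfSpace_re_gt 0).isPreconnected (by simp) (hone.frequently hfreq.frequently)

lemma besselK_eq_bassetFormula_of_mem_integerComplement {ν z : ℂ} (hν : -1 / 2 < ν.re)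
    (hz : 0 < z.re) (hn : ν ∈ integerComplement) : besselK ν z = bassetFormula ν z := by
  refine eqOn_re_pos_of_eq_ofReal (fun w hw ↦ DifferentiableAt.differentiableWithinAt ?_)
    (fun w hw ↦ (differentiableAt_bassetFormula hν hw).differentiableWithinAt) (fun r hr ↦ ?_) hz
  · have hI (μ : ℂ) := differentiableAt_besselI μ hw
    rw [funext (besselK_of_mem_integerComplement hn)]
    exact ((hI (-ν)).sub (hI ν)).const_mul _
  · rw [besselK_ofReal hn hr, bassetFormula_ofReal hν hr]

lemma eventually_mem_integerComplement (ν : ℂ) : ∀ᶠ μ in 𝓝[≠] ν, μ ∈ integerComplement := by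
  have hclosed : IsClosed (((↑) : ℤ → ℂ) '' {n | (n : ℂ) ≠ ν}) :=
    Complex.isClosedEmbedding_intCast.isClosedMap _ (isClosed_discrete _)
  filter_upwards [nhdsWithin_le_nhds (hclosed.isOpen_compl.mem_nhds (x := ν) (by simp)),
    self_mem_nhdsWithin] with μ hμ hne
  rintro ⟨n, rfl⟩
  exact hμ ⟨n, hne, rfl⟩

lemma besselK_eq_of_continuousAt {ν z : ℂ} {f : ℂ → ℂ} (hf : ContinuousAt f ν)
    (hK : ∀ᶠ μ in 𝓝 ν, μ ∈ integerComplement → besselK μ z = f μ) : besselK ν z = f ν := by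
  by_cases hν : ν ∈ integerComplement
  · exact hK.self_of_nhds hν
  · obtain ⟨n, hn⟩ := not_not.1 hν
    rw [besselK, if_pos ⟨n, hn.symm⟩]
    refine Tendsto.limUnder_eq ((hf.tendsto.mono_left nhdsWithin_le_nhds).congr' ?_)
    filter_upwards [nhdsWithin_le_nhds hK, eventually_mem_integerComplement ν] with μ hμ hint
    rw [← hμ hint, besselK_of_mem_integerComplement hint]

/-- **Basset's integral formula.** For `Re ν > -1/2` and `Re z > 0`, the two-sided improper
Riemann integral `∫_{-∞}^∞ e^{-iu} (z² + u²)^{-ν-1/2} du` converges (as the limit of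
`∫_{-N}^N` as `N → ∞`) to a value `L` with
`K_ν(z) = ((2z)^ν Γ(ν+1/2) / (2√π)) · L`. -/
theorem besselK_basset (ν z : ℂ) (hν : -1/2 < ν.re) (hz : 0 < z.re) :
    ∃ L : ℂ,
      Tendsto (fun N : ℝ => ∫ u in (-N)..N,
          Complex.exp (-Complex.I * (u : ℂ)) * (z ^ 2 + (u : ℂ) ^ 2) ^ (-ν - 1/2))
        atTop (nhds L) ∧
      besselK ν z = ((2 * z) ^ ν * Complex.Gamma (ν + 1/2) / (2 * (Real.sqrt Real.pi : ℂ))) * L := by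
  refine ⟨bassetIntegral ν z, tendsto_bassetIntegral hν hz,
    besselK_eq_of_continuousAt (continuousAt_bassetFormula hν hz) ?_⟩
  filter_upwards [continuous_re.continuousAt.eventually (Ioi_mem_nhds hν)] with μ hμ hμ'
    using besselK_eq_bassetFormula_of_mem_integerComplement hμ hz hμ'
end
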